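/- arXiv:0910.5850 — 3 statements merged into one kernel-verified Lean document; each statement's English description precedes it below -/
import Mathlib

section
/- Let Ω ⊆ ℝⁿ be an open domain, let M be an N-function satisfying condition (M) and such that M(λ)/λ² is nondecreasing, and let μ satisfy condition (μ). Assume that there are constants K₁, K₂ > 0 such that for every u ∈ C₀^∞(Ω): ∫_Ω M(|∇φ|·|u|) dμ ≤ K₁·∫_Ω M(|∇u|) dμ + K₂·∫_Ω M(|u|) dμ. Then there exist constants C̃₁, C̃₂ > 0 such that for every u ∈ C₀^∞(Ω): ‖∇u‖_{L^M(Ω,μ)} ≤ C̃₁·√( ‖∇⁽²⁾u‖_{L^M(Ω,μ)} · ‖u‖_{L^M(Ω,μ)} ) + C̃₂·‖u‖_{L^M(Ω,μ)}. -/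
/-!
Write `Φ(λ) = M(λ)/λ²`, which is nondecreasing, and `F(ξ) = Φ(|ξ|) ξ` (`field`), so that
`M(|∇u|) = ∇u · F(∇u)`.

Integrating by parts against the weight gives
`∫ M(|∇u|) e^{-φ} dx = -∫ u div(F(∇u) e^{-φ}) dx`. The field `F(∇u) e^{-φ}` is only Lipschitz, but
globally so: convexity and the Δ₂-condition bound the difference quotients of `F` (`field_lip`), and
the support of `∇u` is a compact subset of `Ω` (`lipschitz_mul_weight`). Hence
`LipschitzWith.integral_lineDeriv_mul_eq` applies. The divergence is controlled pointwise, up to a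
constant, by `Φ(|∇u|) (|∇²u| + |∇u| |∇φ|) e^{-φ}` (`lineDeriv_comp_le`).

The Young-type inequality
`Φ(s) v w ≤ δ M(s) + δ M(θ v) + δ M(w / (θ δ))` (`young_ineq`) with `s = |∇u|`, `w = |u|` turns this
into a bound by `δ M(|∇u|)`, which is absorbed for small `δ`, and by modulars of `θ |∇²u|`,
`|u| / (θ δ)` and `θ |∇φ| |∇u|`. The last one is estimated by the Hardy-type inequality applied to
multiples of the partial derivatives `∂ᵢu`; by convexity its zero-order part carries a factor `θ`,
so it is absorbed for small `θ`. The outcome (`modular_ineq`) is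
`∫ M(|∇u|) dμ ≤ ½ ∫ M(D θ |∇²u|) dμ + ½ ∫ M(D |u| / θ) dμ` for all `0 < θ ≤ θ₀`.

If `a`, `b` are admissible in the definitions of the Luxemburg norms of `∇²u` and `u`, applying this
to `u / k` with `θ = min(θ₀, √(b/a))` (`exists_scale`) and `k = D max(θ a, b / θ)` makes the
right-hand side at most `1`, whence `‖∇u‖ ≤ k ≤ D √(a b) + (D / θ₀) b`. Letting `a`, `b` decrease to
the norms, which may vanish, gives the claim.
-/

open MeasureTheory Filter Set

noncomputable section

/-- `E n` is the Euclidean space `ℝⁿ`. -/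
abbrev E (n : ℕ) := EuclideanSpace ℝ (Fin n)

/-- An `N`-function: a continuous convex function `M : [0,∞) → [0,∞)` with `M(0) = 0`,
`lim_{λ→0} M(λ)/λ = 0` and `lim_{λ→∞} λ/M(λ) = 0`. -/
def IsNFunction (M : ℝ → ℝ) : Prop :=
  ContinuousOn M (Ici 0) ∧ ConvexOn ℝ (Ici 0) M ∧ M 0 = 0 ∧
  (∀ x ≥ (0:ℝ), 0 ≤ M x) ∧
  Tendsto (fun l => M l / l) (nhdsWithin 0 (Ioi 0)) (nhds 0) ∧
  Tendsto (fun l => l / M l) atTop (nhds 0)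

/-- The Δ₂-condition. -/
def Delta2 (M : ℝ → ℝ) : Prop := ∃ c > 0, ∀ l > (0:ℝ), M (2 * l) ≤ c * M l

/-- Condition (M): `M` is an `N`-function of class `C¹` on `(0,∞)` satisfying the
Δ₂-condition and such that `M'(λ)/λ` is bounded near zero. -/
def CondM (M : ℝ → ℝ) : Prop :=
  IsNFunction M ∧ ContDiffOn ℝ 1 M (Ioi 0) ∧ Delta2 M ∧
  ∃ ε > (0:ℝ), ∃ C : ℝ, ∀ l ∈ Ioo (0:ℝ) ε, deriv M l / l ≤ C

/-- Condition (Y): `P, Q` are nonnegative nondecreasing measurable functions vanishing at `0`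
such that the Young-type inequality `(M(u)/u²)·v·w ≤ M(u) + P(v) + Q(w)` holds. -/
def CondY (M P Q : ℝ → ℝ) : Prop :=
  Measurable P ∧ Measurable Q ∧ (∀ x ≥ (0:ℝ), 0 ≤ P x) ∧ (∀ x ≥ (0:ℝ), 0 ≤ Q x) ∧
  MonotoneOn P (Ici 0) ∧ MonotoneOn Q (Ici 0) ∧ P 0 = 0 ∧ Q 0 = 0 ∧
  ∀ u > (0:ℝ), ∀ v > (0:ℝ), ∀ w > (0:ℝ), M u / u ^ 2 * v * w ≤ M u + P v + Q w

/-- `φ` is locally Lipschitz on `Ω`. -/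
def LocLipschitzOn {α : Type*} [MetricSpace α] (Ω : Set α) (φ : α → ℝ) : Prop :=
  ∀ x ∈ Ω, ∃ s ∈ nhdsWithin x Ω, ∃ K : NNReal, LipschitzOnWith K φ s

/-- The measure `μ(dx) = e^{-φ(x)} dx` on the domain `Ω`. -/
def measOf {n : ℕ} (Ω : Set (E n)) (φ : E n → ℝ) : Measure (E n) :=
  (volume.restrict Ω).withDensity fun x => ENNReal.ofReal (Real.exp (-φ x))

/-- `u ∈ C₀^∞(Ω)`: smooth and compactly supported inside `Ω`. -/
def TestFun {n : ℕ} (Ω : Set (E n)) (u : E n → ℝ) : Prop :=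
  ContDiff ℝ (⊤ : ℕ∞) u ∧ HasCompactSupport u ∧ tsupport u ⊆ Ω

/-- The Hilbert–Schmidt norm of the Hessian of `u` at `x`. -/
def hessNormHS {n : ℕ} (u : E n → ℝ) (x : E n) : ℝ :=
  Real.sqrt (∑ i : Fin n, ∑ j : Fin n,
    (iteratedFDeriv ℝ 2 u x ![EuclideanSpace.single i (1:ℝ), EuclideanSpace.single j (1:ℝ)]) ^ 2)

/-- The Luxemburg norm `‖f‖_{L^R(μ)} = inf {K > 0 : ∫ R(|f|/K) dμ ≤ 1}`. -/
def luxNorm {α : Type*} [MeasurableSpace α] (R : ℝ → ℝ) (μ : Measure α) (f : α → ℝ) : ℝ :=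
  sInf {K : ℝ | 0 < K ∧ ∫ x, R (|f x| / K) ∂μ ≤ 1}

/-! ### Elementary inequalities for `N`-functions -/

lemma M_smul_le {M : ℝ → ℝ} (hM : IsNFunction M) {t x : ℝ} (ht : 0 ≤ t) (ht1 : t ≤ 1)
    (hx : 0 ≤ x) : M (t * x) ≤ t * M x := by
  have h := hM.2.1.2 (mem_Ici.2 hx) (mem_Ici.2 le_rfl) ht (sub_nonneg.2 ht1) (by ring)
  simpa [hM.2.2.1] using h

lemma le_M_smul {M : ℝ → ℝ} (hM : IsNFunction M) {t x : ℝ} (ht1 : 1 ≤ t)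
    (hx : 0 ≤ x) : t * M x ≤ M (t * x) := by
  have ht : 0 < t := by linarith
  have h := M_smul_le hM (t := t⁻¹) (x := t * x) (by positivity) (inv_le_one_of_one_le₀ ht1)
    (by positivity)
  rw [inv_mul_cancel_left₀ ht.ne', inv_mul_eq_div, le_div_iff₀ ht] at h
  linarith

lemma M_mono {M : ℝ → ℝ} (hM : IsNFunction M) {x y : ℝ} (hx : 0 ≤ x) (hxy : x ≤ y) :
    M x ≤ M y := by
  rcases hx.eq_or_lt with rfl | hx
  · rw [hM.2.2.1]; exact hM.2.2.2.1 _ hxy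
  have hy : 0 < y := by linarith
  have h := M_smul_le hM (t := x / y) (x := y) (by positivity) ((div_le_one hy).2 hxy) hy.le
  rw [div_mul_cancel₀ _ hy.ne'] at h
  exact h.trans (mul_le_of_le_one_left (hM.2.2.2.1 _ hy.le) ((div_le_one hy).2 hxy))

/-- The extension of `M` from `[0,∞)` by `0` to the whole line is continuous. -/
lemma M_ext_continuous {M : ℝ → ℝ} (hM : IsNFunction M) :
    Continuous (fun t => M (max 0 t)) :=
  hM.1.comp_continuous (by fun_prop) (fun t => mem_Ici.2 (le_max_left _ _))

lemma M_comp_continuous {X : Type*} [TopologicalSpace X] {M : ℝ → ℝ} (hM : IsNFunction M)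
    {f : X → ℝ} (hf : Continuous f) (h0 : ∀ x, 0 ≤ f x) : Continuous (fun x => M (f x)) :=
  hM.1.comp_continuous hf h0

/-- The Young-type inequality carrying the argument. Either `v w ≤ δ s²`, or `s` is smaller than
`r = √(vw/δ)` and monotonicity of `M(λ)/λ²` allows `s` to be replaced by `r`; the number `r` is the
geometric mean of `θ v` and `w / (θ δ)`. -/
lemma young_ineq {M : ℝ → ℝ} (hM : IsNFunction M)
    (hmono : MonotoneOn (fun l => M l / l ^ 2) (Ioi 0)) {s v w δ θ : ℝ} (hs : 0 < s)
    (hv : 0 ≤ v) (hw : 0 ≤ w) (hδ : 0 < δ) (hθ : 0 < θ) :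
    M s / s ^ 2 * (v * w) ≤ δ * M s + δ * M (θ * v) + δ * M (w / (θ * δ)) := by
  have h1 : 0 ≤ M s := hM.2.2.2.1 _ hs.le
  have h2 : 0 ≤ M (θ * v) := hM.2.2.2.1 _ (by positivity)
  have h3 : 0 ≤ M (w / (θ * δ)) := hM.2.2.2.1 _ (by positivity)
  by_cases hc : v * w ≤ δ * s ^ 2
  · have : M s / s ^ 2 * (v * w) ≤ M s / s ^ 2 * (δ * s ^ 2) := by gcongr
    have h4 : M s / s ^ 2 * (δ * s ^ 2) = δ * M s := by field_simp
    have := mul_nonneg hδ.le h2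
    have := mul_nonneg hδ.le h3
    linarith
  · push Not at hc
    set r := Real.sqrt (v * w / δ) with hr
    have hr2 : r ^ 2 = v * w / δ := Real.sq_sqrt (by positivity)
    have hsr : s < r := by
      apply Real.lt_sqrt_of_sq_lt
      rw [lt_div_iff₀ hδ]; linarith
    have hr0 : 0 < r := by linarith
    have hm := hmono (mem_Ioi.2 hs) (mem_Ioi.2 hr0) hsr.le
    have h4 : M s / s ^ 2 * (v * w) ≤ M r / r ^ 2 * (v * w) := by
      exact mul_le_mul_of_nonneg_right hm (by positivity)
    have h5 : M r / r ^ 2 * (v * w) = δ * M r := by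
      have : v * w = δ * r ^ 2 := by rw [hr2]; field_simp
      rw [this]; field_simp
    have h6 : M r ≤ M (θ * v) + M (w / (θ * δ)) := by
      have hprod : θ * v * (w / (θ * δ)) = r ^ 2 := by rw [hr2]; field_simp
      rcases le_total r (θ * v) with h | h
      · linarith [M_mono hM hr0.le h]
      · have : r ≤ w / (θ * δ) := by
          by_contra! hcon
          have : θ * v * (w / (θ * δ)) < r * r :=
            mul_lt_mul' h hcon (by positivity) hr0
          nlinarith
        linarith [M_mono hM hr0.le this]
    have := mul_le_mul_of_nonneg_left h6 hδ.le
    have := mul_nonneg hδ.le h1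
    linarith

/-- By convexity the slope of `M` on `[b, a]` is at most its slope on `[a, 2a]`, which the
Δ₂-condition bounds by `c M(a) / a`. -/
lemma M_sub_le {M : ℝ → ℝ} (hM : IsNFunction M) {c : ℝ}
    (hc : ∀ l > (0:ℝ), M (2 * l) ≤ c * M l) {a b : ℝ} (hb : 0 ≤ b) (hab : b ≤ a) (ha : 0 < a) :
    (M a - M b) * a ≤ c * M a * (a - b) := by
  rcases hab.eq_or_lt with rfl | hab
  · simp
  have h := hM.2.1.slope_mono_adjacent (mem_Ici.2 hb) (mem_Ici.2 (by positivity : 0 ≤ 2 * a))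
    hab (by linarith)
  rw [div_le_div_iff₀ (by linarith) (by linarith)] at h
  have h1 := hc a ha
  have h2 := hM.2.2.2.1 a ha.le
  have h3 : (M (2 * a) - M a) * (a - b) ≤ c * M a * (a - b) :=
    mul_le_mul_of_nonneg_right (by linarith) (by linarith)
  nlinarith

/-- The vector field `ξ ↦ M(|ξ|) |ξ|⁻² ξ`. It vanishes at the origin whatever value the
quotient takes there. -/
def field {n : ℕ} (M : ℝ → ℝ) (ξ : E n) : E n := (M ‖ξ‖ / ‖ξ‖ ^ 2) • ξ

lemma field_zero {n : ℕ} (M : ℝ → ℝ) : field M (0 : E n) = 0 := by simp [field]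

/-- Quantitative Lipschitz bound for the field; no differentiability of `M` is needed, since
convexity and the Δ₂-condition bound the difference quotients of `M`. -/
lemma field_lip {n : ℕ} {M : ℝ → ℝ} (hM : IsNFunction M)
    (hmono : MonotoneOn (fun l => M l / l ^ 2) (Ioi 0)) {c : ℝ} (hc0 : 0 < c)
    (hc : ∀ l > (0:ℝ), M (2 * l) ≤ c * M l) {s : ℝ} (hs : 0 < s) (ξ η : E n)
    (hξ : ‖ξ‖ ≤ s) (hη : ‖η‖ ≤ s) :
    ‖field M ξ - field M η‖ ≤ (1 + c) * (M s / s ^ 2) * ‖ξ - η‖ := by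
  wlog hle : ‖η‖ ≤ ‖ξ‖ generalizing ξ η
  · rw [norm_sub_rev, norm_sub_rev ξ]
    exact this η ξ hη hξ (le_of_not_ge hle)
  have hs0 : 0 ≤ M s / s ^ 2 := div_nonneg (hM.2.2.2.1 _ hs.le) (by positivity)
  by_cases hξ0 : ξ = 0
  · have : η = 0 := by simpa [hξ0] using hle
    subst this; subst hξ0
    simp [field]
  have ha : 0 < ‖ξ‖ := norm_pos_iff.2 hξ0
  have hPa : M ‖ξ‖ / ‖ξ‖ ^ 2 ≤ M s / s ^ 2 := hmono (mem_Ioi.2 ha) (mem_Ioi.2 hs) hξ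
  have hPa0 : 0 ≤ M ‖ξ‖ / ‖ξ‖ ^ 2 := div_nonneg (hM.2.2.2.1 _ ha.le) (by positivity)
  by_cases hη0 : η = 0
  · subst hη0
    rw [field_zero, sub_zero, sub_zero, field, norm_smul, Real.norm_of_nonneg hPa0]
    have : M ‖ξ‖ / ‖ξ‖ ^ 2 ≤ (1 + c) * (M s / s ^ 2) := by nlinarith
    gcongr
  have hb : 0 < ‖η‖ := norm_pos_iff.2 hη0
  have hPb : M ‖η‖ / ‖η‖ ^ 2 ≤ M ‖ξ‖ / ‖ξ‖ ^ 2 := hmono (mem_Ioi.2 hb) (mem_Ioi.2 ha) hle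
  have hPb0 : 0 ≤ M ‖η‖ / ‖η‖ ^ 2 := div_nonneg (hM.2.2.2.1 _ hb.le) (by positivity)
  have heq : field M ξ - field M η = (M ‖η‖ / ‖η‖ ^ 2) • (ξ - η)
      + (M ‖ξ‖ / ‖ξ‖ ^ 2 - M ‖η‖ / ‖η‖ ^ 2) • ξ := by
    simp only [field, smul_sub, sub_smul]; abel
  have hrad : (M ‖ξ‖ / ‖ξ‖ ^ 2 - M ‖η‖ / ‖η‖ ^ 2) * ‖ξ‖
      ≤ c * (M ‖ξ‖ / ‖ξ‖ ^ 2) * (‖ξ‖ - ‖η‖) := by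
    have h1 : M ‖η‖ / ‖ξ‖ ^ 2 ≤ M ‖η‖ / ‖η‖ ^ 2 := by
      have := hM.2.2.2.1 _ hb.le
      gcongr
    have h2 := M_sub_le hM hc hb.le hle ha
    calc (M ‖ξ‖ / ‖ξ‖ ^ 2 - M ‖η‖ / ‖η‖ ^ 2) * ‖ξ‖
        ≤ (M ‖ξ‖ / ‖ξ‖ ^ 2 - M ‖η‖ / ‖ξ‖ ^ 2) * ‖ξ‖ := by gcongr
      _ = ((M ‖ξ‖ - M ‖η‖) * ‖ξ‖) / ‖ξ‖ ^ 2 := by ring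
      _ ≤ (c * M ‖ξ‖ * (‖ξ‖ - ‖η‖)) / ‖ξ‖ ^ 2 := by gcongr
      _ = _ := by ring
  have hd : ‖ξ‖ - ‖η‖ ≤ ‖ξ - η‖ := norm_sub_norm_le _ _
  calc ‖field M ξ - field M η‖
      ≤ M ‖η‖ / ‖η‖ ^ 2 * ‖ξ - η‖ + (M ‖ξ‖ / ‖ξ‖ ^ 2 - M ‖η‖ / ‖η‖ ^ 2) * ‖ξ‖ := by
        rw [heq]
        refine (norm_add_le _ _).trans ?_
        rw [norm_smul, norm_smul, Real.norm_of_nonneg hPb0, Real.norm_of_nonneg (by linarith)]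
    _ ≤ M s / s ^ 2 * ‖ξ - η‖ + c * (M s / s ^ 2) * ‖ξ - η‖ := by
        refine add_le_add (mul_le_mul_of_nonneg_right (hPb.trans hPa) (norm_nonneg _))
          (hrad.trans ?_)
        have : 0 ≤ ‖ξ‖ - ‖η‖ := by linarith
        gcongr
    _ = _ := by ring

/-! ### Calculus of test functions -/

/-- The `i`-th partial derivative. -/
def pd {n : ℕ} (i : Fin n) (u : E n → ℝ) (x : E n) : ℝ :=
  fderiv ℝ u x (EuclideanSpace.single i (1:ℝ))

section TestFunctions

variable {n : ℕ} {Ω : Set (E n)} {u : E n → ℝ}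

lemma TestFun.differentiable (hu : TestFun Ω u) : Differentiable ℝ u :=
  hu.1.differentiable (by simp)

lemma TestFun.const_mul (hu : TestFun Ω u) (a : ℝ) : TestFun Ω (fun x => a * u x) :=
  ⟨contDiff_const.mul hu.1, hu.2.1.mul_left,
    (tsupport_mul_subset_right (f := fun _ => a) (g := u)).trans hu.2.2⟩

lemma TestFun.pd (hu : TestFun Ω u) (i : Fin n) : TestFun Ω (pd i u) := by
  refine ⟨?_, hu.2.1.fderiv_apply ℝ _, (tsupport_fderiv_apply_subset ℝ _).trans hu.2.2⟩
  exact (hu.1.fderiv_right (m := (⊤ : ℕ∞)) (by simp)).clm_apply contDiff_const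

lemma gradient_apply (u : E n → ℝ) (x : E n) (i : Fin n) : gradient u x i = pd i u x := by
  have := inner_gradient_left (𝕜 := ℝ) (f := u) (x := x) (y := EuclideanSpace.single i (1:ℝ))
  rw [EuclideanSpace.inner_single_right] at this
  simpa [pd, -inner_gradient_left] using this

lemma TestFun.gradient_contDiff (hu : TestFun Ω u) : ContDiff ℝ (⊤ : ℕ∞) (gradient u) := by
  rw [contDiff_euclidean]
  intro i
  simp only [gradient_apply]
  exact (hu.pd i).1

lemma eq_zero_of_notMem {x : E n} (hx : x ∉ tsupport u) : u x = 0 :=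
  image_eq_zero_of_notMem_tsupport hx

lemma gradient_eq_zero {x : E n} (hx : x ∉ tsupport u) : gradient u x = 0 := by
  have : fderiv ℝ u x = 0 := by
    have : x ∉ tsupport (fderiv ℝ u) := fun h => hx (tsupport_fderiv_subset ℝ h)
    exact image_eq_zero_of_notMem_tsupport this
  simp [gradient, this]

lemma hessNormHS_eq (hu : TestFun Ω u) (x : E n) :
    hessNormHS u x = Real.sqrt (∑ i, ∑ j, (pd i (pd j u) x) ^ 2) := by
  unfold hessNormHS
  congr 1
  refine Finset.sum_congr rfl fun i _ => Finset.sum_congr rfl fun j _ => ?_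
  rw [iteratedFDeriv_two_apply]
  have h1 : DifferentiableAt ℝ (fderiv ℝ u) x :=
    ((hu.1.fderiv_right (m := (⊤ : ℕ∞)) (by simp)).differentiable (by simp)) x
  unfold pd
  have h2 : HasFDerivAt (fun y => fderiv ℝ u y (EuclideanSpace.single j (1:ℝ)))
      ((fderiv ℝ (fderiv ℝ u) x).flip (EuclideanSpace.single j (1:ℝ))) x := by
    simpa using h1.hasFDerivAt.clm_apply (hasFDerivAt_const (EuclideanSpace.single j (1:ℝ)) x)
  rw [h2.fderiv]
  simp

lemma hessNormHS_continuous (hu : TestFun Ω u) : Continuous (hessNormHS u) := by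
  have : hessNormHS u = fun x => Real.sqrt (∑ i, ∑ j, (pd i (pd j u) x) ^ 2) :=
    funext (hessNormHS_eq hu)
  rw [this]
  have h : ∀ i j, Continuous (pd i (pd j u)) := fun i j => ((hu.pd j).pd i).1.continuous
  fun_prop

lemma hessNormHS_nonneg (u : E n → ℝ) (x : E n) : 0 ≤ hessNormHS u x := Real.sqrt_nonneg _

lemma hessNormHS_eq_zero (hu : TestFun Ω u) {x : E n} (hx : x ∉ tsupport u) :
    hessNormHS u x = 0 := by
  have h : ∀ i j, pd i (pd j u) x = 0 := by
    intro i j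
    apply image_eq_zero_of_notMem_tsupport
    intro h
    exact hx (tsupport_fderiv_apply_subset ℝ _ (tsupport_fderiv_apply_subset ℝ _ h))
  simp [hessNormHS_eq hu, h]

lemma pd_const_mul (hu : TestFun Ω u) (a : ℝ) (i : Fin n) :
    pd i (fun x => a * u x) = fun x => a * pd i u x := by
  funext x
  simp [pd, fderiv_const_mul hu.differentiable.differentiableAt]

lemma norm_gradient_const_mul (hu : TestFun Ω u) (a : ℝ) (x : E n) :
    ‖gradient (fun x => a * u x) x‖ = |a| * ‖gradient u x‖ := by
  have : gradient (fun x => a * u x) x = a • gradient u x := by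
    ext i
    simp [gradient_apply, pd_const_mul hu]
  rw [this, norm_smul, Real.norm_eq_abs]

lemma hessNormHS_const_mul (hu : TestFun Ω u) (a : ℝ) (x : E n) :
    hessNormHS (fun x => a * u x) x = |a| * hessNormHS u x := by
  rw [hessNormHS_eq (hu.const_mul a), hessNormHS_eq hu, ← Real.sqrt_sq_eq_abs,
    ← Real.sqrt_mul (sq_nonneg a)]
  congr 1
  rw [Finset.mul_sum]
  refine Finset.sum_congr rfl fun i _ => ?_
  rw [Finset.mul_sum]
  refine Finset.sum_congr rfl fun j _ => ?_
  rw [pd_const_mul hu, pd_const_mul (hu.pd j)]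
  ring

lemma norm_gradient_pd_le (hu : TestFun Ω u) (j : Fin n) (x : E n) :
    ‖gradient (pd j u) x‖ ≤ hessNormHS u x := by
  rw [hessNormHS_eq hu, EuclideanSpace.norm_eq]
  apply Real.sqrt_le_sqrt
  simp only [gradient_apply, Real.norm_eq_abs, sq_abs]
  refine Finset.sum_le_sum fun i _ => ?_
  exact Finset.single_le_sum (f := fun j => pd i (pd j u) x ^ 2) (fun j _ => sq_nonneg _)
    (Finset.mem_univ j)

/-- The Hilbert–Schmidt norm of the Hessian dominates the operator norm of `D(∇u)`. -/
lemma norm_fderiv_gradient_le (hu : TestFun Ω u) (x : E n) :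
    ‖fderiv ℝ (gradient u) x‖ ≤ hessNormHS u x := by
  refine ContinuousLinearMap.opNorm_le_bound _ (hessNormHS_nonneg u x) fun v => ?_
  have hcoord : ∀ j, (fderiv ℝ (gradient u) x v) j = inner ℝ (gradient (pd j u) x) v := by
    intro j
    have hd : DifferentiableAt ℝ (gradient u) x :=
      hu.gradient_contDiff.differentiable (by simp) x
    have h1 := (hasFDerivWithinAt_euclidean.1 (hd.hasFDerivAt.hasFDerivWithinAt (s := univ))) j
    have h2 : (fun y => gradient u y j) = pd j u := funext fun y => gradient_apply u y j
    rw [h2] at h1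
    rw [inner_gradient_left, (hasFDerivWithinAt_univ.1 h1).fderiv]
    simp
  rw [EuclideanSpace.norm_eq, hessNormHS_eq hu]
  rw [← Real.sqrt_sq (norm_nonneg v), ← Real.sqrt_mul (by positivity)]
  apply Real.sqrt_le_sqrt
  rw [Finset.sum_comm, Finset.sum_mul]
  refine Finset.sum_le_sum fun j _ => ?_
  rw [hcoord, Real.norm_eq_abs, sq_abs]
  have h3 : ‖gradient (pd j u) x‖ ^ 2 = ∑ i, pd i (pd j u) x ^ 2 := by
    rw [EuclideanSpace.norm_sq_eq]
    simp [gradient_apply]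
  rw [← h3, ← mul_pow, ← sq_abs]
  gcongr
  exact abs_real_inner_le_norm _ _

end TestFunctions

/-- Some coordinate is at least `|ξ| / n` in absolute value. -/
lemma M_norm_le_sum {n : ℕ} {M : ℝ → ℝ} (hM : IsNFunction M) {a : ℝ} (ha : 0 ≤ a) (ξ : E n) :
    M (a * ‖ξ‖) ≤ ∑ i, M (a * (n * |ξ i|)) := by
  have hnn : ∀ i, 0 ≤ M (a * (n * |ξ i|)) := fun i => hM.2.2.2.1 _ (by positivity)
  rcases Nat.eq_zero_or_pos n with rfl | hn
  · have : ξ = 0 := Subsingleton.elim _ _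
    simp [this, hM.2.2.1]
  have : Nonempty (Fin n) := ⟨⟨0, hn⟩⟩
  obtain ⟨i, -, hi⟩ := Finset.exists_max_image Finset.univ (fun i => |ξ i|) Finset.univ_nonempty
  have h1 : ‖ξ‖ ≤ n * |ξ i| := by
    rw [EuclideanSpace.norm_eq]
    apply Real.sqrt_le_iff.2 ⟨by positivity, ?_⟩
    calc ∑ j, ‖ξ j‖ ^ 2 ≤ ∑ _j : Fin n, |ξ i| ^ 2 := by
          refine Finset.sum_le_sum fun j _ => ?_
          have := hi j (Finset.mem_univ _)
          rw [Real.norm_eq_abs]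
          gcongr
      _ = n * |ξ i| ^ 2 := by simp
      _ ≤ (n * |ξ i|) ^ 2 := by
          have : (1:ℝ) ≤ n := by exact_mod_cast hn
          rw [mul_pow]
          gcongr
          nlinarith
  calc M (a * ‖ξ‖) ≤ M (a * (n * |ξ i|)) := M_mono hM (by positivity) (by gcongr)
    _ ≤ _ := Finset.single_le_sum (f := fun i => M (a * (n * |ξ i|))) (fun j _ => hnn j)
      (Finset.mem_univ i)

/-! ### The weighted measure -/

section Weight

variable {n : ℕ} {Ω : Set (E n)} {φ : E n → ℝ}

lemma LocLipschitzOn.locallyLipschitzOn (hφ : LocLipschitzOn Ω φ) : LocallyLipschitzOn Ω φ := by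
  intro x hx
  obtain ⟨s, hs, K, hK⟩ := hφ x hx
  exact ⟨K, s, hs, hK⟩

lemma LocLipschitzOn.continuousOn (hφ : LocLipschitzOn Ω φ) : ContinuousOn φ Ω :=
  hφ.locallyLipschitzOn.continuousOn

lemma weight_aemeasurable (hΩ : IsOpen Ω) (hφ : LocLipschitzOn Ω φ) :
    AEMeasurable (fun x => ENNReal.ofReal (Real.exp (-φ x))) (volume.restrict Ω) :=
  ((hφ.continuousOn.neg.rexp).aemeasurable hΩ.measurableSet).ennreal_ofReal

lemma weight_bdd (hφ : LocLipschitzOn Ω φ) {K : Set (E n)} (hK : IsCompact K) (hKΩ : K ⊆ Ω) :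
    ∃ B : ℝ, 0 ≤ B ∧ ∀ x ∈ K, Real.exp (-φ x) ≤ B := by
  obtain ⟨B, hB⟩ := hK.exists_bound_of_continuousOn ((hφ.continuousOn.mono hKΩ).neg.rexp)
  exact ⟨max B 0, le_max_right _ _, fun x hx =>
    ((le_abs_self _).trans (hB x hx)).trans (le_max_left _ _)⟩

lemma ae_measOf {p : E n → Prop} (h : ∀ᵐ x ∂(volume.restrict Ω), p x) :
    ∀ᵐ x ∂(measOf Ω φ), p x :=
  (withDensity_absolutelyContinuous _ _).ae_le h

lemma measOf_lt_top (hφ : LocLipschitzOn Ω φ) {K : Set (E n)} (hK : IsCompact K)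
    (hKΩ : K ⊆ Ω) : measOf Ω φ K < ⊤ := by
  obtain ⟨B, -, hB⟩ := weight_bdd hφ hK hKΩ
  rw [measOf, withDensity_apply _ hK.measurableSet]
  calc _ ≤ ∫⁻ _x in K, ENNReal.ofReal B ∂(volume.restrict Ω) :=
        setLIntegral_mono_ae' hK.measurableSet
          (Eventually.of_forall fun x hx => ENNReal.ofReal_le_ofReal (hB x hx))
    _ = ENNReal.ofReal B * (volume.restrict Ω) K := by simp
    _ < ⊤ := ENNReal.mul_lt_top ENNReal.ofReal_lt_top
        ((Measure.restrict_apply_le _ _).trans_lt hK.measure_lt_top)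

lemma integrable_of_bdd (hφ : LocLipschitzOn Ω φ) {K : Set (E n)} (hK : IsCompact K)
    (hKΩ : K ⊆ Ω) {f : E n → ℝ} (hf : AEMeasurable f (volume.restrict Ω)) {C : ℝ}
    (hC : ∀ᵐ x ∂(volume.restrict Ω), |f x| ≤ C) (h0 : ∀ x, x ∉ K → f x = 0) :
    Integrable f (measOf Ω φ) := by
  have hsupp : Function.support f ⊆ K := fun x hx => by_contra fun h => hx (h0 x h)
  rw [← integrableOn_iff_integrable_of_support_subset hsupp]
  have hm : AEStronglyMeasurable f (measOf Ω φ) :=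
    (hf.mono_ac (withDensity_absolutelyContinuous _ _)).aestronglyMeasurable
  refine Measure.integrableOn_of_bounded (measOf_lt_top hφ hK hKΩ).ne hm (M := C) ?_
  exact ae_restrict_of_ae (ae_measOf hC)

lemma integrable_of_continuous (hφ : LocLipschitzOn Ω φ) {K : Set (E n)}
    (hK : IsCompact K) (hKΩ : K ⊆ Ω) {f : E n → ℝ} (hf : Continuous f)
    (h0 : ∀ x, x ∉ K → f x = 0) : Integrable f (measOf Ω φ) := by
  obtain ⟨C, hC⟩ := hK.exists_bound_of_continuousOn hf.continuousOn
  refine integrable_of_bdd hφ hK hKΩ hf.aemeasurable (C := max C 0)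
    (Eventually.of_forall fun x => ?_) h0
  by_cases hx : x ∈ K
  · exact (hC x hx).trans (le_max_left _ _)
  · simp [h0 x hx]

lemma integral_measOf (hΩ : IsOpen Ω) (hφ : LocLipschitzOn Ω φ) (f : E n → ℝ) :
    ∫ x, f x ∂(measOf Ω φ) = ∫ x in Ω, Real.exp (-φ x) * f x := by
  rw [measOf, integral_withDensity_eq_integral_toReal_smul₀ (weight_aemeasurable hΩ hφ)
    (Eventually.of_forall fun x => ENNReal.ofReal_lt_top)]
  simp [ENNReal.toReal_ofReal (Real.exp_pos _).le]

lemma integrable_measOf (hΩ : IsOpen Ω) (hφ : LocLipschitzOn Ω φ) {f : E n → ℝ}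
    (hf : Integrable f (measOf Ω φ)) : IntegrableOn (fun x => Real.exp (-φ x) * f x) Ω := by
  rw [measOf, integrable_withDensity_iff_integrable_smul₀' (weight_aemeasurable hΩ hφ)
    (Eventually.of_forall fun x => ENNReal.ofReal_lt_top)] at hf
  simpa [IntegrableOn, ENNReal.toReal_ofReal (Real.exp_pos _).le] using hf

/-- The gradient of `φ` is bounded on compact subsets of `Ω`, wherever it exists: `φ` is Lipschitz on
a compact neighbourhood. -/
lemma gradient_bdd (hΩ : IsOpen Ω) (hφ : LocLipschitzOn Ω φ) {K : Set (E n)}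
    (hK : IsCompact K) (hKΩ : K ⊆ Ω) :
    ∃ L : ℝ, 0 ≤ L ∧ ∀ x ∈ K, ∀ p : E n, HasGradientAt φ p x → ‖p‖ ≤ L := by
  obtain ⟨δ, hδ, hsub⟩ := hK.exists_cthickening_subset_open hΩ hKΩ
  obtain ⟨L, hL⟩ := (hφ.locallyLipschitzOn.mono hsub).exists_lipschitzOnWith_of_compact
    hK.cthickening
  refine ⟨L, L.2, fun x hx p hp => ?_⟩
  have := hp.hasFDerivAt.le_of_lipschitzOn
    (mem_of_superset (Metric.isOpen_thickening.mem_nhds (Metric.self_subset_thickening hδ K hx))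
      (Metric.thickening_subset_cthickening δ K)) hL
  simpa using this

lemma exp_sub_le {a b B : ℝ} (ha : Real.exp a ≤ B) (hb : Real.exp b ≤ B) :
    |Real.exp a - Real.exp b| ≤ B * |a - b| := by
  wlog h : b ≤ a generalizing a b
  · rw [abs_sub_comm, abs_sub_comm a]
    exact this hb ha (le_of_not_ge h)
  rw [abs_of_nonneg (by simpa using h), abs_of_nonneg (by linarith)]
  have h1 := Real.add_one_le_exp (b - a)
  have h2 : Real.exp b = Real.exp a * Real.exp (b - a) := by rw [← Real.exp_add]; ring_nf
  have h3 : Real.exp a * (b - a + 1) ≤ Real.exp b := by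
    rw [h2]; exact mul_le_mul_of_nonneg_left h1 (Real.exp_pos _).le
  have h4 : Real.exp a * (a - b) ≤ B * (a - b) := mul_le_mul_of_nonneg_right ha (by linarith)
  linarith

/-- Multiplying a Lipschitz function supported in a compact subset of `Ω` by the locally Lipschitz
weight gives a globally Lipschitz function, whatever the values of `φ` outside `Ω`. -/
lemma lipschitz_mul_weight (hφ : LocLipschitzOn Ω φ) {K : Set (E n)} (hK : IsCompact K)
    (hKΩ : K ⊆ Ω) {h : E n → ℝ} {L : NNReal} (hh : LipschitzWith L h)
    (h0 : ∀ x, x ∉ K → h x = 0) :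
    ∃ D, LipschitzWith D (fun x => h x * Real.exp (-φ x)) := by
  obtain ⟨B, hB0, hB⟩ := weight_bdd hφ hK hKΩ
  obtain ⟨A, hA⟩ := hK.exists_bound_of_continuousOn hh.continuous.continuousOn
  obtain ⟨P, hP⟩ := (hφ.locallyLipschitzOn.mono hKΩ).exists_lipschitzOnWith_of_compact hK
  have hA' : ∀ x, |h x| ≤ max A 0 := by
    intro x
    by_cases hx : x ∈ K
    · exact (hA x hx).trans (le_max_left _ _)
    · simp [h0 x hx]
  have hA0 : 0 ≤ max A 0 := le_max_right _ _
  have hhd : ∀ x y, |h x - h y| ≤ L * ‖x - y‖ := fun x y => by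
    simpa [Real.dist_eq, dist_eq_norm] using hh.dist_le_mul x y
  have key : ∀ x y, x ∈ K → |h x * Real.exp (-φ x) - h y * Real.exp (-φ y)|
      ≤ (max A 0 * (B * P) + B * L) * ‖x - y‖ := by
    intro x y hx
    have e1 : |Real.exp (-φ x)| ≤ B := by
      rw [abs_of_pos (Real.exp_pos _)]; exact hB x hx
    have e2 : |(h x - h y) * Real.exp (-φ x)| ≤ B * L * ‖x - y‖ := by
      rw [abs_mul, mul_comm, mul_assoc]
      exact mul_le_mul e1 (hhd x y) (abs_nonneg _) hB0
    have hxy := norm_nonneg (x - y)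
    by_cases hy : y ∈ K
    · have e3 : |h y * (Real.exp (-φ x) - Real.exp (-φ y))| ≤
          max A 0 * (B * P) * ‖x - y‖ := by
        rw [abs_mul, mul_assoc]
        refine mul_le_mul (hA' y) ?_ (abs_nonneg _) hA0
        refine (exp_sub_le (hB x hx) (hB y hy)).trans ?_
        rw [mul_assoc]
        refine mul_le_mul_of_nonneg_left ?_ hB0
        have := hP.dist_le_mul x hx y hy
        rw [Real.dist_eq, dist_eq_norm] at this
        rwa [neg_sub_neg, abs_sub_comm]
      calc _ = |(h x - h y) * Real.exp (-φ x)
            + h y * (Real.exp (-φ x) - Real.exp (-φ y))| := by ring_nf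
        _ ≤ _ := (abs_add_le _ _).trans (by linarith)
    · have e3 : 0 ≤ max A 0 * (B * P) * ‖x - y‖ := by positivity
      rw [h0 y hy, sub_zero] at e2
      rw [h0 y hy, zero_mul, sub_zero]
      linarith
  refine ⟨(max A 0 * (B * P) + B * L).toNNReal, LipschitzWith.of_dist_le_mul fun x y => ?_⟩
  rw [Real.dist_eq, dist_eq_norm, Real.coe_toNNReal _ (by positivity)]
  by_cases hx : x ∈ K
  · exact key x y hx
  by_cases hy : y ∈ K
  · rw [abs_sub_comm, norm_sub_rev]
    exact key y x hy
  · simp only [h0 x hx, h0 y hy, zero_mul, sub_zero, abs_zero]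
    positivity

end Weight

/-! ### Integration by parts -/

/-- Near a point of differentiability the function is Lipschitz from that point with any constant
exceeding the norm of the derivative. -/
lemma eventually_norm_sub_le {X Y : Type*} [NormedAddCommGroup X] [NormedSpace ℝ X]
    [NormedAddCommGroup Y] [NormedSpace ℝ Y] {f : X → Y} {L : X →L[ℝ] Y} {x : X}
    (h : HasFDerivAt f L x) {ε : ℝ} (hε : 0 < ε) :
    ∀ᶠ y in nhds x, ‖f y - f x‖ ≤ (‖L‖ + ε) * ‖y - x‖ := by
  filter_upwards [(hasFDerivAt_iff_isLittleO.1 h).def hε] with y hy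
  have h1 := norm_add_le (f y - f x - L (y - x)) (L (y - x))
  rw [sub_add_cancel] at h1
  have h2 := L.le_opNorm (y - x)
  linarith

section IBP

variable {n : ℕ} {Ω : Set (E n)} {φ : E n → ℝ} {u : E n → ℝ} {M : ℝ → ℝ}

/-- The `i`-th component of the vector field whose divergence is tested against `u`. -/
def comp (M : ℝ → ℝ) (φ u : E n → ℝ) (i : Fin n) (x : E n) : ℝ :=
  field M (gradient u x) i * Real.exp (-φ x)

/-- The bound is stated with an arbitrary `s > |∇u(x)|` in place of `|∇u(x)|`, so that critical
points of `u` need no separate treatment. If the line derivative does not exist it is `0` by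
convention and the bound is trivial. -/
lemma lineDeriv_comp_le (hu : TestFun Ω u) (hM : IsNFunction M)
    (hmono : MonotoneOn (fun l => M l / l ^ 2) (Ioi 0)) {c : ℝ} (hc0 : 0 < c)
    (hc : ∀ l > (0:ℝ), M (2 * l) ≤ c * M l) {x p : E n} (hp : HasGradientAt φ p x)
    {s : ℝ} (hs : ‖gradient u x‖ < s) (i : Fin n) {v : E n} (hv : ‖v‖ = 1) :
    |lineDeriv ℝ (comp M φ u i) x v| ≤ Real.exp (-φ x) *
      ((1 + c) * (M s / s ^ 2) * hessNormHS u x + |field M (gradient u x) i| * ‖p‖) := by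
  have hs0 : 0 < s := (norm_nonneg _).trans_lt hs
  have hΦ : 0 ≤ M s / s ^ 2 := div_nonneg (hM.2.2.2.1 _ hs0.le) (by positivity)
  have hH := hessNormHS_nonneg u x
  have hex := Real.exp_pos (-φ x)
  have hgd : HasFDerivAt (gradient u) (fderiv ℝ (gradient u) x) x :=
    (hu.gradient_contDiff.differentiable (by simp) x).hasFDerivAt
  have hψ := hp.hasFDerivAt.neg.exp
  have hbound : ∀ ε > (0:ℝ), |lineDeriv ℝ (comp M φ u i) x v| ≤
      (1 + c) * (M s / s ^ 2) * (hessNormHS u x + ε) * (Real.exp (-φ x) + ε)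
        + |field M (gradient u x) i| * (Real.exp (-φ x) * ‖p‖ + ε) := by
    intro ε hε
    have key : ∀ᶠ y in nhds x, ‖comp M φ u i y - comp M φ u i x‖ ≤
        ((1 + c) * (M s / s ^ 2) * (hessNormHS u x + ε) * (Real.exp (-φ x) + ε)
        + |field M (gradient u x) i| * (Real.exp (-φ x) * ‖p‖ + ε)) * ‖y - x‖ := by
      have ev1 : ∀ᶠ y in nhds x, ‖gradient u y‖ < s :=
        hu.gradient_contDiff.continuous.norm.continuousAt.eventually_lt continuousAt_const hs
      have ev2 := eventually_norm_sub_le hgd hε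
      have ev3 : ∀ᶠ y in nhds x, Real.exp (-φ y) < Real.exp (-φ x) + ε :=
        hψ.continuousAt.eventually_lt continuousAt_const (by simp; linarith)
      have ev4 := eventually_norm_sub_le hψ hε
      filter_upwards [ev1, ev2, ev3, ev4] with y h1 h2 h3 h4
      have h5 : |field M (gradient u y) i - field M (gradient u x) i| ≤
          (1 + c) * (M s / s ^ 2) * (hessNormHS u x + ε) * ‖y - x‖ := by
        calc |field M (gradient u y) i - field M (gradient u x) i|
            ≤ ‖field M (gradient u y) - field M (gradient u x)‖ := by
              simpa using PiLp.norm_apply_le (field M (gradient u y) - field M (gradient u x)) i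
          _ ≤ (1 + c) * (M s / s ^ 2) * ‖gradient u y - gradient u x‖ :=
              field_lip hM hmono hc0 hc hs0 _ _ h1.le hs.le
          _ ≤ (1 + c) * (M s / s ^ 2) * ((hessNormHS u x + ε) * ‖y - x‖) := by
              gcongr
              refine h2.trans ?_
              gcongr
              exact norm_fderiv_gradient_le hu x
          _ = _ := by ring
      have h6 : |Real.exp (-φ y) - Real.exp (-φ x)| ≤
          (Real.exp (-φ x) * ‖p‖ + ε) * ‖y - x‖ := by
        refine h4.trans (le_of_eq ?_)
        simp [norm_smul]
      calc ‖comp M φ u i y - comp M φ u i x‖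
          = |(field M (gradient u y) i - field M (gradient u x) i) * Real.exp (-φ y)
            + field M (gradient u x) i * (Real.exp (-φ y) - Real.exp (-φ x))| := by
            rw [Real.norm_eq_abs]; unfold comp; ring_nf
        _ ≤ |field M (gradient u y) i - field M (gradient u x) i| * Real.exp (-φ y)
            + |field M (gradient u x) i| * |Real.exp (-φ y) - Real.exp (-φ x)| := by
            refine (abs_add_le _ _).trans ?_
            rw [abs_mul, abs_mul, abs_of_pos (Real.exp_pos (-φ y))]
        _ ≤ ((1 + c) * (M s / s ^ 2) * (hessNormHS u x + ε) * ‖y - x‖) * (Real.exp (-φ x) + ε)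
            + |field M (gradient u x) i| * ((Real.exp (-φ x) * ‖p‖ + ε) * ‖y - x‖) := by
            gcongr
        _ = _ := by ring
    have := norm_lineDeriv_le_of_lip' ℝ (v := v) (by positivity) key
    simpa [hv] using this
  have hlim : Tendsto (fun ε : ℝ =>
      (1 + c) * (M s / s ^ 2) * (hessNormHS u x + ε) * (Real.exp (-φ x) + ε)
        + |field M (gradient u x) i| * (Real.exp (-φ x) * ‖p‖ + ε)) (nhdsWithin 0 (Ioi 0))
      (nhds ((1 + c) * (M s / s ^ 2) * (hessNormHS u x + 0) * (Real.exp (-φ x) + 0)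
        + |field M (gradient u x) i| * (Real.exp (-φ x) * ‖p‖ + 0))) :=
    ((by fun_prop : Continuous (fun ε : ℝ =>
      (1 + c) * (M s / s ^ 2) * (hessNormHS u x + ε) * (Real.exp (-φ x) + ε)
        + |field M (gradient u x) i| * (Real.exp (-φ x) * ‖p‖ + ε))).tendsto 0).mono_left
      nhdsWithin_le_nhds
  refine (ge_of_tendsto hlim (eventually_mem_nhdsWithin.mono hbound)).trans (le_of_eq ?_)
  ring

lemma gradient_lipschitz (hu : TestFun Ω u) : ∃ L, LipschitzWith L (gradient u) := by
  refine ContDiff.lipschitzWith_of_hasCompactSupport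
    (HasCompactSupport.intro hu.2.1 fun x hx => gradient_eq_zero hx) hu.gradient_contDiff (by simp)

lemma comp_eq_zero {x : E n} (hx : x ∉ tsupport u) (i : Fin n) : comp M φ u i x = 0 := by
  simp [comp, gradient_eq_zero hx, field_zero]

lemma comp_lipschitz (hφ : LocLipschitzOn Ω φ) (hu : TestFun Ω u) (hM : IsNFunction M)
    (hmono : MonotoneOn (fun l => M l / l ^ 2) (Ioi 0)) {c : ℝ} (hc0 : 0 < c)
    (hc : ∀ l > (0:ℝ), M (2 * l) ≤ c * M l) (i : Fin n) :
    ∃ D, LipschitzWith D (comp M φ u i) := by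
  obtain ⟨L, hL⟩ := gradient_lipschitz hu
  obtain ⟨R, hR⟩ := hu.2.1.exists_bound_of_continuousOn
    hu.gradient_contDiff.continuous.continuousOn
  set s := max R 1 with hs
  have hs0 : 0 < s := lt_max_of_lt_right one_pos
  have hle : ∀ x, ‖gradient u x‖ ≤ s := by
    intro x
    by_cases hx : x ∈ tsupport u
    · exact (hR x hx).trans (le_max_left _ _)
    · simp [gradient_eq_zero hx, hs0.le]
  have hΦ : 0 ≤ M s / s ^ 2 := div_nonneg (hM.2.2.2.1 _ hs0.le) (by positivity)
  have hlip : LipschitzWith (((1 + c) * (M s / s ^ 2)).toNNReal * L)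
      (fun x => field M (gradient u x) i) := by
    refine LipschitzWith.of_dist_le_mul fun x y => ?_
    rw [Real.dist_eq, NNReal.coe_mul, Real.coe_toNNReal _ (by positivity)]
    calc |field M (gradient u x) i - field M (gradient u y) i|
        ≤ ‖field M (gradient u x) - field M (gradient u y)‖ := by
          simpa using PiLp.norm_apply_le (field M (gradient u x) - field M (gradient u y)) i
      _ ≤ (1 + c) * (M s / s ^ 2) * ‖gradient u x - gradient u y‖ :=
          field_lip hM hmono hc0 hc hs0 _ _ (hle x) (hle y)
      _ ≤ (1 + c) * (M s / s ^ 2) * (L * dist x y) := by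
          gcongr
          simpa [dist_eq_norm] using hL.dist_le_mul x y
      _ = _ := by ring
  exact lipschitz_mul_weight hφ hu.2.1 hu.2.2 hlip
    (fun x hx => by simp [gradient_eq_zero hx, field_zero])

/-- Integrating `M(|∇u|) = ∇u · F(∇u)` by parts, `F` being the field above, and estimating the
resulting divergence pointwise. -/
lemma integral_M_gradient_le (hΩ : IsOpen Ω) (hφ : LocLipschitzOn Ω φ) (hu : TestFun Ω u)
    (hM : IsNFunction M)
    (hmono : MonotoneOn (fun l => M l / l ^ 2) (Ioi 0)) {c : ℝ} (hc0 : 0 < c)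
    (hc : ∀ l > (0:ℝ), M (2 * l) ≤ c * M l) {R : E n → ℝ}
    (hR : Integrable R (measOf Ω φ))
    (hb : ∀ᵐ x ∂(volume.restrict Ω), ∀ i : Fin n,
      |lineDeriv ℝ (comp M φ u i) x (-EuclideanSpace.single i (1:ℝ))| * |u x| ≤
        Real.exp (-φ x) * R x) :
    ∫ x, M ‖gradient u x‖ ∂(measOf Ω φ) ≤ n * ∫ x, R x ∂(measOf Ω φ) := by
  have hI := integrable_measOf hΩ hφ hR
  obtain ⟨Lu, hLu⟩ := ContDiff.lipschitzWith_of_hasCompactSupport hu.2.1 hu.1 (by simp)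
  have hterm : ∀ i : Fin n, ∫ x, pd i u x * comp M φ u i x ≤ ∫ x, R x ∂(measOf Ω φ) := by
    intro i
    obtain ⟨D, hD⟩ := comp_lipschitz hφ hu hM hmono hc0 hc i
    have hcs : HasCompactSupport (comp M φ u i) :=
      HasCompactSupport.intro hu.2.1 fun x hx => comp_eq_zero hx i
    have h1 := LipschitzWith.integral_lineDeriv_mul_eq (μ := volume) hLu hD hcs
      (EuclideanSpace.single i (1:ℝ))
    have h2 : ∀ x, lineDeriv ℝ u x (EuclideanSpace.single i (1:ℝ)) = pd i u x := fun x =>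
      (hu.differentiable x).lineDeriv_eq_fderiv
    simp only [h2] at h1
    rw [h1, integral_measOf hΩ hφ, ← setIntegral_eq_integral_of_forall_compl_eq_zero (s := Ω)]
    · refine (Real.le_norm_self _).trans ?_
      refine norm_integral_le_of_norm_le hI ?_
      filter_upwards [hb] with x hx
      rw [norm_mul, Real.norm_eq_abs, Real.norm_eq_abs]
      exact hx i
    · intro x hx
      rw [eq_zero_of_notMem (fun h => hx (hu.2.2 h)), mul_zero]
  have hint : ∀ i : Fin n, Integrable (fun x => pd i u x * comp M φ u i x) := by
    intro i
    obtain ⟨D, hD⟩ := comp_lipschitz hφ hu hM hmono hc0 hc i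
    refine Continuous.integrable_of_hasCompactSupport ((hu.pd i).1.continuous.mul hD.continuous) ?_
    exact HasCompactSupport.intro hu.2.1 fun x hx => by rw [comp_eq_zero hx i, mul_zero]
  have hpt : ∀ x, Real.exp (-φ x) * M ‖gradient u x‖ = ∑ i, pd i u x * comp M φ u i x := by
    intro x
    have h1 : ∑ i, pd i u x * comp M φ u i x =
        Real.exp (-φ x) * (M ‖gradient u x‖ / ‖gradient u x‖ ^ 2 * ‖gradient u x‖ ^ 2) := by
      simp only [comp, field, PiLp.smul_apply, smul_eq_mul]
      generalize M ‖gradient u x‖ / ‖gradient u x‖ ^ 2 = q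
      rw [EuclideanSpace.norm_sq_eq (gradient u x), Finset.mul_sum, Finset.mul_sum]
      refine Finset.sum_congr rfl fun i _ => ?_
      simp only [gradient_apply, Real.norm_eq_abs, sq_abs]
      ring
    rw [h1]
    by_cases h0 : gradient u x = 0
    · simp [h0, hM.2.2.1]
    · have := norm_ne_zero_iff.2 h0
      rw [div_mul_cancel₀ _ (by positivity)]
  rw [integral_measOf hΩ hφ]
  simp only [hpt]
  rw [setIntegral_eq_integral_of_forall_compl_eq_zero, integral_finsetSum _ fun i _ => hint i]
  · calc _ ≤ ∑ _i : Fin n, ∫ x, R x ∂(measOf Ω φ) := Finset.sum_le_sum fun i _ => hterm i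
      _ = _ := by simp
  · intro x hx
    refine Finset.sum_eq_zero fun i _ => ?_
    rw [comp_eq_zero (fun h => hx (hu.2.2 h)), mul_zero]

end IBP

/-! ### The modular inequality -/

section Modular

variable {n : ℕ} {Ω : Set (E n)} {φ : E n → ℝ} {φ' : E n → E n} {u : E n → ℝ} {M : ℝ → ℝ}

lemma integrable_M (hφ : LocLipschitzOn Ω φ) (hM : IsNFunction M) {K : Set (E n)}
    (hK : IsCompact K) (hKΩ : K ⊆ Ω) {f : E n → ℝ} (hf : Continuous f) (hf0 : ∀ x, 0 ≤ f x)
    (h0 : ∀ x, x ∉ K → f x = 0) : Integrable (fun x => M (f x)) (measOf Ω φ) :=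
  integrable_of_continuous hφ hK hKΩ (M_comp_continuous hM hf hf0)
    (fun x hx => by rw [h0 x hx, hM.2.2.1])

/-- Only the existence of `φ'` almost everywhere is given; its measurability comes from that of
`fderiv ℝ φ`. -/
lemma integrable_M_weight (hΩ : IsOpen Ω) (hφ : LocLipschitzOn Ω φ)
    (hφ' : ∀ᵐ x ∂(volume.restrict Ω), HasGradientAt φ (φ' x) x)
    (hM : IsNFunction M) {K : Set (E n)}
    (hK : IsCompact K) (hKΩ : K ⊆ Ω) {f : E n → ℝ} (hf : Continuous f) (hf0 : ∀ x, 0 ≤ f x)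
    (h0 : ∀ x, x ∉ K → f x = 0) :
    Integrable (fun x => M (‖φ' x‖ * f x)) (measOf Ω φ) := by
  obtain ⟨L, hL0, hL⟩ := gradient_bdd hΩ hφ hK hKΩ
  obtain ⟨B, hB⟩ := hK.exists_bound_of_continuousOn hf.continuousOn
  have hmeas : AEMeasurable (fun x => M (‖φ' x‖ * f x)) (volume.restrict Ω) := by
    have h1 : Measurable (fun x => M (max 0 (‖fderiv ℝ φ x‖ * f x))) :=
      (M_ext_continuous hM).measurable.comp
        ((measurable_fderiv ℝ φ).norm.mul hf.measurable)
    refine h1.aemeasurable.congr ?_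
    filter_upwards [hφ'] with x hx
    have h2 : ‖fderiv ℝ φ x‖ = ‖φ' x‖ := by rw [hx.hasFDerivAt.fderiv]; simp
    have h3 : 0 ≤ ‖φ' x‖ * f x := mul_nonneg (norm_nonneg _) (hf0 x)
    rw [h2, max_eq_right h3]
  refine integrable_of_bdd hφ hK hKΩ hmeas (C := M (L * max B 0)) ?_
    (fun x hx => by rw [h0 x hx, mul_zero, hM.2.2.1])
  filter_upwards [hφ'] with x hx
  have h3 : 0 ≤ ‖φ' x‖ * f x := mul_nonneg (norm_nonneg _) (hf0 x)
  rw [abs_of_nonneg (hM.2.2.2.1 _ h3)]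
  by_cases hxK : x ∈ K
  · refine M_mono hM h3 ?_
    refine mul_le_mul (hL x hxK _ hx) ?_ (hf0 x) hL0
    exact ((le_abs_self _).trans (hB x hxK)).trans (le_max_left _ _)
  · rw [h0 x hxK, mul_zero, hM.2.2.1]
    exact hM.2.2.2.1 _ (mul_nonneg hL0 (le_max_right _ _))

/-- Pointwise estimate of the integrand produced by the integration by parts. The Young-type
inequality is used twice, with `w = |u|` and with `v = |∇²u|` or `v = |∇φ| |∇u|`. -/
lemma pointwise_bound (hu : TestFun Ω u) (hM : IsNFunction M)
    (hmono : MonotoneOn (fun l => M l / l ^ 2) (Ioi 0)) {c : ℝ} (hc0 : 0 < c)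
    (hc : ∀ l > (0:ℝ), M (2 * l) ≤ c * M l) {x p : E n} (hp : HasGradientAt φ p x)
    {δ θ : ℝ} (hδ : 0 < δ) (hθ : 0 < θ) (i : Fin n) {v : E n} (hv : ‖v‖ = 1) :
    |lineDeriv ℝ (comp M φ u i) x v| * |u x| ≤ Real.exp (-φ x) *
      (δ * ((2 + c) * M ‖gradient u x‖ + (1 + c) * M (θ * hessNormHS u x)
        + M (‖p‖ * (θ * ‖gradient u x‖)) + (2 + c) * M (|u x| / (θ * δ)))) := by
  set r := ‖gradient u x‖ with hr
  have hr0 : 0 ≤ r := norm_nonneg _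
  have hnn : ∀ t, 0 ≤ t → 0 ≤ M t := hM.2.2.2.1
  have hex := Real.exp_pos (-φ x)
  have hfield : |field M (gradient u x) i| * ‖p‖ * |u x| ≤
      δ * M r + δ * M (‖p‖ * (θ * r)) + δ * M (|u x| / (θ * δ)) := by
    rcases hr0.eq_or_lt with h0 | hpos
    · have : gradient u x = 0 := norm_eq_zero.1 h0.symm
      rw [this, field_zero]
      have := hnn r hr0
      have := hnn (‖p‖ * (θ * r)) (by positivity)
      have := hnn (|u x| / (θ * δ)) (by positivity)
      simp only [PiLp.zero_apply, abs_zero, zero_mul]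
      positivity
    · have h1 : |field M (gradient u x) i| ≤ M r / r ^ 2 * r := by
        have h2 := PiLp.norm_apply_le (field M (gradient u x)) i
        have h3 : 0 ≤ M r / r ^ 2 := div_nonneg (hnn r hr0) (by positivity)
        have h4 : ‖field M (gradient u x)‖ = M r / r ^ 2 * r := by
          rw [field, norm_smul, Real.norm_of_nonneg h3]
        rw [h4] at h2
        exact h2
      have h2 := young_ineq hM hmono (s := r) (v := ‖p‖ * r) (w := |u x|) hpos (by positivity)
        (abs_nonneg _) hδ hθ
      calc |field M (gradient u x) i| * ‖p‖ * |u x|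
          ≤ M r / r ^ 2 * r * ‖p‖ * |u x| := by gcongr
        _ = M r / r ^ 2 * (‖p‖ * r * |u x|) := by ring
        _ ≤ _ := h2
        _ = _ := by rw [mul_left_comm θ]
  have hs : ∀ s > r, |lineDeriv ℝ (comp M φ u i) x v| * |u x| ≤ Real.exp (-φ x) *
      ((1 + c) * (δ * M s + δ * M (θ * hessNormHS u x) + δ * M (|u x| / (θ * δ)))
        + (δ * M r + δ * M (‖p‖ * (θ * r)) + δ * M (|u x| / (θ * δ)))) := by
    intro s hs
    have h1 := lineDeriv_comp_le hu hM hmono hc0 hc hp hs i hv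
    have h2 := young_ineq hM hmono (s := s) (v := hessNormHS u x) (w := |u x|)
      (hr0.trans_lt hs) (hessNormHS_nonneg u x) (abs_nonneg _) hδ hθ
    calc |lineDeriv ℝ (comp M φ u i) x v| * |u x|
        ≤ Real.exp (-φ x) * ((1 + c) * (M s / s ^ 2) * hessNormHS u x
            + |field M (gradient u x) i| * ‖p‖) * |u x| := by gcongr
      _ = Real.exp (-φ x) * ((1 + c) * (M s / s ^ 2 * (hessNormHS u x * |u x|))
            + |field M (gradient u x) i| * ‖p‖ * |u x|) := by ring
      _ ≤ _ := by gcongr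
  -- let `s` decrease to `r = |∇u(x)|`
  have hMt : Tendsto M (nhdsWithin r (Ioi r)) (nhds (M r)) :=
    ((hM.1 r hr0).mono (fun t ht => mem_Ici.2 (hr0.trans (le_of_lt ht)))).tendsto
  have hlim := (((((hMt.const_mul δ).add_const (δ * M (θ * hessNormHS u x))).add_const
    (δ * M (|u x| / (θ * δ)))).const_mul (1 + c)).add_const
    (δ * M r + δ * M (‖p‖ * (θ * r)) + δ * M (|u x| / (θ * δ)))).const_mul (Real.exp (-φ x))
  refine (ge_of_tendsto hlim (eventually_mem_nhdsWithin.mono hs)).trans (le_of_eq ?_)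
  ring

/-- The scale-dependent inequality between modulars from which the norm inequality follows. The two
coefficients `1 / 2` matter: modulars at most `1` on the right give a modular at most `1` on the
left. -/
lemma modular_ineq (hΩ : IsOpen Ω) (hM : IsNFunction M) (hΔ : Delta2 M)
    (hmono : MonotoneOn (fun l => M l / l ^ 2) (Ioi 0))
    (hφ : LocLipschitzOn Ω φ)
    (hφ' : ∀ᵐ x ∂(volume.restrict Ω), HasGradientAt φ (φ' x) x)
    {K₁ K₂ : ℝ} (hK₁ : 0 < K₁) (hK₂ : 0 < K₂)
    (hH1 : ∀ u : E n → ℝ, TestFun Ω u →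
      ∫ x, M (‖φ' x‖ * |u x|) ∂(measOf Ω φ) ≤
        K₁ * ∫ x, M ‖gradient u x‖ ∂(measOf Ω φ)
          + K₂ * ∫ x, M |u x| ∂(measOf Ω φ)) :
    ∃ D > (0:ℝ), ∃ θ₀ > (0:ℝ), ∀ θ, 0 < θ → θ ≤ θ₀ → ∀ u : E n → ℝ, TestFun Ω u →
      ∫ x, M ‖gradient u x‖ ∂(measOf Ω φ) ≤
        1 / 2 * ∫ x, M (D * θ * hessNormHS u x) ∂(measOf Ω φ)
          + 1 / 2 * ∫ x, M (D / θ * |u x|) ∂(measOf Ω φ) := by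
  obtain ⟨c, hc0, hc⟩ := hΔ
  have hnn : ∀ t, 0 ≤ t → 0 ≤ M t := hM.2.2.2.1
  set N : ℝ := (n : ℝ) with hN
  have hN0 : 0 ≤ N := Nat.cast_nonneg n
  -- `δ` makes the gradient terms in the integrated pointwise bound absorbable
  set δ : ℝ := 1 / (2 * (N + 1) * (2 + c)) with hδdef
  have hδ : 0 < δ := by positivity
  have hkδ : N * δ * (2 + c) ≤ 1 / 2 := by
    have : N * δ * (2 + c) = N / (2 * (N + 1)) := by rw [hδdef]; field_simp
    rw [this, div_le_div_iff₀ (by positivity) (by positivity)]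
    linarith
  -- `θ₀` makes the zero-order term of the Hardy inequality absorbable
  set θ₀ : ℝ := 1 / (2 * (N + 1) ^ 2 * (K₂ + 1)) with hθ₀
  have hθ₀pos : 0 < θ₀ := by positivity
  have hθ₀N : θ₀ * N ≤ 1 := by
    rw [hθ₀, div_mul_eq_mul_div, one_mul, div_le_one (by positivity)]
    nlinarith [mul_nonneg hN0 hN0, mul_nonneg (mul_nonneg hN0 hN0) hK₂.le, mul_nonneg hN0 hK₂.le]
  have hθ₀K : N * K₂ * (θ₀ * N) ≤ 1 / 2 := by
    have : N * K₂ * (θ₀ * N) = N ^ 2 * K₂ / (2 * (N + 1) ^ 2 * (K₂ + 1)) := by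
      rw [hθ₀]; field_simp
    rw [this, div_le_div_iff₀ (by positivity) (by positivity)]
    nlinarith [mul_nonneg hN0 hN0, mul_nonneg (mul_nonneg hN0 hN0) hK₂.le, mul_nonneg hN0 hK₂.le]
  set D₁ : ℝ := 4 + 4 * N * K₁ with hD₁
  have hD₁1 : 1 ≤ D₁ := by
    have : 0 ≤ 4 * N * K₁ := by positivity
    linarith
  refine ⟨D₁ * (N + 1) + 4 / δ, by positivity, θ₀, hθ₀pos, fun θ hθ hθle u hu => ?_⟩
  set D := D₁ * (N + 1) + 4 / δ with hD
  have hH0 := hessNormHS_nonneg u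
  have hHc := hessNormHS_continuous hu
  have hHz : ∀ x, x ∉ tsupport u → hessNormHS u x = 0 := fun x hx => hessNormHS_eq_zero hu hx
  have hgc := hu.gradient_contDiff.continuous.norm
  have hgz : ∀ x, x ∉ tsupport u → ‖gradient u x‖ = 0 := fun x hx => by
    simp [gradient_eq_zero hx]
  have huc := hu.1.continuous.abs
  have huz : ∀ x, x ∉ tsupport u → |u x| = 0 := fun x hx => by simp [eq_zero_of_notMem hx]
  have iM : ∀ {f : E n → ℝ} (_ : Continuous f) (_ : ∀ x, 0 ≤ f x)
      (_ : ∀ x, x ∉ tsupport u → f x = 0) (a : ℝ) (_ : 0 ≤ a),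
      Integrable (fun x => M (a * f x)) (measOf Ω φ) := fun hf hf0 hz a ha =>
    integrable_M hφ hM hu.2.1 hu.2.2 (continuous_const.mul hf) (fun x => mul_nonneg ha (hf0 x))
      (fun x hx => by rw [hz x hx, mul_zero])
  have iG : Integrable (fun x => M ‖gradient u x‖) (measOf Ω φ) :=
    integrable_M hφ hM hu.2.1 hu.2.2 hgc (fun x => norm_nonneg _) hgz
  have iH := iM hHc hH0 hHz
  have iU := iM huc (fun x => abs_nonneg _) huz
  have iP : Integrable (fun x => M (‖φ' x‖ * (θ * ‖gradient u x‖))) (measOf Ω φ) :=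
    integrable_M_weight hΩ hφ hφ' hM hu.2.1 hu.2.2 (continuous_const.mul hgc)
      (fun x => by positivity) (fun x hx => by rw [hgz x hx, mul_zero])
  have iU' : Integrable (fun x => M (|u x| / (θ * δ))) (measOf Ω φ) := by
    simpa only [div_eq_inv_mul] using iU (θ * δ)⁻¹ (by positivity)
  set J := ∫ x, M ‖gradient u x‖ ∂(measOf Ω φ) with hJ
  set A := ∫ x, M (θ * hessNormHS u x) ∂(measOf Ω φ) with hA
  set P := ∫ x, M (‖φ' x‖ * (θ * ‖gradient u x‖)) ∂(measOf Ω φ) with hP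
  set B := ∫ x, M (|u x| / (θ * δ)) ∂(measOf Ω φ) with hB
  set A' := ∫ x, M (θ * (N + 1) * hessNormHS u x) ∂(measOf Ω φ) with hA'
  have hJ0 : 0 ≤ J := integral_nonneg fun x => hnn _ (norm_nonneg _)
  have hA0 : 0 ≤ A := integral_nonneg fun x => hnn _ (mul_nonneg hθ.le (hH0 x))
  have hP0 : 0 ≤ P := integral_nonneg fun x => hnn _ (by positivity)
  have hB0 : 0 ≤ B := integral_nonneg fun x => hnn _ (by positivity)
  have step1 : J ≤ N * (δ * ((2 + c) * J + (1 + c) * A + P + (2 + c) * B)) := by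
    have hint : Integrable (fun x => δ * ((2 + c) * M ‖gradient u x‖
        + (1 + c) * M (θ * hessNormHS u x) + M (‖φ' x‖ * (θ * ‖gradient u x‖))
        + (2 + c) * M (|u x| / (θ * δ)))) (measOf Ω φ) :=
      (((iG.const_mul _).add ((iH θ hθ.le).const_mul _)).add iP |>.add
        (iU'.const_mul _)).const_mul _
    have := integral_M_gradient_le hΩ hφ hu hM hmono hc0 hc hint (by
      filter_upwards [hφ'] with x hx i
      exact pointwise_bound hu hM hmono hc0 hc hx hδ hθ i (by simp))
    have e1 := integral_add ((iG.const_mul (2 + c)).add ((iH θ hθ.le).const_mul (1 + c)) |>.add iP)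
      (iU'.const_mul (2 + c))
    have e2 := integral_add ((iG.const_mul (2 + c)).add ((iH θ hθ.le).const_mul (1 + c))) iP
    have e3 := integral_add (iG.const_mul (2 + c)) ((iH θ hθ.le).const_mul (1 + c))
    simp only [Pi.add_apply, integral_const_mul] at e1 e2 e3 this
    rw [e1, e2, e3] at this
    exact this
  have step2 : J ≤ A + P + B := by
    have hk0 : 0 ≤ N * δ := by positivity
    have h1 : N * δ * (1 + c) ≤ 1 / 2 := by linarith
    have h2 : N * δ ≤ 1 / 2 := by nlinarith
    have e : N * (δ * ((2 + c) * J + (1 + c) * A + P + (2 + c) * B)) =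
        N * δ * (2 + c) * J + N * δ * (1 + c) * A + N * δ * P + N * δ * (2 + c) * B := by ring
    rw [e] at step1
    have := mul_le_mul_of_nonneg_right hkδ hJ0
    have := mul_le_mul_of_nonneg_right h1 hA0
    have := mul_le_mul_of_nonneg_right h2 hP0
    have := mul_le_mul_of_nonneg_right hkδ hB0
    linarith
  have hθN : θ * N ≤ 1 := (mul_le_mul_of_nonneg_right hθle hN0).trans hθ₀N
  have step3 : P ≤ N * (K₁ * A' + K₂ * (θ * N * J)) := by
    have hw : ∀ i : Fin n, TestFun Ω (fun x => θ * N * pd i u x) := fun i =>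
      (hu.pd i).const_mul _
    have hsub : ∀ i : Fin n, tsupport (pd i u) ⊆ tsupport u := fun i =>
      tsupport_fderiv_apply_subset ℝ _
    have iw : ∀ i : Fin n,
        Integrable (fun x => M (‖φ' x‖ * |θ * N * pd i u x|)) (measOf Ω φ) := fun i =>
      integrable_M_weight hΩ hφ hφ' hM hu.2.1 hu.2.2 (hw i).1.continuous.abs
        (fun x => abs_nonneg _)
        (fun x hx => by simp [eq_zero_of_notMem (fun h => hx (hsub i h))])
    have hardy : ∀ i : Fin n, ∫ x, M (‖φ' x‖ * |θ * N * pd i u x|) ∂(measOf Ω φ) ≤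
        K₁ * A' + K₂ * (θ * N * J) := by
      intro i
      refine (hH1 _ (hw i)).trans ?_
      have e1 : ∫ x, M ‖gradient (fun x => θ * N * pd i u x) x‖ ∂(measOf Ω φ) ≤ A' := by
        refine integral_mono_of_nonneg (Eventually.of_forall fun x => hnn _ (norm_nonneg _))
          (iH (θ * (N + 1)) (by positivity)) (Eventually.of_forall fun x => ?_)
        refine M_mono hM (norm_nonneg _) ?_
        rw [norm_gradient_const_mul (hu.pd i), abs_of_nonneg (by positivity)]
        have := norm_gradient_pd_le hu i x
        gcongr
        linarith
      have e2 : ∫ x, M |θ * N * pd i u x| ∂(measOf Ω φ) ≤ θ * N * J := by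
        rw [hJ, ← integral_const_mul]
        refine integral_mono_of_nonneg (Eventually.of_forall fun x => hnn _ (abs_nonneg _))
          (iG.const_mul _) (Eventually.of_forall fun x => ?_)
        refine le_trans ?_ (M_smul_le hM (by positivity) hθN (norm_nonneg _))
        refine M_mono hM (abs_nonneg _) ?_
        rw [abs_mul, abs_of_nonneg (by positivity : 0 ≤ θ * N), ← gradient_apply]
        gcongr
        exact PiLp.norm_apply_le (gradient u x) i
      gcongr
    calc P ≤ ∫ x, ∑ i, M (‖φ' x‖ * |θ * N * pd i u x|) ∂(measOf Ω φ) := by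
          refine integral_mono_of_nonneg (Eventually.of_forall fun x => hnn _ (by positivity))
            (integrable_finsetSum _ fun i _ => iw i) (Eventually.of_forall fun x => ?_)
          have := M_norm_le_sum hM (a := ‖φ' x‖ * θ) (by positivity) (gradient u x)
          simp only [← mul_assoc] at this ⊢
          refine this.trans (le_of_eq (Finset.sum_congr rfl fun i _ => ?_))
          rw [gradient_apply, abs_mul, abs_of_nonneg (by positivity : 0 ≤ θ * N)]
          congr 1
          ring
      _ = ∑ i, ∫ x, M (‖φ' x‖ * |θ * N * pd i u x|) ∂(measOf Ω φ) :=
          integral_finsetSum _ fun i _ => iw i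
      _ ≤ ∑ _i : Fin n, (K₁ * A' + K₂ * (θ * N * J)) := Finset.sum_le_sum fun i _ => hardy i
      _ = _ := by
          rw [Finset.sum_const, Finset.card_univ, Fintype.card_fin, nsmul_eq_mul]
  have hAA' : A ≤ A' := by
    refine integral_mono (iH θ hθ.le) (iH (θ * (N + 1)) (by positivity)) fun x => ?_
    refine M_mono hM (mul_nonneg hθ.le (hH0 x)) (mul_le_mul_of_nonneg_right ?_ (hH0 x))
    nlinarith
  have step4 : J ≤ 1 / 2 * (D₁ * A') + 1 / 2 * (4 * B) := by
    have h1 : N * K₂ * (θ * N) ≤ 1 / 2 := by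
      refine le_trans ?_ hθ₀K
      gcongr
    have h2 := mul_le_mul_of_nonneg_right h1 hJ0
    have h3 : J ≤ 2 * A' + 2 * (N * K₁ * A') + 2 * B := by nlinarith
    rw [hD₁]; linarith
  have fin1 : D₁ * A' ≤ ∫ x, M (D * θ * hessNormHS u x) ∂(measOf Ω φ) := by
    rw [hA', ← integral_const_mul]
    refine integral_mono ((iH (θ * (N + 1)) (by positivity)).const_mul _)
      (iH (D * θ) (by positivity)) fun x => ?_
    have hx := hH0 x
    refine (le_M_smul hM hD₁1 (by positivity)).trans (M_mono hM (by positivity) ?_)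
    rw [← mul_assoc]
    refine mul_le_mul_of_nonneg_right ?_ hx
    have : 0 ≤ 4 / δ * θ := by positivity
    rw [hD]; linarith
  have fin2 : 4 * B ≤ ∫ x, M (D / θ * |u x|) ∂(measOf Ω φ) := by
    rw [hB, ← integral_const_mul]
    refine integral_mono (iU'.const_mul _) (iU (D / θ) (by positivity)) fun x => ?_
    refine (le_M_smul hM (by norm_num) (by positivity)).trans (M_mono hM (by positivity) ?_)
    have e : 4 * (|u x| / (θ * δ)) = (4 / δ) / θ * |u x| := by field_simp
    rw [e]
    gcongr
    have : 0 ≤ D₁ * (N + 1) := by positivity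
    rw [hD]; linarith
  linarith

end Modular

/-! ### Luxemburg norms -/

section Lux

variable {α : Type*} [MeasurableSpace α] {μ : Measure α} {M : ℝ → ℝ}

lemma lux_bddBelow (M : ℝ → ℝ) (μ : Measure α) (f : α → ℝ) :
    BddBelow {K : ℝ | 0 < K ∧ ∫ x, M (|f x| / K) ∂μ ≤ 1} := ⟨0, fun _ hK => hK.1.le⟩

lemma luxNorm_nonneg (M : ℝ → ℝ) (μ : Measure α) (f : α → ℝ) : 0 ≤ luxNorm M μ f :=
  Real.sInf_nonneg fun _ hK => hK.1.le

lemma lux_nonempty (hM : IsNFunction M) {f : α → ℝ} (hf : Integrable (fun x => M |f x|) μ) :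
    {K : ℝ | 0 < K ∧ ∫ x, M (|f x| / K) ∂μ ≤ 1}.Nonempty := by
  set I := ∫ x, M |f x| ∂μ
  have hK : 0 < max 1 I := lt_max_of_lt_left one_pos
  refine ⟨max 1 I, hK, ?_⟩
  calc ∫ x, M (|f x| / max 1 I) ∂μ ≤ ∫ x, (max 1 I)⁻¹ * M |f x| ∂μ := by
        refine integral_mono_of_nonneg
          (Eventually.of_forall fun x => hM.2.2.2.1 _ (by positivity))
          (hf.const_mul _) (Eventually.of_forall fun x => ?_)
        simp only [div_eq_inv_mul]
        exact M_smul_le hM (by positivity) (inv_le_one_of_one_le₀ (le_max_left _ _))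
          (abs_nonneg _)
    _ = (max 1 I)⁻¹ * I := integral_const_mul _ _
    _ ≤ (max 1 I)⁻¹ * max 1 I := by gcongr; exact le_max_right _ _
    _ = 1 := inv_mul_cancel₀ hK.ne'

lemma exists_lt_lux (hM : IsNFunction M) {f : α → ℝ} (hf : Integrable (fun x => M |f x|) μ)
    {ε : ℝ} (hε : 0 < ε) :
    ∃ K, 0 < K ∧ ∫ x, M (|f x| / K) ∂μ ≤ 1 ∧ K < luxNorm M μ f + ε := by
  obtain ⟨K, hK, hlt⟩ := exists_lt_of_csInf_lt (lux_nonempty hM hf)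
    (lt_add_of_pos_right (luxNorm M μ f) hε)
  exact ⟨K, hK.1, hK.2, hlt⟩

end Lux

/-- The choice `θ = min(θ₀, √(b/a))` of the scale. -/
lemma exists_scale {a b θ₀ : ℝ} (ha : 0 < a) (hb : 0 < b) (hθ₀ : 0 < θ₀) :
    ∃ θ, 0 < θ ∧ θ ≤ θ₀ ∧ max (θ * a) (b / θ) ≤ Real.sqrt (a * b) + b / θ₀ := by
  have hq : 0 < Real.sqrt (b / a) := Real.sqrt_pos.2 (by positivity)
  rcases le_total (Real.sqrt (b / a)) θ₀ with h | h
  · refine ⟨_, hq, h, ?_⟩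
    have h1 : Real.sqrt (b / a) ^ 2 = b / a := Real.sq_sqrt (by positivity)
    have h2 : Real.sqrt (b / a) * a = Real.sqrt (a * b) := by
      symm
      rw [Real.sqrt_eq_iff_mul_self_eq (by positivity) (by positivity)]
      symm
      calc Real.sqrt (b / a) * a * (Real.sqrt (b / a) * a) = Real.sqrt (b / a) ^ 2 * a ^ 2 := by
            ring
        _ = a * b := by rw [h1]; field_simp
    have h3 : b / Real.sqrt (b / a) = Real.sqrt (b / a) * a := by
      rw [div_eq_iff hq.ne']
      calc b = b / a * a := by field_simp
        _ = Real.sqrt (b / a) ^ 2 * a := by rw [h1]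
        _ = _ := by ring
    rw [h3, max_self, h2]
    have : 0 < b / θ₀ := by positivity
    linarith
  · refine ⟨θ₀, hθ₀, le_rfl, ?_⟩
    have h1 : θ₀ ^ 2 ≤ b / a := by
      rw [← Real.sqrt_le_sqrt_iff (by positivity), Real.sqrt_sq hθ₀.le]; exact h
    have h2 : θ₀ * a ≤ b / θ₀ := by
      rw [le_div_iff₀ ha] at h1
      rw [le_div_iff₀ hθ₀]
      linarith
    rw [max_eq_right h2]
    linarith [Real.sqrt_nonneg (a * b)]

/-- Theorem 3.7(2): the case `P = Q = M`; the Hardy-type inequality for `M` implies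
the Gagliardo–Nirenberg inequality for the Luxemburg norm of `M`. -/
theorem statement6 {n : ℕ} (Ω : Set (E n)) (hΩ : IsOpen Ω)
    (M : ℝ → ℝ) (hM : CondM M)
    (hmono : MonotoneOn (fun l => M l / l ^ 2) (Ioi 0))
    (φ : E n → ℝ) (hφ : LocLipschitzOn Ω φ) (φ' : E n → E n)
    (hφ' : ∀ᵐ x ∂(volume.restrict Ω), HasGradientAt φ (φ' x) x)
    (K₁ K₂ : ℝ) (hK₁ : 0 < K₁) (hK₂ : 0 < K₂)
    (hH1 : ∀ u : E n → ℝ, TestFun Ω u →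
      ∫ x, M (‖φ' x‖ * |u x|) ∂(measOf Ω φ) ≤
        K₁ * ∫ x, M ‖gradient u x‖ ∂(measOf Ω φ)
          + K₂ * ∫ x, M |u x| ∂(measOf Ω φ)) :
    ∃ C₁ > (0:ℝ), ∃ C₂ > (0:ℝ), ∀ u : E n → ℝ, TestFun Ω u →
      luxNorm M (measOf Ω φ) (fun x => ‖gradient u x‖) ≤
        C₁ * Real.sqrt (luxNorm M (measOf Ω φ) (hessNormHS u) *
          luxNorm M (measOf Ω φ) u)
          + C₂ * luxNorm M (measOf Ω φ) u := by
  obtain ⟨D, hD, θ₀, hθ₀, hmod⟩ := modular_ineq hΩ hM.1 hM.2.2.1 hmono hφ hφ' hK₁ hK₂ hH1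
  refine ⟨D, hD, D / θ₀, by positivity, fun u hu => ?_⟩
  have hnn : ∀ t, 0 ≤ t → 0 ≤ M t := hM.1.2.2.2.1
  have hH0 := hessNormHS_nonneg u
  have hHc := hessNormHS_continuous hu
  have hHz : ∀ x, x ∉ tsupport u → hessNormHS u x = 0 := fun x hx => hessNormHS_eq_zero hu hx
  have hint : ∀ {f : E n → ℝ} (_ : Continuous f) (_ : ∀ x, x ∉ tsupport u → f x = 0) (K : ℝ),
      0 < K → Integrable (fun x => M (|f x| / K)) (measOf Ω φ) := fun hf hz K hK =>
    integrable_M hφ hM.1 hu.2.1 hu.2.2 (hf.abs.div_const K) (fun x => by positivity)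
      (fun x hx => by simp [hz x hx])
  have hint1 : ∀ {f : E n → ℝ} (_ : Continuous f) (_ : ∀ x, x ∉ tsupport u → f x = 0),
      Integrable (fun x => M |f x|) (measOf Ω φ) := fun hf hz => by
    simpa using hint hf hz 1 one_pos
  have huz : ∀ x, x ∉ tsupport u → u x = 0 := fun x hx => eq_zero_of_notMem hx
  -- the inequality with admissible constants `a`, `b` in place of the two norms
  have key : ∀ a b : ℝ, 0 < a → 0 < b →
      ∫ x, M (|hessNormHS u x| / a) ∂(measOf Ω φ) ≤ 1 →
      ∫ x, M (|u x| / b) ∂(measOf Ω φ) ≤ 1 →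
      luxNorm M (measOf Ω φ) (fun x => ‖gradient u x‖) ≤
        D * Real.sqrt (a * b) + D / θ₀ * b := by
    intro a b ha hb hIa hIb
    obtain ⟨θ, hθ, hθle, hθmax⟩ := exists_scale ha hb hθ₀
    set k := D * max (θ * a) (b / θ) with hk
    have hk0 : 0 < k := mul_pos hD (lt_max_of_lt_left (by positivity))
    have hka : D * θ / k ≤ 1 / a := by
      rw [div_le_div_iff₀ hk0 ha, one_mul, hk, mul_assoc]
      gcongr
      exact le_max_left _ _
    have hkb : D / θ / k ≤ 1 / b := by
      rw [div_le_div_iff₀ hk0 hb, one_mul, hk, div_mul_eq_mul_div, mul_div_assoc]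
      gcongr
      exact le_max_right _ _
    have h1 := hmod θ hθ hθle _ (hu.const_mul k⁻¹)
    have e0 : ∫ x, M (|‖gradient u x‖| / k) ∂(measOf Ω φ) =
        ∫ x, M ‖gradient (fun x => k⁻¹ * u x) x‖ ∂(measOf Ω φ) := by
      refine integral_congr_ae (Eventually.of_forall fun x => ?_)
      simp only [norm_gradient_const_mul hu, abs_norm]
      rw [abs_of_pos (inv_pos.2 hk0), div_eq_inv_mul]
    have e1 : ∫ x, M (D * θ * hessNormHS (fun x => k⁻¹ * u x) x) ∂(measOf Ω φ) ≤ 1 := by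
      refine le_trans (integral_mono_of_nonneg (Eventually.of_forall fun x => hnn _ ?_)
        (hint hHc hHz a ha) (Eventually.of_forall fun x => ?_)) hIa
      · exact mul_nonneg (by positivity) (hessNormHS_nonneg _ _)
      · have hx := hH0 x
        refine M_mono hM.1 (mul_nonneg (by positivity) (hessNormHS_nonneg _ _)) ?_
        rw [hessNormHS_const_mul hu, abs_of_pos (inv_pos.2 hk0), abs_of_nonneg hx]
        calc D * θ * (k⁻¹ * hessNormHS u x) = D * θ / k * hessNormHS u x := by ring
          _ ≤ 1 / a * hessNormHS u x := by gcongr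
          _ = _ := by ring
    have e2 : ∫ x, M (D / θ * |k⁻¹ * u x|) ∂(measOf Ω φ) ≤ 1 := by
      refine le_trans (integral_mono_of_nonneg (Eventually.of_forall fun x => hnn _ ?_)
        (hint hu.1.continuous huz b hb) (Eventually.of_forall fun x => ?_)) hIb
      · positivity
      · refine M_mono hM.1 (by positivity) ?_
        rw [abs_mul, abs_of_pos (inv_pos.2 hk0)]
        calc D / θ * (k⁻¹ * |u x|) = D / θ / k * |u x| := by ring
          _ ≤ 1 / b * |u x| := by gcongr
          _ = _ := by ring
    calc luxNorm M (measOf Ω φ) (fun x => ‖gradient u x‖) ≤ k :=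
          csInf_le (lux_bddBelow _ _ _) ⟨hk0, by rw [e0]; linarith⟩
      _ ≤ D * (Real.sqrt (a * b) + b / θ₀) := by rw [hk]; gcongr
      _ = _ := by ring
  set a := luxNorm M (measOf Ω φ) (hessNormHS u) with ha
  set b := luxNorm M (measOf Ω φ) u with hb
  have ha0 : 0 ≤ a := luxNorm_nonneg _ _ _
  have hb0 : 0 ≤ b := luxNorm_nonneg _ _ _
  have hε : ∀ ε > (0:ℝ), luxNorm M (measOf Ω φ) (fun x => ‖gradient u x‖) ≤
      D * Real.sqrt ((a + ε) * (b + ε)) + D / θ₀ * (b + ε) := by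
    intro ε hε
    obtain ⟨a', ha', hIa, hlta⟩ := exists_lt_lux hM.1 (hint1 hHc hHz) hε
    obtain ⟨b', hb', hIb, hltb⟩ := exists_lt_lux hM.1 (hint1 hu.1.continuous huz) hε
    refine (key a' b' ha' hb' hIa hIb).trans ?_
    gcongr
  have hcont : Continuous (fun ε : ℝ =>
      D * Real.sqrt ((a + ε) * (b + ε)) + D / θ₀ * (b + ε)) := by fun_prop
  have hlim := (hcont.tendsto 0).mono_left (nhdsWithin_le_nhds (s := Ioi 0))
  simpa using ge_of_tendsto hlim (eventually_mem_nhdsWithin.mono hε)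
end
end

section
/- Let p > 1 and let μ(dx) = e^{-φ(x)} dx be a Radon measure on (0,∞), where φ : (0,∞) → ℝ is locally Lipschitz. Assume the Muckenhoupt condition: sup_{r>0} ( ∫_r^∞ |φ'(x)|^p e^{-φ(x)} dx )^{1/p} · ( ∫_0^r e^{φ(x)/(p-1)} dx )^{1-1/p} < ∞. Let M be an N-function satisfying condition (M), and let Q be another N-function such that condition (Y) is satisfied for M, P(λ) = λ^p, and Q. Then there exist constants K₁, K₂ > 0, independent of u, such that for every u ∈ C₀^∞((0,∞)): ∫_{(0,∞)} M(|u'|) dμ ≤ K₁·∫_{(0,∞)} |u''|^p dμ + K₂·∫_{(0,∞)} Q(|u|) dμ. -/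
/-!
Write `G s = M |s| / s` and `F = u · G(u') · e^{-φ}`. As `u` has compact support in `(0,∞)`, `F` is
absolutely continuous on an interval `[a,b] ⊆ (0,∞)` with `supp u ⊆ (a,b)`, and it vanishes at both
ends, so `∫ F' = 0`. Almost everywhere
`F' = e^{-φ} (M |u'| + u · G'(u') · u'' - u · G(u') · φ')`.
By the Δ₂-condition `|G' s| ≤ c · M |s| / s²`, and `|G(u')| = (M |u'| / |u'|²) · |u'|`; hence (Y), with
its second variable rescaled, bounds each of the last two terms below by
`-(M |u'| + const · |·|^p + Q |u|) / 4`, where the `p`-th power is that of `u''`, respectively `u' φ'`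
(`deriv_product_lower_bound`). Integrating and absorbing gives
`∫ M |u'| dμ ≤ K ∫ |u''|^p dμ + K' ∫ |u' φ'|^p dμ + ∫ Q |u| dμ`.
The middle term is at most `const · ∫ |u''|^p dμ` by Hardy's inequality with weights, which the
Muckenhoupt condition supplies (`hardy_weight`, `hardy_deriv`).

That `F` is absolutely continuous rests on `G` being Lipschitz on bounded sets
(`lipschitz_div_self`), where the bound on `M'(λ)/λ` near zero enters. On `{u' = 0}`, where `G` need
not be differentiable, `u'' = 0` almost everywhere (`ae_deriv_eq_zero_of_eq_zero`).

Hardy's inequality is proved for two measures: if `ω (x,∞)^{1/p} · ν (-∞,x)^{1/q} ≤ B` for all `x`,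
then `∫ (∫_{y<x} g dν)^p dω ≤ const · B^p · ∫ g^p dν` (`hardy`). The inner integral is estimated by
Hölder's inequality with the weight `ν (-∞,y)^{1/(pq)}`, and Tonelli's theorem reverses the order of
integration. Both steps need `∫_{y<x} ν (-∞,y)^{-a} dν ≤ ν (-∞,x)^{1-a} / (1-a)` for `0 < a < 1` (and
its mirror image for `ω`), which follows from the layer-cake formula and
`ν {y | ν (-∞,y) < t} ≤ t`. It is applied with `ν = e^{φ/(p-1)} dx` and `ω = |φ'|^p e^{-φ} dx`.
-/

open MeasureTheory Filter Set ENNReal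

noncomputable section

/-- `u ∈ C₀^∞((0,∞))`: smooth and compactly supported inside `(0,∞)`. -/
def TestFun1 (u : ℝ → ℝ) : Prop :=
  ContDiff ℝ (⊤ : ℕ∞) u ∧ HasCompactSupport u ∧ tsupport u ⊆ Ioi 0

/-- The measure `μ(dx) = e^{-φ(x)} dx` on `(0,∞)`. -/
def measOf1 (φ : ℝ → ℝ) : Measure ℝ :=
  (volume.restrict (Ioi 0)).withDensity fun x => ENNReal.ofReal (Real.exp (-φ x))

/-- The Muckenhoupt condition (3.6) for the weight `e^{-φ}` on `(0,∞)`: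
`sup_{r>0} (∫_r^∞ |φ'|^p e^{-φ})^{1/p} (∫_0^r e^{φ/(p-1)})^{1-1/p} < ∞`. -/
def Muckenhoupt (p : ℝ) (φ φd : ℝ → ℝ) : Prop :=
  ∃ S : ℝ≥0∞, S ≠ ⊤ ∧ ∀ r > (0:ℝ),
    (∫⁻ x in Ioi r, ENNReal.ofReal (|φd x| ^ p * Real.exp (-φ x))) ^ (1 / p) *
      (∫⁻ x in Ioo (0:ℝ) r, ENNReal.ofReal (Real.exp (φ x / (p - 1)))) ^ (1 - 1 / p) ≤ S

/-! ### Negative powers of distribution functions -/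

/-- If the distribution of `G` under `ν` satisfies `ν {G < t} ≤ t`, then `∫ G^{-a} dν` is at most what
it is for the identity function on `(0, ν univ)` with Lebesgue measure. Proved by the layer-cake
formula. -/
lemma lintegral_rpow_neg_le {α : Type*} [MeasurableSpace α] (ν : Measure α)
    (hT : ν univ ≠ ⊤) {G : α → ℝ≥0∞} (hG : Measurable G) (h : ∀ t, ν {x | G x < t} ≤ t)
    {a : ℝ} (ha : 0 < a) (ha1 : a < 1) :
    ∫⁻ x, G x ^ (-a) ∂ν ≤ ENNReal.ofReal (1 / (1 - a)) * ν univ ^ (1 - a) := by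
  rcases eq_or_ne (ν univ) 0 with h0 | h0
  · rw [Measure.measure_univ_eq_zero.mp h0]; simp
  have hz : ν {x | G x = 0} = 0 := by
    refine le_antisymm (ENNReal.le_of_forall_pos_le_add fun ε hε _ => ?_) zero_le
    refine (measure_mono fun x hx => ?_).trans ((h ε).trans (by simp))
    have : G x = 0 := hx
    simpa [this] using hε
  set f : α → ℝ := fun x => (G x ^ (-a)).toReal with hf
  have hfG : ∫⁻ x, G x ^ (-a) ∂ν = ∫⁻ x, ENNReal.ofReal (f x) ∂ν := by
    refine lintegral_congr_ae ?_
    have : ∀ᵐ x ∂ν, G x ≠ 0 := by rw [ae_iff]; simpa using hz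
    filter_upwards [this] with x hx
    rw [hf, ENNReal.ofReal_toReal]
    simp [ENNReal.rpow_eq_top_iff, hx, ha.le]
  rw [hfG, lintegral_eq_lintegral_meas_lt ν (Eventually.of_forall fun x => ENNReal.toReal_nonneg)
    (by fun_prop)]
  set T := (ν univ).toReal with hTdef
  have hTpos : 0 < T := ENNReal.toReal_pos h0 hT
  have hTo : ν univ = ENNReal.ofReal T := (ENNReal.ofReal_toReal hT).symm
  set S := T ^ (-a) with hS
  have hSpos : 0 < S := Real.rpow_pos_of_pos hTpos _
  -- below level `S` the trivial bound `ν univ` is used, above it `{t < G^{-a}} = {G < t^{-1/a}}`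
  have hlev : ∀ t ∈ Ioi S, ν {x | t < f x} ≤ ENNReal.ofReal (t ^ (-1 / a)) := by
    intro t ht
    have ht0 : 0 < t := hSpos.trans ht
    refine (measure_mono fun x hx => ?_).trans (h _)
    have hx : t < (G x ^ (-a)).toReal := hx
    have hG0 : G x ≠ 0 := by
      intro h0; rw [h0, ENNReal.zero_rpow_of_neg (by linarith)] at hx; simp at hx; linarith
    have hGt : G x ≠ ⊤ := by
      intro h0; rw [h0, ENNReal.top_rpow_of_neg (by linarith)] at hx; simp at hx; linarith
    have hgp : 0 < (G x).toReal := ENNReal.toReal_pos hG0 hGt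
    rw [← ENNReal.toReal_rpow] at hx
    show G x < _
    rw [ENNReal.lt_ofReal_iff_toReal_lt hGt]
    have := Real.rpow_lt_rpow_of_neg ht0 hx (z := -1 / a) (div_neg_of_neg_of_pos (by norm_num) ha)
    rwa [← Real.rpow_mul hgp.le, show -a * (-1 / a) = 1 by field_simp, Real.rpow_one] at this
  have hexp : -1 / a < -1 := by
    rw [div_lt_iff₀ ha]; linarith
  rw [← Ioc_union_Ioi_eq_Ioi hSpos.le]
  calc _ ≤ (∫⁻ t in Ioc 0 S, ν {x | t < f x}) + ∫⁻ t in Ioi S, ν {x | t < f x} :=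
        lintegral_union_le _ _ _
    _ ≤ (∫⁻ t in Ioc 0 S, ν univ) + ∫⁻ t in Ioi S, ENNReal.ofReal (t ^ (-1 / a)) := by
        gcongr ?_ + ?_
        · exact lintegral_mono fun t => measure_mono (subset_univ _)
        · exact setLIntegral_mono' measurableSet_Ioi hlev
    _ = ENNReal.ofReal (T * S) + ENNReal.ofReal (-S ^ (-1 / a + 1) / (-1 / a + 1)) := by
        congr 1
        · rw [hTo, setLIntegral_const, Real.volume_Ioc, sub_zero, ENNReal.ofReal_mul hTpos.le]
        · rw [← integral_Ioi_rpow_of_lt hexp hSpos,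
            ofReal_integral_eq_lintegral_ofReal (integrableOn_Ioi_rpow_of_lt hexp hSpos)]
          filter_upwards [ae_restrict_mem measurableSet_Ioi] with t ht
          exact Real.rpow_nonneg (hSpos.le.trans (le_of_lt ht)) _
    _ = ENNReal.ofReal (1 / (1 - a)) * ν univ ^ (1 - a) := by
        rw [hTo, ENNReal.ofReal_rpow_of_pos hTpos, ← ENNReal.ofReal_mul (by
          have : 0 < 1 - a := by linarith
          positivity), ← ENNReal.ofReal_add (by positivity)]
        · congr 1
          have e1 : T * S = T ^ (1 - a) := by
            rw [hS, sub_eq_add_neg, Real.rpow_add hTpos, Real.rpow_one]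
          have e2 : S ^ (-1 / a + 1) = T ^ (1 - a) := by
            rw [hS, ← Real.rpow_mul hTpos.le]; congr 1; field_simp; ring
          rw [e1, e2]
          have : 1 - a ≠ 0 := by linarith
          have : -1 + a ≠ 0 := by linarith
          field_simp
          ring
        · apply div_nonneg_of_nonpos
          · have := Real.rpow_nonneg hSpos.le (-1 / a + 1); linarith
          · linarith

/-- The distribution function of an atomless measure, seen as a random variable, satisfies
`ν {V < t} ≤ t`: a compact subset of `{V < t}` lies to the left of its own maximum. -/
lemma measure_Iio_lt_le (ν : Measure ℝ) [IsFiniteMeasure ν] [NullSingletonClass ν] (t : ℝ≥0∞) :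
    ν {x | ν (Iio x) < t} ≤ t := by
  have hmono : Monotone fun x => ν (Iio x) := fun x y hxy => measure_mono (Iio_subset_Iio hxy)
  have hm : MeasurableSet {x | ν (Iio x) < t} := measurableSet_lt hmono.measurable measurable_const
  rw [hm.measure_eq_iSup_isCompact_of_ne_top (measure_ne_top _ _)]
  refine iSup₂_le fun K hK => iSup_le fun hKc => ?_
  rcases K.eq_empty_or_nonempty with rfl | hne
  · simp
  have hs := hK (hKc.sSup_mem hne)
  calc ν K ≤ ν (Iic (sSup K)) := measure_mono fun x hx => le_csSup hKc.bddAbove hx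
    _ = ν (Iio (sSup K)) := measure_congr Iio_ae_eq_Iic.symm
    _ ≤ t := le_of_lt hs

lemma measure_Ioi_lt_le (ν : Measure ℝ) [IsFiniteMeasure ν] [NullSingletonClass ν] (t : ℝ≥0∞) :
    ν {x | ν (Ioi x) < t} ≤ t := by
  have hmono : Antitone fun x => ν (Ioi x) := fun x y hxy => measure_mono (Ioi_subset_Ioi hxy)
  have hm : MeasurableSet {x | ν (Ioi x) < t} := measurableSet_lt hmono.measurable measurable_const
  rw [hm.measure_eq_iSup_isCompact_of_ne_top (measure_ne_top _ _)]
  refine iSup₂_le fun K hK => iSup_le fun hKc => ?_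
  rcases K.eq_empty_or_nonempty with rfl | hne
  · simp
  have hs := hK (hKc.sInf_mem hne)
  calc ν K ≤ ν (Ici (sInf K)) := measure_mono fun x hx => csInf_le hKc.bddBelow hx
    _ = ν (Ioi (sInf K)) := measure_congr Ioi_ae_eq_Ici.symm
    _ ≤ t := le_of_lt hs

lemma setLIntegral_Iio_rpow_neg_le (ν : Measure ℝ) [NullSingletonClass ν] {a : ℝ} (ha : 0 < a)
    (ha1 : a < 1) {x : ℝ} (hx : ν (Iio x) ≠ ⊤) :
    ∫⁻ y in Iio x, ν (Iio y) ^ (-a) ∂ν ≤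
      ENNReal.ofReal (1 / (1 - a)) * ν (Iio x) ^ (1 - a) := by
  have : IsFiniteMeasure (ν.restrict (Iio x)) := ⟨by simpa using hx.lt_top⟩
  have hmono : Monotone fun y => ν.restrict (Iio x) (Iio y) :=
    fun y z hyz => measure_mono (Iio_subset_Iio hyz)
  have := lintegral_rpow_neg_le (ν.restrict (Iio x)) (measure_ne_top _ _) hmono.measurable
    (measure_Iio_lt_le _) ha ha1
  rw [Measure.restrict_apply_univ] at this
  refine le_of_eq_of_le (setLIntegral_congr_fun measurableSet_Iio fun y hy => ?_) this
  rw [Measure.restrict_apply measurableSet_Iio, Iio_inter_Iio, min_eq_left (le_of_lt hy)]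

lemma setLIntegral_Ioi_rpow_neg_le (ν : Measure ℝ) [NullSingletonClass ν] {a : ℝ} (ha : 0 < a)
    (ha1 : a < 1) (x : ℝ) :
    ∫⁻ y in Ioi x, ν (Ioi y) ^ (-a) ∂ν ≤
      ENNReal.ofReal (1 / (1 - a)) * ν (Ioi x) ^ (1 - a) := by
  have h1a : 0 < 1 - a := by linarith
  by_cases hx : ν (Ioi x) = ⊤
  · rw [hx, ENNReal.top_rpow_of_pos h1a, ENNReal.mul_top (by simpa using by linarith)]
    exact le_top
  have : IsFiniteMeasure (ν.restrict (Ioi x)) := ⟨by simpa using Ne.lt_top hx⟩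
  have hmono : Antitone fun y => ν.restrict (Ioi x) (Ioi y) :=
    fun y z hyz => measure_mono (Ioi_subset_Ioi hyz)
  have := lintegral_rpow_neg_le (ν.restrict (Ioi x)) (measure_ne_top _ _) hmono.measurable
    (measure_Ioi_lt_le _) ha ha1
  rw [Measure.restrict_apply_univ] at this
  refine le_of_eq_of_le (setLIntegral_congr_fun measurableSet_Ioi fun y hy => ?_) this
  rw [Measure.restrict_apply measurableSet_Ioi, Ioi_inter_Ioi, max_eq_left (le_of_lt hy)]

/-! ### Hardy's inequality for a pair of measures -/

/-- Hölder's inequality for `g · V^{1/(pq)}` and `V^{-1/(pq)}`, where `V y = ν (-∞,y)`. -/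
lemma hardy_pointwise (ν : Measure ℝ) [NullSingletonClass ν] {p q : ℝ} (hpq : p.HolderConjugate q)
    (hV : ∀ x, ν (Iio x) ≠ ⊤) {g : ℝ → ℝ≥0∞} (hg : AEMeasurable g ν) (x : ℝ) :
    (∫⁻ y in Iio x, g y ∂ν) ^ p ≤ ENNReal.ofReal q ^ (p - 1) * ν (Iio x) ^ ((p - 1) / q) *
      ∫⁻ y in Iio x, g y ^ p * ν (Iio y) ^ (1 / q) ∂ν := by
  have hp := hpq.pos
  have hq := hpq.symm.pos
  have hp1 := hpq.lt
  have hinv := hpq.inv_add_inv_eq_one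
  have hpm : p / q = p - 1 := by
    rw [div_eq_iff hq.ne']; exact hpq.sub_one_mul_conj.symm
  have h1p : 1 - 1 / p = 1 / q := by rw [one_div, one_div]; linarith
  have hVm : Measurable fun y => ν (Iio y) :=
    Monotone.measurable fun y z hyz => measure_mono (Iio_subset_Iio hyz)
  have key := setLIntegral_Iio_rpow_neg_le ν (a := 1 / p) (by positivity)
    (by rw [div_lt_one hp]; exact hp1) (hV x)
  rw [h1p, one_div_one_div] at key
  have hne : ∀ᵐ y ∂ν.restrict (Iio x), ν (Iio y) ≠ 0 := by
    have hfin : ∫⁻ y in Iio x, ν (Iio y) ^ (-(1 / p)) ∂ν ≠ ⊤ :=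
      ne_top_of_le_ne_top (ENNReal.mul_ne_top ENNReal.ofReal_ne_top
        (ENNReal.rpow_ne_top_of_nonneg (by positivity) (hV x))) key
    filter_upwards [ae_lt_top (hVm.pow_const _) hfin] with y hy h0
    rw [h0, ENNReal.zero_rpow_of_neg (by simpa using hp)] at hy
    exact lt_irrefl _ hy
  have hsplit : ∫⁻ y in Iio x, g y ∂ν = ∫⁻ y in Iio x,
      ((fun y => g y * ν (Iio y) ^ (1 / (p * q))) * fun y => ν (Iio y) ^ (-(1 / (p * q)))) y ∂ν := by
    refine lintegral_congr_ae ?_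
    filter_upwards [hne] with y hy
    rw [Pi.mul_apply, mul_assoc, ← ENNReal.rpow_add _ _ hy (hV y)]
    simp
  have hold := ENNReal.lintegral_mul_le_Lp_mul_Lq (ν.restrict (Iio x)) hpq
    (f := fun y => g y * ν (Iio y) ^ (1 / (p * q))) (g := fun y => ν (Iio y) ^ (-(1 / (p * q))))
    (hg.restrict.mul (hVm.pow_const _).aemeasurable) (hVm.pow_const _).aemeasurable
  rw [← hsplit] at hold
  have e1 : ∀ y, (g y * ν (Iio y) ^ (1 / (p * q))) ^ p = g y ^ p * ν (Iio y) ^ (1 / q) := by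
    intro y
    rw [ENNReal.mul_rpow_of_nonneg _ _ hp.le, ← ENNReal.rpow_mul]
    congr 2; field_simp
  have e2 : ∀ y, (ν (Iio y) ^ (-(1 / (p * q)))) ^ q = ν (Iio y) ^ (-(1 / p)) := by
    intro y
    rw [← ENNReal.rpow_mul]
    congr 1; field_simp
  simp only [e1, e2] at hold
  calc (∫⁻ y in Iio x, g y ∂ν) ^ p
      ≤ ((∫⁻ y in Iio x, g y ^ p * ν (Iio y) ^ (1 / q) ∂ν) ^ (1 / p) *
          (∫⁻ y in Iio x, ν (Iio y) ^ (-(1 / p)) ∂ν) ^ (1 / q)) ^ p :=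
        ENNReal.rpow_le_rpow hold hp.le
    _ = (∫⁻ y in Iio x, ν (Iio y) ^ (-(1 / p)) ∂ν) ^ (p - 1) *
          ∫⁻ y in Iio x, g y ^ p * ν (Iio y) ^ (1 / q) ∂ν := by
        rw [ENNReal.mul_rpow_of_nonneg _ _ hp.le, ← ENNReal.rpow_mul, ← ENNReal.rpow_mul,
          one_div_mul_cancel hp.ne', ENNReal.rpow_one, mul_comm, one_div_mul_eq_div, hpm]
    _ ≤ (ENNReal.ofReal q * ν (Iio x) ^ (1 / q)) ^ (p - 1) *
          ∫⁻ y in Iio x, g y ^ p * ν (Iio y) ^ (1 / q) ∂ν := by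
        gcongr
    _ = _ := by
        rw [ENNReal.mul_rpow_of_nonneg _ _ (by linarith), ← ENNReal.rpow_mul, one_div_mul_eq_div]

/-- The factor multiplying `g y ^ p` once the order of integration has been reversed is bounded
uniformly in `y`: replace `V^{1/q}` by `B · W^{-1/p}`, where `V x = ν (-∞,x)` and `W x = ω (x,∞)`,
and integrate the resulting power of `W` against `ω`. -/
lemma hardy_tail (ν ω : Measure ℝ) [NullSingletonClass ω] {p q : ℝ} (hpq : p.HolderConjugate q)
    {B : ℝ≥0∞} (hBt : B ≠ ⊤)
    (hB : ∀ x, ω (Ioi x) ^ (1 / p) * ν (Iio x) ^ (1 / q) ≤ B) (y : ℝ) :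
    ν (Iio y) ^ (1 / q) * ∫⁻ x in Ioi y, ν (Iio x) ^ ((p - 1) / q) ∂ω ≤
      ENNReal.ofReal p * B ^ p := by
  have hp := hpq.pos
  have hq := hpq.symm.pos
  have hp1 := hpq.lt
  have hinv := hpq.inv_add_inv_eq_one
  have hpm : p / q = p - 1 := by
    rw [div_eq_iff hq.ne']; exact hpq.sub_one_mul_conj.symm
  have h1q : 1 - 1 / q = 1 / p := by rw [one_div, one_div]; linarith
  have hip : 0 < 1 / p := by positivity
  have hiq : 0 < 1 / q := by positivity
  by_cases hW : ω (Ioi y) = ⊤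
  · have h0 : ν (Iio y) ^ (1 / q) = 0 := by
      by_contra h
      have := hB y
      rw [hW, ENNReal.top_rpow_of_pos hip, ENNReal.top_mul h] at this
      exact hBt (top_le_iff.mp this)
    rw [h0, zero_mul]
    exact zero_le
  have hWm : Measurable fun x => ω (Ioi x) :=
    Antitone.measurable fun y z hyz => measure_mono (Ioi_subset_Ioi hyz)
  have key := setLIntegral_Ioi_rpow_neg_le ω (a := 1 / q) hiq
    (by rw [div_lt_one hq]; exact hpq.symm.lt) y
  rw [h1q, one_div_one_div] at key
  have hne : ∀ᵐ x ∂ω.restrict (Ioi y), ω (Ioi x) ≠ 0 := by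
    have hfin : ∫⁻ x in Ioi y, ω (Ioi x) ^ (-(1 / q)) ∂ω ≠ ⊤ :=
      ne_top_of_le_ne_top (ENNReal.mul_ne_top ENNReal.ofReal_ne_top
        (ENNReal.rpow_ne_top_of_nonneg hip.le hW)) key
    filter_upwards [ae_lt_top (hWm.pow_const _) hfin] with x hx h0
    rw [h0, ENNReal.zero_rpow_of_neg (by simpa using hq)] at hx
    exact lt_irrefl _ hx
  have hle : ∫⁻ x in Ioi y, ν (Iio x) ^ ((p - 1) / q) ∂ω ≤
      ∫⁻ x in Ioi y, B ^ (p - 1) * ω (Ioi x) ^ (-(1 / q)) ∂ω := by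
    refine lintegral_mono_ae ?_
    filter_upwards [hne, ae_restrict_mem measurableSet_Ioi] with x hx hxy
    have hxt : ω (Ioi x) ≠ ⊤ := ne_top_of_le_ne_top hW (measure_mono (Ioi_subset_Ioi (le_of_lt hxy)))
    have h1 : ν (Iio x) ^ (1 / q) ≤ B * ω (Ioi x) ^ (-(1 / p)) := by
      calc ν (Iio x) ^ (1 / q)
          = (ω (Ioi x) ^ (1 / p) * ν (Iio x) ^ (1 / q)) * ω (Ioi x) ^ (-(1 / p)) := by
            rw [mul_right_comm, ← ENNReal.rpow_add _ _ hx hxt]; simp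
        _ ≤ _ := by gcongr; exact hB x
    calc ν (Iio x) ^ ((p - 1) / q) = (ν (Iio x) ^ (1 / q)) ^ (p - 1) := by
          rw [← ENNReal.rpow_mul, one_div_mul_eq_div]
      _ ≤ (B * ω (Ioi x) ^ (-(1 / p))) ^ (p - 1) := ENNReal.rpow_le_rpow h1 (by linarith)
      _ = _ := by
          rw [ENNReal.mul_rpow_of_nonneg _ _ (by linarith), ← ENNReal.rpow_mul]
          congr 2
          rw [← hpm]; field_simp
  calc _ ≤ ν (Iio y) ^ (1 / q) * (B ^ (p - 1) * (ENNReal.ofReal p * ω (Ioi y) ^ (1 / p))) := by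
        gcongr
        refine hle.trans ?_
        rw [lintegral_const_mul _ (hWm.pow_const _)]
        gcongr
    _ = ENNReal.ofReal p * B ^ (p - 1) * (ω (Ioi y) ^ (1 / p) * ν (Iio y) ^ (1 / q)) := by ring
    _ ≤ ENNReal.ofReal p * B ^ (p - 1) * B := by gcongr; exact hB y
    _ = ENNReal.ofReal p * B ^ p := by
        have : B ^ p = B ^ (p - 1) * B := by
          conv_rhs => rw [← ENNReal.rpow_one B, ← ENNReal.rpow_mul, one_mul,
            ← ENNReal.rpow_add_of_nonneg _ _ (by linarith) zero_le_one]
          simp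
        rw [this, mul_assoc]

/-- Muckenhoupt's form of Hardy's inequality, for two atomless measures. -/
lemma hardy (ν ω : Measure ℝ) [SFinite ν] [SFinite ω] [NullSingletonClass ν] [NullSingletonClass ω]
    {p q : ℝ} (hpq : p.HolderConjugate q) {B : ℝ≥0∞} (hBt : B ≠ ⊤) (hV : ∀ x, ν (Iio x) ≠ ⊤)
    (hB : ∀ x, ω (Ioi x) ^ (1 / p) * ν (Iio x) ^ (1 / q) ≤ B)
    {g : ℝ → ℝ≥0∞} (hg : Measurable g) :
    ∫⁻ x, (∫⁻ y in Iio x, g y ∂ν) ^ p ∂ω ≤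
      ENNReal.ofReal q ^ (p - 1) * (ENNReal.ofReal p * B ^ p) * ∫⁻ y, g y ^ p ∂ν := by
  have hVm : Measurable fun y => ν (Iio y) :=
    Monotone.measurable fun y z hyz => measure_mono (Iio_subset_Iio hyz)
  set h : ℝ → ℝ≥0∞ := fun y => g y ^ p * ν (Iio y) ^ (1 / q) with hh
  have hhm : Measurable h := (hg.pow_const _).mul (hVm.pow_const _)
  set k : ℝ → ℝ≥0∞ := fun x => ν (Iio x) ^ ((p - 1) / q) with hk
  have hkm : Measurable k := hVm.pow_const _
  -- `k x · h y` on the half-plane `{y < x}`, where Tonelli's theorem is applied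
  set F : ℝ → ℝ → ℝ≥0∞ := fun x y => {z : ℝ × ℝ | z.2 < z.1}.indicator
    (fun z => k z.1 * h z.2) (x, y) with hF
  have hFm : Measurable (Function.uncurry F) := by
    have : Function.uncurry F = {z : ℝ × ℝ | z.2 < z.1}.indicator (fun z => k z.1 * h z.2) := by
      ext ⟨x, y⟩; rfl
    rw [this]
    exact ((hkm.comp measurable_fst).mul (hhm.comp measurable_snd)).indicator
      (measurableSet_lt measurable_snd measurable_fst)
  have hF1 : ∀ x, ∫⁻ y, F x y ∂ν = k x * ∫⁻ y in Iio x, h y ∂ν := by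
    intro x
    rw [← lintegral_const_mul _ hhm, ← lintegral_indicator measurableSet_Iio]
    rfl
  have hF2 : ∀ y, ∫⁻ x, F x y ∂ω = h y * ∫⁻ x in Ioi y, k x ∂ω := by
    intro y
    rw [← lintegral_const_mul _ hkm, ← lintegral_indicator measurableSet_Ioi]
    refine lintegral_congr fun x => ?_
    simp only [hF, indicator, mem_ofPred_eq, mem_Ioi, mul_comm]
  calc ∫⁻ x, (∫⁻ y in Iio x, g y ∂ν) ^ p ∂ω
      ≤ ∫⁻ x, ENNReal.ofReal q ^ (p - 1) * ∫⁻ y, F x y ∂ν ∂ω := by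
        refine lintegral_mono fun x => ?_
        rw [hF1, ← mul_assoc]
        exact hardy_pointwise ν hpq hV hg.aemeasurable x
    _ = ENNReal.ofReal q ^ (p - 1) * ∫⁻ y, ∫⁻ x, F x y ∂ω ∂ν := by
        rw [lintegral_const_mul _ hFm.lintegral_prod_right,
          lintegral_lintegral_swap hFm.aemeasurable]
    _ ≤ ENNReal.ofReal q ^ (p - 1) * ∫⁻ y, (ENNReal.ofReal p * B ^ p) * g y ^ p ∂ν := by
        gcongr with y
        rw [hF2, hh]
        simp only
        rw [mul_assoc, mul_comm]
        refine mul_le_mul_left ?_ _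
        exact hardy_tail ν ω hpq hBt hB y
    _ = _ := by
        rw [lintegral_const_mul _ (hg.pow_const _), ← mul_assoc]

/-! ### Hardy's inequality under the Muckenhoupt condition -/

/-- Hardy's inequality for the measure `μ = e^{-φ} dx` and the weight `|φ'|^p`: apply `hardy` to
`g = f · e^{-φ/(p-1)}`. If `∫_0^r e^{φ/(p-1)}` is infinite for some `r`, it is so for all `r > 0`, and
the Muckenhoupt condition then forces `φ' = 0` almost everywhere. -/
lemma hardy_weight {p : ℝ} (hp : 1 < p) {φ φd : ℝ → ℝ} (hφm : Measurable φ) (hφdm : Measurable φd)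
    (hφc : ContinuousOn φ (Ioi 0)) (hM : Muckenhoupt p φ φd) :
    ∃ C : ℝ≥0∞, C ≠ ⊤ ∧ ∀ f : ℝ → ℝ≥0∞, Measurable f →
      ∫⁻ x in Ioi 0, (∫⁻ y in Ioo 0 x, f y) ^ p *
          ENNReal.ofReal (|φd x| ^ p * Real.exp (-φ x)) ≤
        C * ∫⁻ y in Ioi 0, f y ^ p * ENNReal.ofReal (Real.exp (-φ y)) := by
  obtain ⟨S, hS, hM⟩ := hM
  have hp0 : 0 < p := by linarith
  have hpq := Real.HolderConjugate.conjExponent hp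
  set q := p.conjExponent with hq
  have h1p : 1 - 1 / p = 1 / q := by
    have := hpq.inv_add_inv_eq_one; rw [one_div, one_div]; linarith
  set σ : ℝ → ℝ≥0∞ := fun x => ENNReal.ofReal (Real.exp (φ x / (p - 1))) with hσ
  have hσm : Measurable σ := by fun_prop
  set w : ℝ → ℝ≥0∞ := fun x => ENNReal.ofReal (|φd x| ^ p * Real.exp (-φ x)) with hw
  have hwm : Measurable w := by fun_prop
  have hσ0 : ∀ x, σ x ≠ 0 := fun x => by simp [hσ, Real.exp_pos]
  have hσt : ∀ x, σ x ≠ ⊤ := fun x => by simp [hσ]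
  set ν := (volume.restrict (Ioi (0:ℝ))).withDensity σ with hν
  set ω := (volume.restrict (Ioi (0:ℝ))).withDensity w with hω
  have hνI : ∀ x, ν (Iio x) = ∫⁻ y in Ioo 0 x, σ y := fun x => by
    rw [hν, withDensity_apply _ measurableSet_Iio, Measure.restrict_restrict measurableSet_Iio,
      inter_comm, Ioi_inter_Iio]
  have hωI : ∀ x, 0 ≤ x → ω (Ioi x) = ∫⁻ y in Ioi x, w y := fun x hx => by
    rw [hω, withDensity_apply _ measurableSet_Ioi, Measure.restrict_restrict measurableSet_Ioi,
      Ioi_inter_Ioi, max_eq_left hx]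
  have hLHS : ∀ f : ℝ → ℝ≥0∞, Measurable f → ∫⁻ x in Ioi 0, (∫⁻ y in Ioo 0 x, f y) ^ p * w x =
      ∫⁻ x, (∫⁻ y in Ioo 0 x, f y) ^ p ∂ω := fun f hf => by
    have hm : Measurable fun x => ∫⁻ y in Ioo 0 x, f y :=
      Monotone.measurable fun x y hxy => lintegral_mono_set (Ioo_subset_Ioo_right hxy)
    rw [hω, lintegral_withDensity_eq_lintegral_mul _ hwm (hm.pow_const _)]
    simp only [Pi.mul_apply, mul_comm]
  by_cases hV : ∀ x, ν (Iio x) ≠ ⊤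
  · refine ⟨ENNReal.ofReal q ^ (p - 1) * (ENNReal.ofReal p * S ^ p), ?_, fun f hf => ?_⟩
    · exact ENNReal.mul_ne_top (ENNReal.rpow_ne_top_of_nonneg (by linarith) ENNReal.ofReal_ne_top)
        (ENNReal.mul_ne_top ENNReal.ofReal_ne_top (ENNReal.rpow_ne_top_of_nonneg hp0.le hS))
    have hB : ∀ x, ω (Ioi x) ^ (1 / p) * ν (Iio x) ^ (1 / q) ≤ S := by
      intro x
      rcases le_or_gt x 0 with hx | hx
      · rw [hνI, Ioo_eq_empty (by simpa using hx)]
        simp [hpq.symm.pos]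
      · rw [hνI, hωI x hx.le, ← h1p]
        exact hM x hx
    have := hardy ν ω hpq hS hV hB (g := fun y => f y * (σ y)⁻¹) (hf.mul hσm.inv)
    have hL : ∀ x, ∫⁻ y in Iio x, f y * (σ y)⁻¹ ∂ν = ∫⁻ y in Ioo 0 x, f y := by
      intro x
      have hmeas : Measurable fun y => f y * (σ y)⁻¹ := hf.mul hσm.inv
      rw [hν, restrict_withDensity measurableSet_Iio,
        lintegral_withDensity_eq_lintegral_mul _ hσm hmeas,
        Measure.restrict_restrict measurableSet_Iio, inter_comm, Ioi_inter_Iio]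
      refine lintegral_congr fun y => ?_
      rw [Pi.mul_apply, mul_left_comm, ENNReal.mul_inv_cancel (hσ0 y) (hσt y), mul_one]
    -- `σ · σ⁻ᵖ = σ¹⁻ᵖ = e^{-φ}`
    have hR : ∫⁻ y, (f y * (σ y)⁻¹) ^ p ∂ν =
        ∫⁻ y in Ioi 0, f y ^ p * ENNReal.ofReal (Real.exp (-φ y)) := by
      have hmeas : Measurable fun y => (f y * (σ y)⁻¹) ^ p := (hf.mul hσm.inv).pow_const _
      rw [hν, lintegral_withDensity_eq_lintegral_mul _ hσm hmeas]
      refine lintegral_congr fun y => ?_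
      have hs : σ y * (σ y)⁻¹ ^ p = ENNReal.ofReal (Real.exp (-φ y)) := by
        have e : σ y * (σ y)⁻¹ ^ p = σ y ^ (1 - p) := by
          rw [ENNReal.inv_rpow, ← ENNReal.rpow_neg, sub_eq_add_neg,
            ENNReal.rpow_add _ _ (hσ0 y) (hσt y), ENNReal.rpow_one]
        rw [e, hσ]
        simp only
        rw [ENNReal.ofReal_rpow_of_pos (Real.exp_pos _), ← Real.exp_mul]
        congr 2
        have : p - 1 ≠ 0 := by linarith
        field_simp
        ring
      rw [Pi.mul_apply, ENNReal.mul_rpow_of_nonneg _ _ hp0.le, mul_left_comm, hs]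
    rw [hLHS f hf, ← hR]
    simpa only [hL] using this
  · push Not at hV
    obtain ⟨x, hx⟩ := hV
    -- `φ` is continuous on `(0,∞)`, so the divergence happens at `0`
    have hVr : ∀ r > 0, ν (Iio r) = ⊤ := by
      intro r hr
      by_contra h
      have hfin : ∫⁻ y in Icc r x, σ y < ⊤ := by
        refine Integrable.lintegral_lt_top (ContinuousOn.integrableOn_compact isCompact_Icc ?_)
        exact ((hφc.mono fun z hz => lt_of_lt_of_le hr hz.1).div_const _).rexp
      have hle : ν (Iio x) ≤ ν (Iio r) + ∫⁻ y in Icc r x, σ y := by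
        rw [hνI, hνI]
        refine (lintegral_mono_set ?_).trans (lintegral_union_le _ _ _)
        intro z hz
        by_cases hzr : z < r
        · exact Or.inl ⟨hz.1, hzr⟩
        · exact Or.inr ⟨not_lt.mp hzr, hz.2.le⟩
      rw [hx] at hle
      exact absurd (top_le_iff.mp hle) (ENNReal.add_ne_top.mpr ⟨h, hfin.ne⟩)
    have hWr : ∀ r > 0, ω (Ioi r) = 0 := by
      intro r hr
      by_contra h
      have := hM r hr
      rw [← hνI, hVr r hr, ← hωI r hr.le, h1p, ENNReal.top_rpow_of_pos (by
        have := hpq.symm.pos; positivity), ENNReal.mul_top] at this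
      · exact hS (top_le_iff.mp this)
      · simpa [ENNReal.rpow_eq_zero_iff, hp0, not_lt.mpr hp0.le] using h
    have hω0 : ω = 0 := by
      rw [← Measure.measure_univ_eq_zero]
      have h1 : ω (Iic 0) = 0 := by
        rw [hω, withDensity_apply _ measurableSet_Iic, Measure.restrict_restrict measurableSet_Iic,
          Iic_inter_Ioi]
        simp
      have h2 : (univ : Set ℝ) ⊆ Iic 0 ∪ ⋃ n : ℕ, Ioi (1 / ((n : ℝ) + 1)) := by
        intro z _
        rcases le_or_gt z 0 with hz | hz
        · exact Or.inl hz
        · obtain ⟨n, hn⟩ := exists_nat_one_div_lt hz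
          exact Or.inr (mem_iUnion.mpr ⟨n, hn⟩)
      refine measure_mono_null h2 (measure_union_null h1 (measure_iUnion_null fun n => hWr _ ?_))
      positivity
    refine ⟨0, ENNReal.zero_ne_top, fun f hf => ?_⟩
    rw [hLHS f hf, hω0]
    simp

/-! ### The quotient `M |s| / s` -/

/-- Convexity gives `M s ≤ s · M' s`; the Δ₂-condition gives the reverse bound, as
`s · M' s ≤ M (2s) - M s`. -/
lemma condM_deriv_bounds {M : ℝ → ℝ} (hM : CondM M) :
    ∃ c > 0, ∀ s > 0, HasDerivAt M (deriv M s) s ∧ M s ≤ s * deriv M s ∧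
      s * deriv M s ≤ c * M s := by
  obtain ⟨⟨hcont, hconv, hM0, hnn, -, -⟩, hC1, ⟨c, hc, hΔ⟩, -⟩ := hM
  refine ⟨c, hc, fun s hs => ?_⟩
  have hd : DifferentiableAt ℝ M s :=
    (hC1.differentiableOn one_ne_zero).differentiableAt (Ioi_mem_nhds hs)
  have hs' : s ∈ Ici (0:ℝ) := le_of_lt hs
  refine ⟨hd.hasDerivAt, ?_, ?_⟩
  · have := hconv.slope_le_deriv (x := 0) (y := s) self_mem_Ici hs' hs hd
    rw [slope_def_field, hM0, sub_zero, sub_zero, div_le_iff₀ hs] at this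
    linarith
  · have h2 : (2 * s) ∈ Ici (0:ℝ) := by simp; linarith
    have := hconv.deriv_le_slope (x := s) (y := 2 * s) hs' h2 (by linarith) hd
    rw [slope_def_field, show 2 * s - s = s by ring, le_div_iff₀ hs] at this
    have h4 := hnn s hs'
    have h3 := hΔ s hs
    linarith

/-- The odd function `s ↦ M |s| / s` has derivative of order `M |s| / s²` away from the origin. -/
lemma hasDerivAt_div_self {M : ℝ → ℝ} (hM : CondM M) :
    ∃ c > 0, ∀ s ≠ 0, ∃ d, HasDerivAt (fun s => M |s| / s) d s ∧ |d| ≤ c * (M |s| / s ^ 2) := by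
  obtain ⟨c, hc, h⟩ := condM_deriv_bounds hM
  have hpos : ∀ s > 0, ∃ d, HasDerivAt (fun s => M |s| / s) d s ∧ |d| ≤ c * (M |s| / s ^ 2) := by
    intro s hs
    obtain ⟨hd, h1, h2⟩ := h s hs
    have hnn := hM.1.2.2.2.1 s hs.le
    refine ⟨_, (hd.div (hasDerivAt_id s) hs.ne').congr_of_eventuallyEq ?_, ?_⟩
    · filter_upwards [Ioi_mem_nhds hs] with t ht
      simp [abs_of_pos (show 0 < t from ht)]
    · rw [abs_of_pos hs, ← mul_div_assoc, abs_div, abs_of_pos (show 0 < id s ^ 2 by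
        simpa using pow_pos hs 2)]
      simp only [id, mul_one]
      gcongr
      rw [abs_le]
      constructor <;> nlinarith
  refine ⟨c, hc, fun s hs => ?_⟩
  rcases lt_or_gt_of_ne hs with hs | hs
  · obtain ⟨d, hd, hb⟩ := hpos (-s) (by linarith)
    refine ⟨d, ?_, by simpa using hb⟩
    have := (hd.comp s (hasDerivAt_neg s)).neg
    refine (this.congr_deriv (by ring)).congr_of_eventuallyEq (Eventually.of_forall fun t => ?_)
    simp [div_neg]
  · exact hpos s hs

/-- `s ↦ M |s| / s` is Lipschitz on bounded sets, the value at `0` being `M 0 / 0 = 0`. The bound on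
`M' λ / λ` near zero makes `M s / s²` bounded there. -/
lemma lipschitz_div_self {M : ℝ → ℝ} (hM : CondM M) (R : ℝ) :
    ∃ L ≥ 0, ∀ s t, |s| ≤ R → |t| ≤ R → |M |s| / s - M |t| / t| ≤ L * |s - t| := by
  obtain ⟨c, hc, hder⟩ := hasDerivAt_div_self hM
  obtain ⟨_, _, hb⟩ := condM_deriv_bounds hM
  obtain ⟨⟨hcont, -, hM0, hnn, -, -⟩, -, -, ε, hε, C, hC⟩ := hM
  obtain ⟨D, hD⟩ : ∃ D ≥ 0, ∀ s ∈ Ioc 0 R, M s / s ^ 2 ≤ D := by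
    have hcon : ContinuousOn (fun s => M s / s ^ 2) (Icc ε R) := by
      refine (hcont.mono fun s hs => ?_).div (by fun_prop) fun s hs => ?_
      · exact hε.le.trans hs.1
      · have := hε.trans_le hs.1; positivity
    obtain ⟨D, hD⟩ := isCompact_Icc.exists_bound_of_continuousOn hcon
    refine ⟨max 0 (max C D), le_max_left _ _, fun s hs => ?_⟩
    rcases lt_or_ge s ε with h | h
    · refine le_trans ?_ ((le_max_left _ _).trans (le_max_right _ _))
      have h1 := hC s ⟨hs.1, h⟩
      rw [div_le_iff₀ hs.1] at h1
      rw [div_le_iff₀ (pow_pos hs.1 2)]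
      have := (hb s hs.1).2.1
      nlinarith [hs.1]
    · exact le_trans ((le_abs_self _).trans (hD s ⟨h, hs.2⟩))
        ((le_max_right _ _).trans (le_max_right _ _))
  obtain ⟨hD0, hD⟩ := hD
  set L := (c + 1) * D with hL
  have hpos : ∀ s t, 0 < s → s ≤ R → 0 < t → t ≤ R → |M s / s - M t / t| ≤ L * |s - t| := by
    intro s t hs hsR ht htR
    choose! d hd hdb using hder
    have := (convex_Ioc 0 R).norm_image_sub_le_of_norm_hasDerivWithin_le
      (f := fun s => M |s| / s) (f' := d) (C := L) (x := t) (y := s)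
      (fun z hz => (hd z hz.1.ne').hasDerivWithinAt) (fun z hz => ?_) ⟨ht, htR⟩ ⟨hs, hsR⟩
    · simpa [abs_of_pos hs, abs_of_pos ht] using this
    · refine (hdb z hz.1.ne').trans ?_
      rw [abs_of_pos hz.1]
      have := hD z hz
      nlinarith
  have hone : ∀ s, 0 ≤ s → s ≤ R → 0 ≤ M s / s ∧ M s / s ≤ L * s := by
    intro s hs hsR
    refine ⟨div_nonneg (hnn s hs) hs, ?_⟩
    rcases hs.eq_or_lt with rfl | hs
    · simp
    · have := hD s ⟨hs, hsR⟩
      rw [div_le_iff₀ (by positivity)] at this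
      rw [div_le_iff₀ hs, hL]
      nlinarith [mul_nonneg hc.le (mul_nonneg hD0 (mul_pos hs hs).le)]
  have hnn' : ∀ s t, 0 ≤ s → s ≤ R → 0 ≤ t → t ≤ R → |M s / s - M t / t| ≤ L * |s - t| := by
    intro s t hs hsR ht htR
    rcases hs.eq_or_lt with rfl | hs
    · have := hone t ht htR
      simpa [abs_of_nonneg this.1, abs_of_nonneg ht] using this.2
    rcases ht.eq_or_lt with rfl | ht
    · have := hone s hs.le hsR
      simpa [abs_of_nonneg this.1, abs_of_nonneg hs.le] using this.2
    exact hpos s t hs hsR ht htR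
  refine ⟨L, by positivity, fun s t hs ht => ?_⟩
  -- `s ↦ M |s| / s` is odd; opposite signs are handled by passing through the origin
  rcases le_total 0 s with h1 | h1 <;> rcases le_total 0 t with h2 | h2
  · rw [abs_of_nonneg h1] at hs ⊢; rw [abs_of_nonneg h2] at ht ⊢
    exact hnn' s t h1 hs h2 ht
  · rw [abs_of_nonneg h1] at hs ⊢; rw [abs_of_nonpos h2] at ht ⊢
    have a1 := hone s h1 hs
    have a2 := hone (-t) (by linarith) ht
    have e : M (-t) / t = -(M (-t) / -t) := by rw [div_neg, neg_neg]
    rw [e, abs_of_nonneg (by linarith), abs_of_nonneg (by linarith : 0 ≤ s - t)]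
    linarith
  · rw [abs_of_nonpos h1] at hs ⊢; rw [abs_of_nonneg h2] at ht ⊢
    have a1 := hone (-s) (by linarith) hs
    have a2 := hone t h2 ht
    have e : M (-s) / s = -(M (-s) / -s) := by rw [div_neg, neg_neg]
    rw [e, abs_of_nonpos (by linarith), abs_of_nonpos (by linarith : s - t ≤ 0)]
    linarith
  · rw [abs_of_nonpos h1] at hs ⊢; rw [abs_of_nonpos h2] at ht ⊢
    have := hnn' (-s) (-t) (by linarith) hs (by linarith) ht
    have e : M (-s) / s - M (-t) / t = -(M (-s) / -s - M (-t) / -t) := by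
      rw [div_neg, div_neg]; ring
    rw [e, abs_neg]
    rwa [show -s - -t = -(s - t) by ring, abs_neg] at this

/-- Zeros of `f` at which the derivative does not vanish are isolated, hence countable in number. -/
lemma ae_deriv_eq_zero_of_eq_zero {f : ℝ → ℝ} : ∀ᵐ x, f x = 0 → deriv f x = 0 := by
  have hcount : {x | f x = 0 ∧ deriv f x ≠ 0}.Countable := by
    refine (countable_setOfPred_isolated_right_within (s := {x | f x = 0 ∧ deriv f x ≠ 0})).mono ?_
    intro x hx
    refine ⟨hx, ?_⟩
    have hne := (differentiableAt_of_deriv_ne_zero hx.2).hasDerivAt.eventually_ne (c := 0) hx.2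
    have h1 : ∀ᶠ z in nhdsWithin x ({x | f x = 0 ∧ deriv f x ≠ 0} ∩ Ioi x), f z ≠ 0 :=
      hne.filter_mono (nhdsWithin_mono _ fun z hz => ne_of_gt hz.2)
    have h2 : ∀ᶠ z in nhdsWithin x ({x | f x = 0 ∧ deriv f x ≠ 0} ∩ Ioi x), f z = 0 := by
      filter_upwards [self_mem_nhdsWithin] with z hz using hz.1.1
    rw [← Filter.empty_mem_iff_bot]
    filter_upwards [h1, h2] with z a b using a b
  filter_upwards [hcount.ae_notMem volume] with x hx h0
  by_contra h
  exact hx ⟨h0, h⟩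



/-! ### Pointwise estimates -/

/-- Condition (Y) with `v` replaced by `4kv`, so that the right-hand side carries the factor `1/4`;
this makes the `M`-terms absorbable. -/
lemma young_scaled {M Q : ℝ → ℝ} {p : ℝ} (hMnn : ∀ x ≥ 0, 0 ≤ M x)
    (hY : CondY M (fun l => l ^ p) Q) {s v w k : ℝ} (hs : 0 < s) (hv : 0 ≤ v) (hw : 0 ≤ w)
    (hk : 0 < k) :
    k * (M s / s ^ 2 * v * w) ≤ (M s + (4 * k) ^ p * v ^ p + Q w) / 4 := by
  obtain ⟨-, -, -, hQnn, -, -, -, -, hY⟩ := hY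
  have hMs := hMnn s hs.le
  have hQw := hQnn w hw
  have hvp := Real.rpow_nonneg hv p
  have hkp : 0 ≤ (4 * k) ^ p := by positivity
  rcases hv.eq_or_lt with rfl | hv
  · simp only [mul_zero, zero_mul]; positivity
  rcases hw.eq_or_lt with rfl | hw
  · simp only [mul_zero]; positivity
  have := hY s hs (4 * k * v) (by positivity) w hw
  simp only at this
  rw [Real.mul_rpow (by positivity) hv.le] at this
  have e : M s / s ^ 2 * (4 * k * v) * w = 4 * (k * (M s / s ^ 2 * v * w)) := by ring
  rw [e] at this
  linarith

/-- The pointwise estimate behind the theorem, with `f = u'`. At a zero of `f` the factor `M |f| / f` has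
derivative `0` because it is locally dominated by `|f|`, which is `o(|y - x|)` when `f' x = 0`. -/
lemma deriv_product_lower_bound {M Q : ℝ → ℝ} {p c L R : ℝ} (hp : 1 < p) (hMnn : ∀ x ≥ 0, 0 ≤ M x)
    (hM0 : M 0 = 0) (hY : CondY M (fun l => l ^ p) Q) (hc : 0 < c)
    (hder : ∀ s ≠ 0, ∃ d, HasDerivAt (fun s => M |s| / s) d s ∧ |d| ≤ c * (M |s| / s ^ 2))
    (hL : ∀ s t, |s| ≤ R → |t| ≤ R → |M |s| / s - M |t| / t| ≤ L * |s - t|)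
    {u f φ : ℝ → ℝ} {x fd φd : ℝ} (hu : HasDerivAt u (f x) x) (hf : HasDerivAt f fd x)
    (hφ : HasDerivAt φ φd x) (hR : ∀ y, |f y| ≤ R) (h0 : f x = 0 → fd = 0) :
    Real.exp (-φ x) * (M |f x| / 2 - (4 * c) ^ p / 4 * |fd| ^ p - 4 ^ p / 4 * |f x * φd| ^ p
      - Q |u x| / 2) ≤ deriv (fun y => u y * (M |f y| / f y) * Real.exp (-φ y)) x := by
  have hQnn := hY.2.2.2.1 |u x| (abs_nonneg _)
  have hE : HasDerivAt (fun y => Real.exp (-φ y)) (Real.exp (-φ x) * -φd) x := hφ.neg.exp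
  have hEp := Real.exp_pos (-φ x)
  by_cases hfx : f x = 0
  · have hfd := h0 hfx
    subst hfd
    have hG : HasDerivAt (fun y => M |f y| / f y) 0 x := by
      rw [hasDerivAt_iff_isLittleO] at hf ⊢
      simp only [smul_zero, sub_zero] at hf ⊢
      refine Asymptotics.IsBigO.trans_isLittleO ?_ hf
      refine Asymptotics.IsBigO.of_bound L (Eventually.of_forall fun y => ?_)
      exact hL _ _ (hR y) (hR x)
    rw [((hu.fun_mul hG).fun_mul hE).deriv]
    simp only [hfx, abs_zero, hM0, zero_mul]
    rw [Real.zero_rpow (by linarith)]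
    simp
    nlinarith
  · obtain ⟨d, hd, hdb⟩ := hder (f x) hfx
    have hG : HasDerivAt (fun y => M |f y| / f y) (d * fd) x := hd.comp x hf
    rw [((hu.fun_mul hG).fun_mul hE).deriv]
    have hpos : 0 < |f x| := abs_pos.mpr hfx
    have y1 := young_scaled hMnn hY hpos (abs_nonneg fd) (abs_nonneg (u x)) hc
    have y2 := young_scaled hMnn hY hpos (abs_nonneg (f x * φd)) (abs_nonneg (u x)) one_pos
    rw [one_mul, mul_one] at y2
    have e0 : f x * (M |f x| / f x) = M |f x| := by field_simp
    have b1 : |u x * (d * fd)| ≤ c * (M |f x| / |f x| ^ 2 * |fd| * |u x|) := by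
      rw [abs_mul, abs_mul, sq_abs]
      calc |u x| * (|d| * |fd|) ≤ |u x| * (c * (M |f x| / f x ^ 2) * |fd|) := by gcongr
        _ = _ := by ring
    have b2 : |u x * (M |f x| / f x) * φd| = M |f x| / |f x| ^ 2 * |f x * φd| * |u x| := by
      rw [abs_mul, abs_mul, abs_mul, abs_div, abs_of_nonneg (hMnn _ hpos.le)]
      field_simp
    have b1' := neg_abs_le (u x * (d * fd))
    have b2' := le_abs_self (u x * (M |f x| / f x) * φd)
    have key : M |f x| / 2 - (4 * c) ^ p / 4 * |fd| ^ p - 4 ^ p / 4 * |f x * φd| ^ p - Q |u x| / 2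
        ≤ f x * (M |f x| / f x) + u x * (d * fd) - u x * (M |f x| / f x) * φd := by
      rw [e0]; linarith
    refine (mul_le_mul_of_nonneg_left key hEp.le).trans_eq ?_
    ring

/-! ### Integration -/

/-- Integration against `μ` of a function vanishing outside `(a,b]` reduces to an interval integral. -/
lemma integral_measOf1 {φ h : ℝ → ℝ} (hφ : Measurable φ) {a b : ℝ} (ha : 0 < a)
    (hab : a ≤ b) (hh : ∀ x, x ∉ Ioc a b → h x = 0) :
    ∫ x, h x ∂(measOf1 φ) = ∫ x in a..b, Real.exp (-φ x) * h x := by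
  rw [measOf1, integral_withDensity_eq_integral_toReal_smul (by fun_prop)
    (Eventually.of_forall fun x => ENNReal.ofReal_lt_top), intervalIntegral.integral_of_le hab]
  simp only [ENNReal.toReal_ofReal (Real.exp_pos _).le, smul_eq_mul]
  refine setIntegral_eq_of_subset_of_forall_sdiff_eq_zero measurableSet_Ioi
    (fun x hx => ha.trans hx.1) fun x hx => ?_
  rw [hh x hx.2, mul_zero]

/-- `∫ |f φ'|^p dμ ≤ C ∫ |f'|^p dμ` when `f 0 = 0`, by `hardy_weight` and the fundamental theorem of
calculus. -/
lemma hardy_deriv {p : ℝ} {φ φd : ℝ → ℝ} (hp : 1 < p) {C : ℝ≥0∞}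
    (hC : ∀ f : ℝ → ℝ≥0∞, Measurable f →
      ∫⁻ x in Ioi 0, (∫⁻ y in Ioo 0 x, f y) ^ p *
          ENNReal.ofReal (|φd x| ^ p * Real.exp (-φ x)) ≤
        C * ∫⁻ y in Ioi 0, f y ^ p * ENNReal.ofReal (Real.exp (-φ y)))
    {f : ℝ → ℝ} (hf : ContDiff ℝ 1 f) (h0 : f 0 = 0) :
    ∫⁻ x in Ioi 0, ENNReal.ofReal (Real.exp (-φ x) * |f x * φd x| ^ p) ≤
      C * ∫⁻ x in Ioi 0, ENNReal.ofReal (Real.exp (-φ x) * |deriv f x| ^ p) := by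
  have hp0 : 0 ≤ p := by linarith
  have hfc : Continuous (deriv f) := hf.continuous_deriv le_rfl
  have := hC (fun y => ENNReal.ofReal |deriv f y|) (by fun_prop)
  calc _ ≤ ∫⁻ x in Ioi 0, (∫⁻ y in Ioo 0 x, ENNReal.ofReal |deriv f y|) ^ p *
          ENNReal.ofReal (|φd x| ^ p * Real.exp (-φ x)) := by
        refine setLIntegral_mono' measurableSet_Ioi fun x hx => ?_
        have hx : 0 < x := hx
        have h1 : ENNReal.ofReal |f x| ≤ ∫⁻ y in Ioo 0 x, ENNReal.ofReal |deriv f y| := by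
          have hfi : ∫ y in (0:ℝ)..x, deriv f y = f x := by
            rw [intervalIntegral.integral_deriv_eq_sub
              (fun z _ => hf.differentiable one_ne_zero z) (hfc.intervalIntegrable _ _), h0, sub_zero]
          rw [← hfi, intervalIntegral.integral_of_le hx.le, integral_Ioc_eq_integral_Ioo,
            ← Real.norm_eq_abs, ofReal_norm]
          refine (enorm_integral_le_lintegral_enorm _).trans_eq ?_
          simp only [← ofReal_norm, Real.norm_eq_abs]
        calc ENNReal.ofReal (Real.exp (-φ x) * |f x * φd x| ^ p)
            = ENNReal.ofReal |f x| ^ p * ENNReal.ofReal (|φd x| ^ p * Real.exp (-φ x)) := by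
              rw [ENNReal.ofReal_rpow_of_nonneg (abs_nonneg _) hp0,
                ← ENNReal.ofReal_mul (by positivity), abs_mul,
                Real.mul_rpow (abs_nonneg _) (abs_nonneg _)]
              congr 1; ring
          _ ≤ _ := by gcongr
    _ ≤ _ := this
    _ = _ := by
        congr 1
        refine lintegral_congr fun x => ?_
        rw [ENNReal.ofReal_rpow_of_nonneg (abs_nonneg _) hp0, ← ENNReal.ofReal_mul (by positivity),
          mul_comm]

lemma exists_Ioo_of_testFun {u : ℝ → ℝ} (hu : TestFun1 u) :
    ∃ a b, 0 < a ∧ a < b ∧ tsupport u ⊆ Ioo a b := by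
  obtain ⟨-, hcs, hsupp⟩ := hu
  have h0 : (0:ℝ) ∉ tsupport u := fun h => lt_irrefl (0:ℝ) (mem_Ioi.mp (hsupp h))
  obtain ⟨ε, hε, hball⟩ := Metric.isOpen_iff.mp (isClosed_tsupport u).isOpen_compl 0 h0
  obtain ⟨B, hB⟩ := hcs.isCompact.bddAbove
  refine ⟨ε / 2, max B (ε / 2) + 1, by positivity, by linarith [le_max_right B (ε / 2)],
    fun x hx => ⟨?_, by linarith [hB hx, le_max_left B (ε / 2)]⟩⟩
  by_contra h
  have hx0 : 0 < x := hsupp hx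
  refine absurd hx (hball (?_ : x ∈ Metric.ball 0 ε))
  rw [Metric.mem_ball, Real.dist_eq, sub_zero, abs_of_pos hx0]
  linarith

lemma LocLipschitzOn.locallyLipschitzOn_Ioi {φ : ℝ → ℝ} (hφ : LocLipschitzOn (Ioi 0) φ) :
    LocallyLipschitzOn (Ioi 0) φ := fun x hx => by
  obtain ⟨s, hs, K, hK⟩ := hφ x hx
  exact ⟨K, s, hs, hK⟩

lemma absolutelyContinuous_product {M : ℝ → ℝ} {L R : ℝ} (hL0 : 0 ≤ L)
    (hL : ∀ s t, |s| ≤ R → |t| ≤ R → |M |s| / s - M |t| / t| ≤ L * |s - t|)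
    {u f φ : ℝ → ℝ} (hu : ContDiff ℝ 1 u) (hf : ContDiff ℝ 1 f)
    (hφ : LocallyLipschitzOn (Ioi 0) φ) (hR : ∀ y, |f y| ≤ R) {a b : ℝ} (ha : 0 < a)
    (hab : a ≤ b) :
    AbsolutelyContinuousOnInterval (fun y => u y * (M |f y| / f y) * Real.exp (-φ y)) a b := by
  have hI : uIcc a b = Icc a b := uIcc_of_le hab
  have hsub : Icc a b ⊆ Ioi 0 := fun x hx => ha.trans_le hx.1
  have hlip : ∀ g : ℝ → ℝ, ContDiff ℝ 1 g → ∀ K, IsCompact K → ∃ C, LipschitzOnWith C g K :=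
    fun g hg K hK => LocallyLipschitzOn.exists_lipschitzOnWith_of_compact hK
      (hg.locallyLipschitz.locallyLipschitzOn)
  obtain ⟨Cu, hCu⟩ := hlip u hu _ isCompact_Icc
  obtain ⟨Cf, hCf⟩ := hlip f hf _ (isCompact_Icc (a := a) (b := b))
  obtain ⟨Cφ, hCφ⟩ := LocallyLipschitzOn.exists_lipschitzOnWith_of_compact isCompact_Icc
    (hφ.mono hsub)
  obtain ⟨Ce, hCe⟩ := hlip (fun z => Real.exp (-z)) (by fun_prop) _
    (isCompact_Icc.image_of_continuousOn hCφ.continuousOn)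
  have hE : LipschitzOnWith (Ce * Cφ) (fun y => Real.exp (-φ y)) (Icc a b) :=
    hCe.comp hCφ (mapsTo_image _ _)
  have hG : LipschitzOnWith (L.toNNReal * Cf) (fun y => M |f y| / f y) (Icc a b) := by
    refine LipschitzOnWith.of_dist_le_mul fun x hx y hy => ?_
    have h1 := hCf.dist_le_mul x hx y hy
    rw [NNReal.coe_mul, Real.coe_toNNReal _ hL0, mul_assoc]
    exact (hL _ _ (hR x) (hR y)).trans (mul_le_mul_of_nonneg_left h1 hL0)
  rw [← hI] at hCu hG hE
  exact (hCu.absolutelyContinuousOnInterval.fun_mul hG.absolutelyContinuousOnInterval).fun_mul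
    hE.absolutelyContinuousOnInterval

/-- The theorem for globally measurable `φ` and `φd`. -/
theorem core (p : ℝ) (hp : 1 < p)
    (φ : ℝ → ℝ) (hφm : Measurable φ) (hφ : LocLipschitzOn (Ioi 0) φ) (φd : ℝ → ℝ)
    (hφdm : Measurable φd)
    (hφd : ∀ᵐ x ∂(volume.restrict (Ioi (0:ℝ))), HasDerivAt φ (φd x) x)
    (hMuck : Muckenhoupt p φ φd)
    (M Q : ℝ → ℝ) (hM : CondM M) (hQ : IsNFunction Q)
    (hY : CondY M (fun l => l ^ p) Q) :
    ∃ K₁ > (0:ℝ), ∃ K₂ > (0:ℝ), ∀ u : ℝ → ℝ, TestFun1 u →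
      ∫ x, M |deriv u x| ∂(measOf1 φ) ≤
        K₁ * ∫ x, |deriv (deriv u) x| ^ p ∂(measOf1 φ)
          + K₂ * ∫ x, Q |u x| ∂(measOf1 φ) := by
  have hp0 : 0 < p := by linarith
  have hLL := hφ.locallyLipschitzOn_Ioi
  have hφc : ContinuousOn φ (Ioi 0) := hLL.continuousOn
  obtain ⟨C, hCt, hC⟩ := hardy_weight hp hφm hφdm hφc hMuck
  obtain ⟨c, hc, hder⟩ := hasDerivAt_div_self hM
  have hMnn := hM.1.2.2.2.1
  have hM0 := hM.1.2.2.1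
  have hMc := hM.1.1
  refine ⟨2 * ((4 * c) ^ p / 4) + 2 * (4 ^ p / 4) * C.toReal, by positivity, 1, one_pos,
    fun u hu => ?_⟩
  obtain ⟨a, b, ha, hab, hts⟩ := exists_Ioo_of_testFun hu
  obtain ⟨hsm, hcs, -⟩ := hu
  set f := deriv u with hfdef
  have hfsm : ContDiff ℝ (⊤ : ℕ∞) f := (contDiff_infty_iff_deriv.mp hsm).2
  have hf1 : ContDiff ℝ 1 f := hfsm.of_le (by exact_mod_cast le_top)
  have hu1 : ContDiff ℝ 1 u := hsm.of_le (by exact_mod_cast le_top)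
  have hfd : Continuous (deriv f) := hf1.continuous_deriv le_rfl
  have hfc : Continuous f := hf1.continuous
  have huc : Continuous u := hu1.continuous
  have hu0 : ∀ x, x ∉ Ioo a b → u x = 0 := fun x hx =>
    image_eq_zero_of_notMem_tsupport fun h => hx (hts h)
  have htf : tsupport f ⊆ tsupport u := closure_minimal support_deriv_subset (isClosed_tsupport u)
  have hf0 : ∀ x, x ∉ Ioo a b → f x = 0 := fun x hx =>
    image_eq_zero_of_notMem_tsupport fun h => hx (hts (htf h))
  have hfd0 : ∀ x, x ∉ Ioo a b → deriv f x = 0 := fun x hx => by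
    by_contra h
    exact hx (hts (htf (support_deriv_subset h)))
  obtain ⟨R, hR⟩ : ∃ R, ∀ y, |f y| ≤ R := hfc.bounded_above_of_compact_support hcs.deriv
  obtain ⟨L, hL0, hL⟩ := lipschitz_div_self hM R
  have hAC := absolutelyContinuous_product hL0 hL hu1 hf1 hLL hR ha hab.le
  have hint := hAC.integral_deriv_eq_sub
  rw [hu0 a (by simp), hu0 b (by simp)] at hint
  simp only [zero_mul, sub_zero] at hint
  have hnot : ∀ x, x ∉ Ioc a b → x ∉ Ioo a b := fun x hx h => hx ⟨h.1, h.2.le⟩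
  have hQ0 : Q 0 = 0 := hQ.2.2.1
  have hEc : ContinuousOn (fun x => Real.exp (-φ x)) (uIcc a b) := by
    rw [uIcc_of_le hab.le]
    exact ((hφc.mono fun x hx => ha.trans_le hx.1).neg).rexp
  set I₁ : ℝ → ℝ := fun x => Real.exp (-φ x) * M |f x| with hI₁
  set I₂ : ℝ → ℝ := fun x => Real.exp (-φ x) * |deriv f x| ^ p with hI₂
  set I₃ : ℝ → ℝ := fun x => Real.exp (-φ x) * |f x * φd x| ^ p with hI₃
  set I₄ : ℝ → ℝ := fun x => Real.exp (-φ x) * Q |u x| with hI₄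
  have i₁ : IntervalIntegrable I₁ volume a b :=
    (hEc.mul (hMc.comp_continuous hfc.abs fun x => mem_Ici.mpr (abs_nonneg _)).continuousOn).intervalIntegrable
  have i₂ : IntervalIntegrable I₂ volume a b :=
    (hEc.mul (hfd.abs.rpow_const fun x => Or.inr hp0.le).continuousOn).intervalIntegrable
  have i₄ : IntervalIntegrable I₄ volume a b :=
    (hEc.mul (hQ.1.comp_continuous huc.abs fun x => mem_Ici.mpr (abs_nonneg _)).continuousOn).intervalIntegrable
  have hI₂nn : ∀ x, 0 ≤ I₂ x := fun x => by positivity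
  have hI₃nn : ∀ x, 0 ≤ I₃ x := fun x => by positivity
  have hsub : Ioc a b ⊆ Ioi 0 := fun x hx => ha.trans hx.1
  have hI₂0 : ∀ x ∈ Ioi (0:ℝ) \ Ioc a b, I₂ x = 0 := fun x hx => by
    simp [hI₂, hfd0 x (hnot x hx.2), Real.zero_rpow hp0.ne']
  have i₂' : IntegrableOn I₂ (Ioi 0) :=
    IntegrableOn.of_forall_sdiff_eq_zero
      ((intervalIntegrable_iff_integrableOn_Ioc_of_le hab.le).mp i₂) measurableSet_Ioi hI₂0
  have hI₂e : ∫ x in Ioi 0, I₂ x = ∫ x in a..b, I₂ x := by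
    rw [intervalIntegral.integral_of_le hab.le]
    exact setIntegral_eq_of_subset_of_forall_sdiff_eq_zero measurableSet_Ioi hsub hI₂0
  have hH := hardy_deriv hp hC hf1 (hf0 0 fun h => (ha.trans h.1).false)
  -- finite right-hand side in Hardy's inequality, so `|f φd|^p` is integrable
  have hH2 : C * ∫⁻ x in Ioi 0, ENNReal.ofReal (I₂ x) ≠ ⊤ :=
    ENNReal.mul_ne_top hCt i₂'.lintegral_lt_top.ne
  have i₃' : IntegrableOn I₃ (Ioi 0) := by
    refine ⟨Measurable.aestronglyMeasurable (by fun_prop), ?_⟩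
    rw [hasFiniteIntegral_iff_ofReal (Eventually.of_forall hI₃nn)]
    exact hH.trans_lt hH2.lt_top
  have i₃ : IntervalIntegrable I₃ volume a b :=
    (intervalIntegrable_iff_integrableOn_Ioc_of_le hab.le).mpr (i₃'.mono_set hsub)
  have hI₃e : ∫ x in a..b, I₃ x ≤ C.toReal * ∫ x in a..b, I₂ x := by
    rw [← hI₂e, intervalIntegral.integral_of_le hab.le]
    calc ∫ x in Ioc a b, I₃ x ≤ ∫ x in Ioi 0, I₃ x :=
          setIntegral_mono_set i₃' (Eventually.of_forall hI₃nn) (LE.le.eventuallyLE hsub)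
      _ ≤ _ := by
          rw [integral_eq_lintegral_of_nonneg_ae (Eventually.of_forall hI₃nn)
            i₃'.aestronglyMeasurable, integral_eq_lintegral_of_nonneg_ae
            (Eventually.of_forall hI₂nn) i₂'.aestronglyMeasurable, ← ENNReal.toReal_mul]
          exact ENNReal.toReal_mono hH2 hH
  have hmono : ∫ x in a..b, (I₁ x * (1 / 2) - I₂ x * ((4 * c) ^ p / 4) - I₃ x * (4 ^ p / 4)
      - I₄ x * (1 / 2)) ≤
      ∫ x in a..b, deriv (fun y => u y * (M |f y| / f y) * Real.exp (-φ y)) x := by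
    refine intervalIntegral.integral_mono_ae_restrict hab.le
      ((((i₁.mul_const _).sub (i₂.mul_const _)).sub (i₃.mul_const _)).sub (i₄.mul_const _))
      hAC.intervalIntegrable_deriv ?_
    have hφd' : ∀ᵐ x ∂(volume.restrict (Icc a b)), HasDerivAt φ (φd x) x :=
      ae_restrict_of_ae_restrict_of_subset (fun x hx => ha.trans_le hx.1) hφd
    filter_upwards [hφd', ae_restrict_of_ae (ae_deriv_eq_zero_of_eq_zero (f := f))] with x h1 h2
    refine le_trans (le_of_eq ?_) (deriv_product_lower_bound hp hMnn hM0 hY hc hder hL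
      (hu1.differentiable one_ne_zero x).hasDerivAt (hf1.differentiable one_ne_zero x).hasDerivAt
      h1 hR h2)
    simp only [hI₁, hI₂, hI₃, hI₄]
    ring
  rw [hint, intervalIntegral.integral_sub
    (((i₁.mul_const _).sub (i₂.mul_const _)).sub (i₃.mul_const _)) (i₄.mul_const _),
    intervalIntegral.integral_sub ((i₁.mul_const _).sub (i₂.mul_const _)) (i₃.mul_const _),
    intervalIntegral.integral_sub (i₁.mul_const _) (i₂.mul_const _),
    intervalIntegral.integral_mul_const, intervalIntegral.integral_mul_const,
    intervalIntegral.integral_mul_const, intervalIntegral.integral_mul_const] at hmono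
  rw [integral_measOf1 hφm ha hab.le fun x hx => by rw [hf0 x (hnot x hx), abs_zero, hM0],
    integral_measOf1 hφm ha hab.le fun x hx => by
      rw [hfd0 x (hnot x hx), abs_zero, Real.zero_rpow hp0.ne'],
    integral_measOf1 hφm ha hab.le fun x hx => by rw [hu0 x (hnot x hx), abs_zero, hQ0]]
  have h4 : 0 ≤ (4:ℝ) ^ p / 4 := by positivity
  have := mul_le_mul_of_nonneg_left hI₃e h4
  change ∫ x in a..b, I₁ x ≤ _ * (∫ x in a..b, I₂ x) + 1 * ∫ x in a..b, I₄ x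
  linarith

/-- Theorem 4.1 (modular part): under the Muckenhoupt condition, the weighted
Gagliardo–Nirenberg inequality (4.7) holds on `(0,∞)`. -/
theorem statement10 (p : ℝ) (hp : 1 < p)
    (φ : ℝ → ℝ) (hφ : LocLipschitzOn (Ioi 0) φ) (φd : ℝ → ℝ)
    (hφd : ∀ᵐ x ∂(volume.restrict (Ioi (0:ℝ))), HasDerivAt φ (φd x) x)
    (hMuck : Muckenhoupt p φ φd)
    (M Q : ℝ → ℝ) (hM : CondM M) (hQ : IsNFunction Q)
    (hY : CondY M (fun l => l ^ p) Q) :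
    ∃ K₁ > (0:ℝ), ∃ K₂ > (0:ℝ), ∀ u : ℝ → ℝ, TestFun1 u →
      ∫ x, M |deriv u x| ∂(measOf1 φ) ≤
        K₁ * ∫ x, |deriv (deriv u) x| ^ p ∂(measOf1 φ)
          + K₂ * ∫ x, Q |u x| ∂(measOf1 φ) := by
  -- off `(0,∞)` neither `φ` nor `φd` is constrained, so they are replaced by measurable versions
  set ψ := (Ioi (0:ℝ)).indicator φ with hψ
  have heq : ∀ x ∈ Ioi (0:ℝ), ψ x = φ x := fun x hx => indicator_of_mem hx φ
  have hφc : ContinuousOn φ (Ioi 0) := hφ.locallyLipschitzOn_Ioi.continuousOn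
  have hψm : Measurable ψ := by
    rw [hψ, ← piecewise_eq_indicator]
    exact ContinuousOn.measurable_piecewise hφc continuousOn_const measurableSet_Ioi
  have hψL : LocLipschitzOn (Ioi 0) ψ := fun x hx => by
    obtain ⟨s, hs, K, hK⟩ := hφ x hx
    refine ⟨s ∩ Ioi 0, inter_mem hs self_mem_nhdsWithin, K, fun y hy z hz => ?_⟩
    rw [heq y hy.2, heq z hz.2]
    exact hK hy.1 hz.1
  have hd : ∀ᵐ x ∂(volume.restrict (Ioi (0:ℝ))), HasDerivAt ψ (φd x) x := by
    filter_upwards [hφd, ae_restrict_mem measurableSet_Ioi] with x hx hx0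
    refine hx.congr_of_eventuallyEq ?_
    filter_upwards [Ioi_mem_nhds hx0] with y hy using heq y hy
  have hmeas : measOf1 φ = measOf1 ψ := by
    refine withDensity_congr_ae ?_
    filter_upwards [ae_restrict_mem measurableSet_Ioi] with x hx
    rw [heq x hx]
  have hMuck' : Muckenhoupt p ψ (deriv ψ) := by
    obtain ⟨S, hS, h⟩ := hMuck
    refine ⟨S, hS, fun r hr => ?_⟩
    convert h r hr using 3
    · refine lintegral_congr_ae ?_
      filter_upwards [ae_restrict_of_ae_restrict_of_subset (Ioi_subset_Ioi hr.le) hd,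
        ae_restrict_mem measurableSet_Ioi] with x hx hxr
      rw [hx.deriv, heq x (hr.trans hxr)]
    · refine setLIntegral_congr_fun measurableSet_Ioo fun x hx => ?_
      rw [heq x hx.1]
  rw [hmeas]
  refine core p hp ψ hψm hψL (deriv ψ) (measurable_deriv ψ) ?_ hMuck' M Q hM hQ hY
  filter_upwards [hd] with x hx
  exact hx.differentiableAt.hasDerivAt
end
end

section
/- Let p > 1 and let μ(dx) = x^α·e^{-x^β} dx on (0,∞), where either β = 0 and α ≠ p−1, or β > 0 and 0 ≤ α < p−1. Suppose M is an N-function satisfying condition (M), and Q is another N-function such that (M(t)/t²)·r·s ≤ M(t) + c·r^p + Q(s) for some c > 0 and all t, r, s > 0. Then there exist constants K₁, K₂, K > 0, independent of u, such that for every u ∈ C₀^∞((0,∞)): ∫_{(0,∞)} M(|u'|) dμ ≤ K₁·∫_{(0,∞)} |u''|^p dμ + K₂·∫_{(0,∞)} Q(|u|) dμ, and ‖u'‖²_{L^M((0,∞),μ)} ≤ K·‖u''‖_{L^p((0,∞),μ)}·‖u‖_{L^Q((0,∞),μ)}. -/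
/-!
Write `w = x^α e^{-x^β}` and let `G(t) = M(|t|)/t`. Integrating `|u'| · M(|u'|)/|u'| · w` by
parts against `u` gives

  `∫ M(|u'|) w ≤ C ∫ (M(|u'|)/|u'|²) |u''| |u| w + ∫ (M(|u'|)/|u'|) |u| |w'|`,

because convexity and the Δ₂-condition give `t M'(t) ≤ C M(t)`, so that `|G'(t)| ≤ C M(|t|)/t²`.
As `G` need not be differentiable at `0`, the argument is run with the `C¹` regularisation
`M(|t|) t / (t² + ε)` (`regG`), whose derivative obeys the same bound uniformly in `ε`, and then
`ε → 0` by dominated convergence.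

There is a function `ψ = (1 + κ x^β)/x` (`κ = 0` if `β = 0`, `κ = 1/(p-1)` otherwise) with
`|w'| ≤ C ψ w`, and the last integrand is then at most
`C (M(|u'|)/|u'|²) (ψ |u'|) |u| w`. The Young-type hypothesis, with the middle variable rescaled
so that `M` and `Q` carry small constants (`scaled_young`), bounds both terms by
`½ ∫ M(|u'|) w + ½ ∫ Q(|u|) w + C ∫ |u''|^p w + C ∫ (ψ |u'|)^p w`. Hardy's inequality (`hardy`)
applied to `u'` absorbs the last integral into `∫ |u''|^p w`; it holds because `ψ^(p-1) w` is
monotone with derivative at least `c ψ^p w` in modulus (`HardyWeight`, `exists_hardyWeight`), and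
this is where the restrictions on `α`, `β` enter.

The same computation applied to `u' / √(A B)`, with `u''` scaled by `A` and `u` by `B`, costs
nothing since the products of the scalings agree. This is `core`: it gives the additive inequality
for `A = B = 1`, while for `A`, `B` admissible in the Luxemburg norms of `u''` and `u` it bounds
the modular of `u' / √(A B)` by a constant. By convexity a constant multiple of `√(A B)` is then
admissible for `u'`, and taking infima over `A` and `B` gives the multiplicative inequality.
-/

open MeasureTheory Filter Set ENNReal

noncomputable section

/-- The measure `μ(dx) = x^α e^{-x^β} dx` on `(0,∞)`. -/
def measPE (α β : ℝ) : Measure ℝ :=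
  (volume.restrict (Ioi 0)).withDensity fun x =>
    ENNReal.ofReal (x ^ α * Real.exp (-(x ^ β)))

/-! ### The `C¹` regularisation of `M(|t|)/t` -/

/-- For a convex function vanishing at `0`, the Δ₂-condition bounds `t M'(t)` by a multiple
of `M(t)`: the tangent at `t` lies below the chord over `[t, 2t]`. -/
lemma deriv_bound {M : ℝ → ℝ} (hM : CondM M) :
    (∀ t > (0:ℝ), DifferentiableAt ℝ M t) ∧
    ∃ C ≥ (0:ℝ), ∀ t > (0:ℝ), 0 ≤ t * deriv M t ∧ t * deriv M t ≤ C * M t := by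
  obtain ⟨⟨-, hconv, h0, hnn, -, -⟩, hC1, ⟨c, hc, hD⟩, -⟩ := hM
  have hdiff : ∀ t > (0:ℝ), DifferentiableAt ℝ M t := fun t ht =>
    (hC1.differentiableOn (by norm_num)).differentiableAt (Ioi_mem_nhds ht)
  refine ⟨hdiff, c, hc.le, fun t ht => ⟨?_, ?_⟩⟩
  · have h := hconv.slope_le_of_hasDerivAt (x := 0) (y := t) (by simp) (by simpa using ht.le) ht
      (hdiff t ht).hasDerivAt
    rw [slope_def_field, h0] at h
    have : 0 ≤ (M t - 0) / (t - 0) := div_nonneg (by simpa using hnn t ht.le) (by linarith)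
    exact mul_nonneg ht.le (this.trans h)
  · have h := hconv.le_slope_of_hasDerivAt (x := t) (y := 2 * t) (by simpa using ht.le)
      (by simp only [mem_Ici]; linarith) (by linarith) (hdiff t ht).hasDerivAt
    rw [slope_def_field, le_div_iff₀ (by linarith)] at h
    have h1 := hD t ht
    have h2 := hnn t ht.le
    nlinarith

lemma continuous_comp_abs {M : ℝ → ℝ} (h : ContinuousOn M (Ici 0)) :
    Continuous fun t => M |t| :=
  h.comp_continuous continuous_abs fun t => abs_nonneg t

lemma continuous_mul_deriv {M : ℝ → ℝ} (hM : CondM M) :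
    Continuous fun t => |t| * deriv M |t| := by
  obtain ⟨-, C, hC, hb⟩ := deriv_bound hM
  have hcM := continuous_comp_abs hM.1.1
  have hd : ContinuousOn (deriv M) (Ioi 0) :=
    hM.2.1.continuousOn_deriv_of_isOpen isOpen_Ioi (by norm_num)
  rw [continuous_iff_continuousAt]
  intro t
  rcases eq_or_ne t 0 with rfl | ht
  · have h1 : Tendsto (fun t => C * M |t|) (nhds 0) (nhds 0) := by
      have := (hcM.const_mul C).tendsto 0
      simpa [hM.1.2.2.1] using this
    have hz : ∀ t : ℝ, 0 ≤ |t| * deriv M |t| ∧ |t| * deriv M |t| ≤ C * M |t| := by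
      intro t
      rcases eq_or_ne t 0 with rfl | ht
      · simp [hM.1.2.2.1]
      · exact hb |t| (abs_pos.mpr ht)
    have := squeeze_zero (fun t => (hz t).1) (fun t => (hz t).2) h1
    simpa [ContinuousAt] using this
  · refine continuous_abs.continuousAt.mul ?_
    exact ContinuousAt.comp (f := fun t : ℝ => |t|) (g := deriv M)
      (hd.continuousAt (Ioi_mem_nhds (abs_pos.mpr ht))) continuous_abs.continuousAt

/-- `t ↦ M(|t|) t` is `C¹` on the whole line; at `0` this uses only `M(0) = 0`. -/
lemma hasDerivAt_mul_self {M : ℝ → ℝ} (hM : CondM M) (t : ℝ) :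
    HasDerivAt (fun t => M |t| * t) (M |t| + |t| * deriv M |t|) t := by
  rcases eq_or_ne t 0 with rfl | ht
  · rw [hasDerivAt_iff_tendsto_slope_zero]
    have h1 : Tendsto (fun t => M |t|) (nhdsWithin 0 {0}ᶜ) (nhds (M |0|)) :=
      ((continuous_comp_abs hM.1.1).tendsto 0).mono_left nhdsWithin_le_nhds
    have : M |0| + |0| * deriv M |0| = M |(0:ℝ)| := by simp
    rw [this]
    refine h1.congr' ?_
    filter_upwards [self_mem_nhdsWithin] with t ht
    have ht : t ≠ 0 := ht
    simp only [zero_add, mul_zero, sub_zero, smul_eq_mul]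
    field_simp
  · have h := (((deriv_bound hM).1 |t| (abs_pos.mpr ht)).hasDerivAt.comp t
      (hasDerivAt_abs ht)).mul (hasDerivAt_id t)
    refine h.congr_deriv ?_
    simp only [Function.comp_apply, id, mul_assoc, sign_mul_self]
    ring

/-- The regularisation `M(|t|) t / (t² + ε)` of `M(|t|) / t`; it is `C¹` for `ε > 0`. -/
def regG (M : ℝ → ℝ) (ε t : ℝ) : ℝ := M |t| * t / (t ^ 2 + ε)

/-- The derivative of `regG M ε`. -/
def regG' (M : ℝ → ℝ) (ε t : ℝ) : ℝ :=
  ((M |t| + |t| * deriv M |t|) * (t ^ 2 + ε) - M |t| * t * (2 * t)) / (t ^ 2 + ε) ^ 2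

lemma hasDerivAt_regG {M : ℝ → ℝ} (hM : CondM M) {ε : ℝ} (hε : 0 < ε) (t : ℝ) :
    HasDerivAt (regG M ε) (regG' M ε t) t := by
  have h2 : HasDerivAt (fun t : ℝ => t ^ 2 + ε) (2 * t) t := by
    simpa using (hasDerivAt_pow 2 t).add_const ε
  exact (hasDerivAt_mul_self hM t).div h2 (by positivity)

lemma continuous_regG {M : ℝ → ℝ} (hM : CondM M) {ε : ℝ} (hε : 0 < ε) :
    Continuous (regG M ε) :=
  continuous_iff_continuousAt.mpr fun t => (hasDerivAt_regG hM hε t).continuousAt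

lemma continuous_regG' {M : ℝ → ℝ} (hM : CondM M) {ε : ℝ} (hε : 0 < ε) :
    Continuous (regG' M ε) := by
  have h1 := continuous_comp_abs hM.1.1
  have h2 := continuous_mul_deriv hM
  unfold regG'
  refine Continuous.div ?_ (by fun_prop) fun t => by positivity
  exact ((h1.add h2).mul (by fun_prop)).sub ((h1.mul continuous_id).mul (by fun_prop))

lemma abs_regG_le {M : ℝ → ℝ} (hnn : ∀ x ≥ (0:ℝ), 0 ≤ M x) {ε : ℝ} (hε : 0 < ε) {t : ℝ}
    (ht : t ≠ 0) : |regG M ε t| ≤ M |t| / |t| ^ 2 * |t| := by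
  have hm := hnn |t| (abs_nonneg t)
  have ht' := abs_pos.mpr ht
  unfold regG
  rw [abs_div, abs_mul, abs_of_nonneg hm, abs_of_pos (a := t ^ 2 + ε) (by positivity),
    div_mul_eq_mul_div, sq_abs]
  gcongr
  linarith

/-- The derivative of the regularisation is controlled by `M(|t|)/t²` uniformly in `ε`. -/
lemma abs_regG'_le {M : ℝ → ℝ} (hnn : ∀ x ≥ (0:ℝ), 0 ≤ M x) {C : ℝ}
    (hC : ∀ t > (0:ℝ), 0 ≤ t * deriv M t ∧ t * deriv M t ≤ C * M t)
    {ε : ℝ} (hε : 0 < ε) {t : ℝ} (ht : t ≠ 0) :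
    |regG' M ε t| ≤ (C + 3) * (M |t| / |t| ^ 2) := by
  have hm := hnn |t| (abs_nonneg t)
  have ht' := abs_pos.mpr ht
  obtain ⟨h1, h2⟩ := hC |t| ht'
  have ht2 : 0 < t ^ 2 := by positivity
  unfold regG'
  rw [sq_abs, abs_div, abs_of_pos (a := (t ^ 2 + ε) ^ 2) (by positivity),
    ← mul_div_assoc, div_le_div_iff₀ (by positivity) (by positivity)]
  set s := t ^ 2 with hs
  set D := |t| * deriv M |t|
  set m := M |t|
  have e : m * t * (2 * t) = 2 * (m * s) := by rw [hs]; ring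
  have hS : 0 < s + ε := by positivity
  have hb : |(m + D) * (s + ε) - m * t * (2 * t)| ≤ (C + 3) * m * (s + ε) := by
    rw [e, abs_le]
    constructor
    · nlinarith [mul_nonneg hm hε.le, mul_nonneg hm ht2.le, mul_nonneg h1 hS.le,
        mul_nonneg (h1.trans h2) hS.le]
    · nlinarith [mul_nonneg hm hε.le, mul_nonneg hm ht2.le,
        mul_le_mul_of_nonneg_right h2 hS.le]
  calc _ ≤ (C + 3) * m * (s + ε) * s := by gcongr
    _ ≤ (C + 3) * m * (s + ε) * (s + ε) := by
      gcongr
      · exact (abs_nonneg _).trans hb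
      · linarith
    _ = _ := by ring

/-! ### Weighted Hardy inequality -/

/-- A Young inequality with a prescribed small constant in front of `X ^ p`. -/
lemma young_small {p c : ℝ} (hp : 1 < p) (hc : 0 < c) : ∃ D ≥ (0:ℝ), ∀ X ≥ (0:ℝ), ∀ Y ≥ (0:ℝ),
    p * X ^ (p - 1) * Y ≤ c * X ^ p + D * Y ^ p := by
  have hp0 : 0 < p := by linarith
  have key : ∀ X ≥ (0:ℝ), X ^ (p - 1) * X = X ^ p := fun X hX => by
    rw [← Real.rpow_add_one' hX (by linarith)]; simp
  refine ⟨p * (p / c) ^ (p - 1), by positivity, fun X hX Y hY => ?_⟩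
  -- either `Y` is small compared with `X`, or `X` is dominated by `Y`
  rcases le_total Y (c / p * X) with h | h
  · calc p * X ^ (p - 1) * Y ≤ p * X ^ (p - 1) * (c / p * X) := by gcongr
      _ = c * (X ^ (p - 1) * X) := by field_simp
      _ ≤ _ := by rw [key X hX]; exact le_add_of_nonneg_right (by positivity)
  · have h' : X ≤ p / c * Y := by
      calc X = p / c * (c / p * X) := by field_simp
        _ ≤ _ := by gcongr
    calc p * X ^ (p - 1) * Y ≤ p * (p / c * Y) ^ (p - 1) * Y := by
          gcongr
      _ = p * (p / c) ^ (p - 1) * (Y ^ (p - 1) * Y) := by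
          rw [Real.mul_rpow (by positivity) hY]; ring
      _ ≤ _ := by rw [key Y hY]; exact le_add_of_nonneg_left (by positivity)

/-- Data for a Hardy inequality with weight `w` on `(0,∞)`: the function `h = ψ^(p-1) w` is
monotone in the direction `s = ±1`, with `|h'| ≥ c ψ^p w`, and `ψ` dominates the logarithmic
derivative of `w`. -/
structure HardyWeight (p : ℝ) (w ψ w' h' : ℝ → ℝ) (s c C : ℝ) : Prop where
  sign : |s| = 1
  c_pos : 0 < c
  C_nonneg : 0 ≤ C
  w_pos : ∀ x > (0:ℝ), 0 < w x
  psi_pos : ∀ x > (0:ℝ), 0 < ψ x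
  psi_cont : ContinuousOn ψ (Ioi 0)
  w_deriv : ∀ x > (0:ℝ), HasDerivAt w (w' x) x
  w'_cont : ContinuousOn w' (Ioi 0)
  h_deriv : ∀ x > (0:ℝ), HasDerivAt (fun y => ψ y ^ (p - 1) * w y) (h' x) x
  h'_cont : ContinuousOn h' (Ioi 0)
  h'_ge : ∀ x > (0:ℝ), c * (ψ x ^ p * w x) ≤ s * h' x
  w'_le : ∀ x > (0:ℝ), |w' x| ≤ C * (ψ x * w x)

lemma HardyWeight.w_cont {p : ℝ} {w ψ w' h' : ℝ → ℝ} {s c C : ℝ}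
    (H : HardyWeight p w ψ w' h' s c C) : ContinuousOn w (Ioi 0) :=
  fun x hx => (H.w_deriv x hx).continuousAt.continuousWithinAt

lemma Icc_sub_Ioi {a b : ℝ} (ha : 0 < a) : Icc a b ⊆ Ioi 0 := fun _ hx => ha.trans_le hx.1

lemma ii_of_contOn {f : ℝ → ℝ} {a b : ℝ} (hab : a < b) (hf : ContinuousOn f (Icc a b)) :
    IntervalIntegrable f volume a b :=
  ContinuousOn.intervalIntegrable (by rwa [uIcc_of_le hab.le])

lemma continuous_abs_rpow_mul {p : ℝ} (hp : 1 < p) :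
    Continuous fun x : ℝ => p * |x| ^ (p - 2) * x := by
  have h := (contDiff_norm_rpow (E := ℝ) hp).continuous_deriv le_rfl
  refine h.congr fun x => ?_
  exact (hasDerivAt_abs_rpow x hp).deriv

/-- Hardy's inequality, with a constant independent of the interval: integrate
`(|v|^p ψ^(p-1) w)'` and absorb. -/
lemma hardy_s12 {p : ℝ} (hp : 1 < p) {w ψ w' h' : ℝ → ℝ} {s c C : ℝ}
    (H : HardyWeight p w ψ w' h' s c C) :
    ∃ D ≥ (0:ℝ), ∀ a b : ℝ, 0 < a → a < b → ∀ v v' : ℝ → ℝ, (∀ x, HasDerivAt v (v' x) x) →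
      Continuous v' → v a = 0 → v b = 0 →
      ∫ x in a..b, (ψ x * |v x|) ^ p * w x ≤ D * ∫ x in a..b, |v' x| ^ p * w x := by
  have hp0 : 0 < p := by linarith
  have hc := H.c_pos
  obtain ⟨D, hD, hy⟩ := young_small hp (half_pos hc)
  refine ⟨2 / c * D, by positivity, fun a b ha hab v v' hv hv' hva hvb => ?_⟩
  have hsub := Icc_sub_Ioi (b := b) ha
  have hvc : Continuous v := continuous_iff_continuousAt.mpr fun x => (hv x).continuousAt
  have hw := H.w_cont.mono hsub
  have hψ := H.psi_cont.mono hsub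
  have hh' := H.h'_cont.mono hsub
  have hh : ContinuousOn (fun y => ψ y ^ (p - 1) * w y) (Icc a b) :=
    (hψ.rpow_const fun x _ => Or.inr (by linarith)).mul hw
  set f' : ℝ → ℝ := fun x => p * |v x| ^ (p - 2) * v x * v' x * (ψ x ^ (p - 1) * w x) +
    |v x| ^ p * h' x with hf'
  have hvp : Continuous fun x => |v x| ^ p := hvc.abs.rpow_const fun x => Or.inr hp0.le
  have hi : IntervalIntegrable f' volume a b := by
    refine ii_of_contOn hab (((ContinuousOn.mul ?_ hh)).add (hvp.continuousOn.mul hh'))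
    exact (((continuous_abs_rpow_mul hp).comp hvc).mul hv').continuousOn
  have hz : ∫ x in a..b, f' x = 0 := by
    rw [intervalIntegral.integral_eq_sub_of_hasDerivAt
      (f := fun x => |v x| ^ p * (ψ x ^ (p - 1) * w x)) ?_ hi]
    · simp [hva, hvb, Real.zero_rpow hp0.ne']
    · intro x hx
      rw [uIcc_of_le hab.le] at hx
      exact ((hasDerivAt_abs_rpow (v x) hp).comp x (hv x)).mul (H.h_deriv x (hsub hx))
  have hX : IntervalIntegrable (fun x => (ψ x * |v x|) ^ p * w x) volume a b :=
    ii_of_contOn hab (((hψ.mul hvc.abs.continuousOn).rpow_const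
      fun x _ => Or.inr hp0.le).mul hw)
  have hY : IntervalIntegrable (fun x => |v' x| ^ p * w x) volume a b :=
    ii_of_contOn hab ((hv'.abs.rpow_const fun x => Or.inr hp0.le).continuousOn.mul hw)
  have hmono : ∫ x in a..b, (c / 2 * ((ψ x * |v x|) ^ p * w x) - D * (|v' x| ^ p * w x)) ≤
      ∫ x in a..b, s * f' x := by
    refine intervalIntegral.integral_mono_on hab.le ((hX.const_mul _).sub (hY.const_mul _))
      (hi.const_mul _) fun x hx => ?_
    have hx0 : 0 < x := hsub hx
    have hwx := H.w_pos x hx0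
    have hψx := H.psi_pos x hx0
    have h1 := hy (ψ x * |v x|) (by positivity) |v' x| (abs_nonneg _)
    have h2 := H.h'_ge x hx0
    have h3 : |s * (p * |v x| ^ (p - 2) * v x * v' x * (ψ x ^ (p - 1) * w x))| =
        p * (ψ x * |v x|) ^ (p - 1) * |v' x| * w x := by
      have e : |v x| ^ (p - 2) * |v x| = |v x| ^ (p - 1) := by
        rw [← Real.rpow_add_one' (abs_nonneg _) (by linarith)]; congr 1; ring
      rw [abs_mul, H.sign, abs_mul, abs_mul, abs_mul, abs_mul, abs_of_pos hp0,
        abs_of_nonneg (a := |v x| ^ (p - 2)) (by positivity),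
        abs_of_nonneg (a := ψ x ^ (p - 1) * w x) (by positivity),
        Real.mul_rpow hψx.le (abs_nonneg _), ← e]
      ring
    have h4 := neg_abs_le (s * (p * |v x| ^ (p - 2) * v x * v' x * (ψ x ^ (p - 1) * w x)))
    rw [h3] at h4
    have h5 := mul_le_mul_of_nonneg_left h2 (a := |v x| ^ p) (by positivity)
    have h6 := mul_le_mul_of_nonneg_right h1 hwx.le
    simp only [hf']
    have em : (ψ x * |v x|) ^ p = ψ x ^ p * |v x| ^ p := Real.mul_rpow hψx.le (abs_nonneg _)
    rw [em] at h6 ⊢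
    linarith
  rw [intervalIntegral.integral_const_mul, hz,
    intervalIntegral.integral_sub (hX.const_mul _) (hY.const_mul _),
    intervalIntegral.integral_const_mul, intervalIntegral.integral_const_mul] at hmono
  rw [mul_assoc, div_mul_eq_mul_div, le_div_iff₀ hc]
  linarith

/-! ### The additive inequality with free scalings -/

/-- The Young-type inequality with a prescribed factor `A` on the left and small constants in
front of `M` and `Q`: rescale the variable `r`. -/
lemma scaled_young {p : ℝ} {M Q : ℝ → ℝ} (hMnn : ∀ x ≥ (0:ℝ), 0 ≤ M x)
    (hQnn : ∀ x ≥ (0:ℝ), 0 ≤ Q x)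
    (hY : ∃ c > (0:ℝ), ∀ t > (0:ℝ), ∀ r > (0:ℝ), ∀ s > (0:ℝ),
      M t / t ^ 2 * r * s ≤ M t + c * r ^ p + Q s) {A : ℝ} (hA : 0 < A) :
    ∃ D ≥ (0:ℝ), ∀ t > (0:ℝ), ∀ r ≥ (0:ℝ), ∀ s ≥ (0:ℝ),
      A * (M t / t ^ 2 * r * s) ≤ 1 / 4 * M t + D * r ^ p + 1 / 4 * Q s := by
  obtain ⟨c, hc, hY⟩ := hY
  refine ⟨1 / 4 * c * (4 * A) ^ p, by positivity, fun t ht r hr s hs => ?_⟩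
  have h1 := hMnn t ht.le
  have h2 := hQnn s hs
  have h3 : (0:ℝ) ≤ 1 / 4 * c * (4 * A) ^ p * r ^ p := by positivity
  rcases hr.eq_or_lt with rfl | hr
  · simp only [mul_zero, zero_mul]; linarith
  rcases hs.eq_or_lt with rfl | hs
  · simp only [mul_zero]; linarith
  have h := hY t ht (4 * A * r) (by positivity) s hs
  rw [Real.mul_rpow (by positivity) hr.le] at h
  linarith

/-- The additive inequality, in the form with two free scaling parameters `A`, `B` from which
both parts of the result follow. -/
lemma core_s12 {p : ℝ} (hp : 1 < p) {M Q : ℝ → ℝ} (hM : CondM M) (hQ : IsNFunction Q)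
    (hY : ∃ c > (0:ℝ), ∀ t > (0:ℝ), ∀ r > (0:ℝ), ∀ s > (0:ℝ),
      M t / t ^ 2 * r * s ≤ M t + c * r ^ p + Q s)
    {w ψ w' h' : ℝ → ℝ} {s c C : ℝ} (H : HardyWeight p w ψ w' h' s c C) :
    ∃ K₁ > (0:ℝ), ∀ a b : ℝ, 0 < a → a < b → ∀ u u' u'' : ℝ → ℝ,
      (∀ x, HasDerivAt u (u' x) x) → (∀ x, HasDerivAt u' (u'' x) x) → Continuous u'' →
      u a = 0 → u b = 0 → u' a = 0 → u' b = 0 → ∀ A > 0, ∀ B > 0,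
      ∫ x in a..b, M |u' x / √(A * B)| * w x ≤
        K₁ * (∫ x in a..b, |u'' x / A| ^ p * w x) + ∫ x in a..b, Q |u x / B| * w x := by
  have hp0 : 0 < p := by linarith
  obtain ⟨DH, hDH, hardyH⟩ := hardy_s12 hp H
  obtain ⟨-, C₂, hC₂, hder⟩ := deriv_bound hM
  have hMnn := hM.1.2.2.2.1
  have hM0 := hM.1.2.2.1
  have hQnn := hQ.2.2.2.1
  have hMc := continuous_comp_abs hM.1.1
  have hQc := continuous_comp_abs hQ.1
  obtain ⟨D₁, hD₁, hy₁⟩ := scaled_young hMnn hQnn hY (A := C₂ + 3) (by positivity)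
  obtain ⟨D₂, hD₂, hy₂⟩ := scaled_young hMnn hQnn hY (A := C + 1)
    (by have := H.C_nonneg; positivity)
  refine ⟨2 * (D₁ + D₂ * DH) + 1, by positivity,
    fun a b ha hab u u' u'' hu hu' hu'' hua hub hu'a hu'b A hA B hB => ?_⟩
  have hsub := Icc_sub_Ioi (b := b) ha
  have hw := H.w_cont.mono hsub
  have hψ := H.psi_cont.mono hsub
  have huc : Continuous u := continuous_iff_continuousAt.mpr fun x => (hu x).continuousAt
  have hu'c : Continuous u' := continuous_iff_continuousAt.mpr fun x => (hu' x).continuousAt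
  set k := √(A * B) with hk
  have hkpos : 0 < k := Real.sqrt_pos.mpr (by positivity)
  have hkk : k * k = A * B := Real.mul_self_sqrt (by positivity)
  set v : ℝ → ℝ := fun x => u' x / k with hv
  have hvc : Continuous v := hu'c.div_const k
  have hvd : ∀ x, HasDerivAt v (u'' x / k) x := fun x => (hu' x).div_const k
  -- the four integrands
  have iM : IntervalIntegrable (fun x => M |v x| * w x) volume a b :=
    ii_of_contOn hab ((hMc.comp hvc).continuousOn.mul hw)
  have iQ : IntervalIntegrable (fun x => Q |u x / B| * w x) volume a b :=
    ii_of_contOn hab ((hQc.comp (huc.div_const B)).continuousOn.mul hw)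
  have iP : IntervalIntegrable (fun x => |u'' x / A| ^ p * w x) volume a b :=
    ii_of_contOn hab (((hu''.div_const A).abs.rpow_const fun x =>
      Or.inr hp0.le).continuousOn.mul hw)
  have iH : IntervalIntegrable (fun x => (ψ x * |u' x / A|) ^ p * w x) volume a b :=
    ii_of_contOn hab (((hψ.mul (hu'c.div_const A).abs.continuousOn).rpow_const
      fun x _ => Or.inr hp0.le).mul hw)
  have hH := hardyH a b ha hab (fun x => u' x / A) (fun x => u'' x / A)
    (fun x => (hu' x).div_const A) (hu''.div_const A) (by simp [hu'a]) (by simp [hu'b])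
  have step : ∀ ε > (0:ℝ), ∫ x in a..b, v x * regG M ε (v x) * w x ≤
      1 / 2 * (∫ x in a..b, M |v x| * w x) + D₁ * (∫ x in a..b, |u'' x / A| ^ p * w x) +
        D₂ * (∫ x in a..b, (ψ x * |u' x / A|) ^ p * w x) +
        1 / 2 * ∫ x in a..b, Q |u x / B| * w x := by
    intro ε hε
    have hG := (continuous_regG hM hε).comp hvc
    have hG' := (continuous_regG' hM hε).comp hvc
    set f' : ℝ → ℝ := fun x => (v x * regG M ε (v x) +
      u x / k * (regG' M ε (v x) * (u'' x / k))) * w x +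
        u x / k * regG M ε (v x) * w' x with hf'
    have hi : IntervalIntegrable f' volume a b := by
      refine ii_of_contOn hab ((ContinuousOn.mul ?_ hw).add
        (ContinuousOn.mul ?_ (H.w'_cont.mono hsub)))
      · exact ((hvc.mul hG).add ((huc.div_const k).mul
          (hG'.mul (hu''.div_const k)))).continuousOn
      · exact ((huc.div_const k).mul hG).continuousOn
    have hz : ∫ x in a..b, f' x = 0 := by
      rw [intervalIntegral.integral_eq_sub_of_hasDerivAt
        (f := fun x => u x / k * regG M ε (v x) * w x) ?_ hi]
      · simp [hua, hub]
      · intro x hx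
        rw [uIcc_of_le hab.le] at hx
        exact (((hu x).div_const k).mul ((hasDerivAt_regG hM hε (v x)).comp x (hvd x))).mul
          (H.w_deriv x (hsub hx))
    have i0 : IntervalIntegrable (fun x => v x * regG M ε (v x) * w x) volume a b :=
      ii_of_contOn hab ((hvc.mul hG).continuousOn.mul hw)
    have hmono : ∫ x in a..b, v x * regG M ε (v x) * w x ≤
        ∫ x in a..b, (f' x + (1 / 2 * (M |v x| * w x) + D₁ * (|u'' x / A| ^ p * w x) +
          D₂ * ((ψ x * |u' x / A|) ^ p * w x) + 1 / 2 * (Q |u x / B| * w x))) := by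
      refine intervalIntegral.integral_mono_on hab.le i0 (hi.add
        ((((iM.const_mul _).add (iP.const_mul _)).add (iH.const_mul _)).add
          (iQ.const_mul _))) fun x hx => ?_
      have hx0 : 0 < x := hsub hx
      have hwx := H.w_pos x hx0
      have hψx := H.psi_pos x hx0
      have hmn := hMnn |v x| (abs_nonneg _)
      have hqn := hQnn |u x / B| (abs_nonneg _)
      rcases eq_or_ne (v x) 0 with hvx | hvx
      · have hG0 : regG M ε 0 = 0 := by simp [regG]
        have hG'0 : regG' M ε 0 = 0 := by simp [regG', hM0]
        have : f' x = 0 := by simp [hf', hvx, hG0, hG'0]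
        rw [this, hvx, zero_mul, zero_mul, zero_add, abs_zero, hM0]
        positivity
      · have hvp := abs_pos.mpr hvx
        -- `k² = A B` distributes the scaling between `u''` (or `u'`) and `u`
        have huk : |u'' x / k| * |u x / k| = |u'' x / A| * |u x / B| := by
          simp only [abs_div, abs_of_pos hkpos, abs_of_pos hA, abs_of_pos hB]
          rw [div_mul_div_comm, div_mul_div_comm, hkk]
        have hvk : |v x| * |u x / k| = |u' x / A| * |u x / B| := by
          simp only [hv, abs_div, abs_of_pos hkpos, abs_of_pos hA, abs_of_pos hB]
          rw [div_mul_div_comm, div_mul_div_comm, hkk]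
        have e1 := hy₁ |v x| hvp |u'' x / A| (abs_nonneg _) |u x / B| (abs_nonneg _)
        have e2 := hy₂ |v x| hvp (ψ x * |u' x / A|) (by positivity) |u x / B| (abs_nonneg _)
        have g1 : |u x / k * (regG' M ε (v x) * (u'' x / k))| ≤
            (C₂ + 3) * (M |v x| / |v x| ^ 2 * |u'' x / A| * |u x / B|) := by
          calc _ = |regG' M ε (v x)| * (|u'' x / k| * |u x / k|) := by
                rw [abs_mul, abs_mul]; ring
            _ ≤ (C₂ + 3) * (M |v x| / |v x| ^ 2) * (|u'' x / A| * |u x / B|) := by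
                rw [huk]
                exact mul_le_mul_of_nonneg_right (abs_regG'_le hMnn hder hε hvx)
                  (by positivity)
            _ = _ := by ring
        have hCn := H.C_nonneg
        have g2 : |u x / k * regG M ε (v x) * w' x| ≤
            (C + 1) * (M |v x| / |v x| ^ 2 * (ψ x * |u' x / A|) * |u x / B|) * w x := by
          calc _ = |u x / k| * |regG M ε (v x)| * |w' x| := by
                rw [abs_mul, abs_mul]
            _ ≤ |u x / k| * (M |v x| / |v x| ^ 2 * |v x|) * ((C + 1) * (ψ x * w x)) := by
                gcongr
                · exact abs_regG_le hMnn hε hvx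
                · refine (H.w'_le x hx0).trans ?_
                  gcongr
                  linarith
            _ = (C + 1) * (M |v x| / |v x| ^ 2 * ψ x * (|v x| * |u x / k|)) * w x := by ring
            _ = _ := by rw [hvk]; ring
        have g1' := mul_le_mul_of_nonneg_right
          ((neg_le_of_abs_le (g1.trans e1))) hwx.le
        have g2' := neg_le_of_abs_le (g2.trans (mul_le_mul_of_nonneg_right e2 hwx.le))
        simp only [hf']
        linarith
    rw [intervalIntegral.integral_add hi ((((iM.const_mul _).add (iP.const_mul _)).add
        (iH.const_mul _)).add (iQ.const_mul _)), hz,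
      intervalIntegral.integral_add (((iM.const_mul _).add (iP.const_mul _)).add
        (iH.const_mul _)) (iQ.const_mul _),
      intervalIntegral.integral_add ((iM.const_mul _).add (iP.const_mul _)) (iH.const_mul _),
      intervalIntegral.integral_add (iM.const_mul _) (iP.const_mul _)] at hmono
    simpa only [intervalIntegral.integral_const_mul, zero_add] using hmono
  have lim : Tendsto (fun ε => ∫ x in a..b, v x * regG M ε (v x) * w x)
      (nhdsWithin 0 (Ioi 0)) (nhds (∫ x in a..b, M |v x| * w x)) := by
    refine intervalIntegral.tendsto_integral_filter_of_dominated_convergence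
      (fun x => M |v x| * w x) ?_ ?_ iM ?_
    · filter_upwards [self_mem_nhdsWithin] with ε hε
      have i0 : IntervalIntegrable (fun x => v x * regG M ε (v x) * w x) volume a b :=
        ii_of_contOn hab ((hvc.mul ((continuous_regG hM hε).comp hvc)).continuousOn.mul hw)
      exact i0.def'.aestronglyMeasurable
    · filter_upwards [self_mem_nhdsWithin] with ε hε
      have hε : 0 < ε := hε
      refine Eventually.of_forall fun x hx => ?_
      rw [uIoc_of_le hab.le] at hx
      have hwx := H.w_pos x (ha.trans hx.1)
      have hmn := hMnn |v x| (abs_nonneg _)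
      rw [Real.norm_eq_abs, abs_mul, abs_of_pos hwx]
      gcongr
      have : v x * regG M ε (v x) = M |v x| * (v x ^ 2 / (v x ^ 2 + ε)) := by
        unfold regG; ring
      rw [this, abs_of_nonneg (by positivity)]
      refine mul_le_of_le_one_right hmn ?_
      rw [div_le_one (by positivity)]
      linarith
    · refine Eventually.of_forall fun x hx => ?_
      refine Tendsto.mul_const _ ?_
      rcases eq_or_ne (v x) 0 with hvx | hvx
      · simp [hvx, hM0]
      · have h1 : Tendsto (fun ε : ℝ => v x * (M |v x| * v x / (v x ^ 2 + ε)))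
            (nhdsWithin 0 (Ioi 0)) (nhds (v x * (M |v x| * v x / (v x ^ 2 + 0)))) := by
          refine Tendsto.const_mul _ (Tendsto.div tendsto_const_nhds ?_ (by positivity))
          exact tendsto_const_nhds.add (tendsto_id.mono_left nhdsWithin_le_nhds)
        have e : v x * (M |v x| * v x / (v x ^ 2 + 0)) = M |v x| := by
          rw [add_zero]; field_simp
        rw [e] at h1
        exact h1
  have fin := le_of_tendsto lim (by
    filter_upwards [self_mem_nhdsWithin] with ε hε using step ε hε)
  have hPnn : 0 ≤ ∫ x in a..b, |u'' x / A| ^ p * w x := by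
    refine intervalIntegral.integral_nonneg hab.le fun x hx => ?_
    have := H.w_pos x (hsub hx)
    positivity
  have := mul_le_mul_of_nonneg_left hH hD₂
  simp only [hv] at fin
  linarith

/-! ### Power-exponential weights -/

/-- The Hardy data for `x^α e^{-x^β}`, with `ψ = (1 + ε x^β) / x`. The hypotheses `h1`, `h2` are the
two inequalities that remain after computing logarithmic derivatives and writing `y = x^β`. -/
lemma hardyWeight_of {p α β ε s c C : ℝ} (hε : 0 ≤ ε) (hs : |s| = 1) (hc : 0 < c)
    (hC : 0 ≤ C)
    (h1 : ∀ y > (0:ℝ), c * (1 + ε * y) ≤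
      s * ((p - 1) * (ε * β * y / (1 + ε * y) - 1) + α - β * y))
    (h2 : ∀ y > (0:ℝ), |α - β * y| ≤ C * (1 + ε * y)) :
    HardyWeight p (fun x => x ^ α * Real.exp (-(x ^ β))) (fun x => (1 + ε * x ^ β) / x)
      (fun x => (α - β * x ^ β) / x * (x ^ α * Real.exp (-(x ^ β))))
      (fun x => ((1 + ε * x ^ β) / x) ^ (p - 1) * (x ^ α * Real.exp (-(x ^ β))) / x *
        ((p - 1) * (ε * β * x ^ β / (1 + ε * x ^ β) - 1) + α - β * x ^ β)) s c C := by
  have hw : ∀ x > (0:ℝ), 0 < x ^ α * Real.exp (-(x ^ β)) := fun x hx => by positivity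
  have hden : ∀ x > (0:ℝ), 0 < 1 + ε * x ^ β := fun x hx => by positivity
  have hψ : ∀ x > (0:ℝ), 0 < (1 + ε * x ^ β) / x := fun x hx => div_pos (hden x hx) hx
  have hrc : ∀ r : ℝ, ContinuousOn (fun x : ℝ => x ^ r) (Ioi 0) := fun r =>
    continuousOn_id.rpow_const fun x hx => Or.inl (ne_of_gt hx)
  have hwc : ContinuousOn (fun x : ℝ => x ^ α * Real.exp (-(x ^ β))) (Ioi 0) :=
    (hrc α).mul ((hrc β).neg.rexp)
  have hdc : ContinuousOn (fun x : ℝ => 1 + ε * x ^ β) (Ioi 0) :=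
    continuousOn_const.add (continuousOn_const.mul (hrc β))
  have hψc : ContinuousOn (fun x : ℝ => (1 + ε * x ^ β) / x) (Ioi 0) :=
    hdc.div continuousOn_id fun x hx => ne_of_gt hx
  have hxr : ∀ x > (0:ℝ), ∀ r : ℝ, x ^ (r - 1) = x ^ r / x := fun x hx r => by
    rw [Real.rpow_sub_one hx.ne']
  have hwd : ∀ x > (0:ℝ), HasDerivAt (fun x : ℝ => x ^ α * Real.exp (-(x ^ β)))
      ((α - β * x ^ β) / x * (x ^ α * Real.exp (-(x ^ β)))) x := fun x hx => by
    have := (Real.hasDerivAt_rpow_const (p := α) (Or.inl hx.ne')).mul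
      ((Real.hasDerivAt_rpow_const (p := β) (Or.inl hx.ne')).neg.exp)
    refine this.congr_deriv ?_
    simp only [Pi.neg_apply]
    rw [hxr x hx, hxr x hx]
    ring
  refine ⟨hs, hc, hC, hw, hψ, hψc, hwd, ?_, ?_, ?_, ?_, ?_⟩
  · exact ((continuousOn_const.sub (continuousOn_const.mul (hrc β))).div continuousOn_id
      fun x hx => ne_of_gt hx).mul hwc
  · intro x hx
    have hd : HasDerivAt (fun x : ℝ => (1 + ε * x ^ β) / x)
        ((ε * (β * x ^ (β - 1)) * x - (1 + ε * x ^ β) * 1) / x ^ 2) x :=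
      (((Real.hasDerivAt_rpow_const (p := β) (Or.inl hx.ne')).const_mul ε).const_add 1).div
        (hasDerivAt_id x) hx.ne'
    have := (hd.rpow_const (p := p - 1) (Or.inl (hψ x hx).ne')).mul (hwd x hx)
    refine this.congr_deriv ?_
    have h0 := (hden x hx).ne'
    rw [Real.rpow_sub_one (hψ x hx).ne', hxr x hx]
    generalize ((1 + ε * x ^ β) / x) ^ (p - 1) = Z
    field_simp
    ring
  · refine (((hψc.rpow_const fun x hx => Or.inl (hψ x hx).ne').mul hwc).div continuousOn_id
      fun x hx => ne_of_gt hx).mul ?_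
    refine ((continuousOn_const.mul (ContinuousOn.sub (ContinuousOn.div
      (continuousOn_const.mul (hrc β)) hdc fun x hx => (hden x hx).ne')
      continuousOn_const)).add continuousOn_const).sub (continuousOn_const.mul (hrc β))
  · intro x hx
    have hy := h1 (x ^ β) (by positivity)
    have hψx := hψ x hx
    have hwx := hw x hx
    have e : ((1 + ε * x ^ β) / x) ^ p =
        ((1 + ε * x ^ β) / x) ^ (p - 1) * ((1 + ε * x ^ β) / x) := by
      rw [Real.rpow_sub_one hψx.ne', div_mul_cancel₀ _ hψx.ne']
    rw [e]
    have h := mul_le_mul_of_nonneg_left hy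
      (a := ((1 + ε * x ^ β) / x) ^ (p - 1) * (x ^ α * Real.exp (-(x ^ β))) / x) (by positivity)
    calc _ = ((1 + ε * x ^ β) / x) ^ (p - 1) * (x ^ α * Real.exp (-(x ^ β))) / x *
          (c * (1 + ε * x ^ β)) := by ring
      _ ≤ _ := h
      _ = _ := by ring
  · intro x hx
    have hy := h2 (x ^ β) (by positivity)
    have hwx := hw x hx
    rw [abs_mul, abs_div, abs_of_pos hx, abs_of_pos hwx]
    calc _ ≤ C * (1 + ε * x ^ β) / x * (x ^ α * Real.exp (-(x ^ β))) := by gcongr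
      _ = _ := by ring

lemma exists_hardyWeight {p α β : ℝ} (hp : 1 < p)
    (hcase : (β = 0 ∧ α ≠ p - 1) ∨ (0 < β ∧ 0 ≤ α ∧ α < p - 1)) :
    ∃ ψ w' h' s c C, HardyWeight p (fun x => x ^ α * Real.exp (-(x ^ β))) ψ w' h' s c C := by
  rcases hcase with ⟨rfl, hα⟩ | ⟨hβ, hα, hαp⟩
  · have hne : α - (p - 1) ≠ 0 := sub_ne_zero.mpr hα
    refine ⟨_, _, _, _, _, _, hardyWeight_of (ε := 0) (s := SignType.sign (α - (p - 1)))
      (c := |α - (p - 1)|) (C := |α|) le_rfl ?_ (abs_pos.mpr hne) (abs_nonneg _) ?_ ?_⟩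
    · rcases lt_or_gt_of_ne hne with h | h
      · simp [sign_neg h]
      · simp [sign_pos h]
    · intro y _
      rw [← sign_mul_self]
      apply le_of_eq
      ring
    · intro y _
      simp
  · have hp1 : 0 < p - 1 := by linarith
    -- `ε = 1 / (p - 1)` cancels the term linear in `β y` that could have the wrong sign
    refine ⟨_, _, _, _, _, _, hardyWeight_of (ε := 1 / (p - 1)) (s := -1)
      (c := min ((p - 1 - α) / 2) (β * (p - 1) / 2)) (C := |α| + β * (p - 1))
      (by positivity) (by simp) (lt_min (by linarith) (by positivity)) (by positivity) ?_ ?_⟩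
    · intro y hy
      set c := min ((p - 1 - α) / 2) (β * (p - 1) / 2)
      have hc1 : c ≤ (p - 1 - α) / 2 := min_le_left _ _
      have hc2 : c ≤ β * (p - 1) / 2 := min_le_right _ _
      set z := 1 / (p - 1) * y with hz
      have hzp : 0 < z := by positivity
      have hyz : y = (p - 1) * z := by rw [hz]; field_simp
      have e1 : 1 / (p - 1) * β * y = β * z := by rw [hz]; ring
      have e2 : -1 * ((p - 1) * (β * z / (1 + z) - 1) + α - β * y) =
          ((p - 1 - α) * (1 + z) + β * (p - 1) * z ^ 2) / (1 + z) := by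
        rw [hyz]; field_simp; ring
      rw [e1, e2, le_div_iff₀ (by positivity)]
      nlinarith [mul_le_mul_of_nonneg_right hc1 (by positivity : 0 ≤ 2 * (1 + z)),
        mul_le_mul_of_nonneg_right hc2 (by positivity : 0 ≤ 2 * z ^ 2),
        mul_le_mul_of_nonneg_right hc1 (by positivity : 0 ≤ 2 * z), sq_nonneg (1 - z),
        mul_nonneg (by linarith : 0 ≤ p - 1 - α) hzp.le,
        lt_min (by linarith : 0 < (p - 1 - α) / 2) (by positivity : 0 < β * (p - 1) / 2)]
    · intro y hy
      have h1 : (|α| + β * (p - 1)) * (1 + 1 / (p - 1) * y) =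
          |α| + β * (p - 1) + |α| * (1 / (p - 1) * y) + β * y := by field_simp; ring
      rw [h1]
      have h2 : |α - β * y| ≤ |α| + β * y := by
        refine (abs_sub _ _).trans ?_
        rw [abs_of_nonneg (a := β * y) (by positivity)]
      have : 0 ≤ β * (p - 1) + |α| * (1 / (p - 1) * y) := by positivity
      linarith

/-! ### Test functions and Luxemburg norms -/

lemma TestFun1.exists_support {u : ℝ → ℝ} (hu : TestFun1 u) :
    ∃ a b : ℝ, 0 < a ∧ a < b ∧ tsupport u ⊆ Ioo a b := by
  obtain ⟨-, hc, hs⟩ := hu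
  have hc : IsCompact (tsupport u) := hc
  rcases (tsupport u).eq_empty_or_nonempty with h | h
  · exact ⟨1, 2, by norm_num, by norm_num, by simp [h]⟩
  · obtain ⟨m, hm, hmin⟩ := hc.exists_isLeast h
    obtain ⟨n, hn, hmax⟩ := hc.exists_isGreatest h
    have hm0 : 0 < m := hs hm
    have hmn : m ≤ n := hmin hn
    refine ⟨m / 2, n + 1, by linarith, by linarith, fun x hx => ⟨?_, ?_⟩⟩
    · have := hmin hx
      linarith
    · have := hmax hx
      linarith

lemma integral_measPE {α β a b : ℝ} (ha : 0 < a) (hab : a < b) {f : ℝ → ℝ}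
    (hf : ∀ x, x ∉ Ioo a b → f x = 0) :
    ∫ x, f x ∂(measPE α β) = ∫ x in a..b, f x * (x ^ α * Real.exp (-(x ^ β))) := by
  unfold measPE
  rw [integral_withDensity_eq_integral_toReal_smul (by fun_prop) (by simp),
    intervalIntegral.integral_of_le hab.le]
  have h1 : ∫ x in Ioi (0:ℝ), (ENNReal.ofReal (x ^ α * Real.exp (-(x ^ β)))).toReal • f x =
      ∫ x in Ioi (0:ℝ), f x * (x ^ α * Real.exp (-(x ^ β))) := by
    refine setIntegral_congr_fun measurableSet_Ioi fun x hx => ?_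
    have hx : (0:ℝ) < x := hx
    simp only [smul_eq_mul]
    rw [ENNReal.toReal_ofReal (by positivity), mul_comm]
  rw [h1]
  refine setIntegral_eq_of_subset_of_forall_sdiff_eq_zero measurableSet_Ioi
    (fun x hx => ha.trans hx.1) fun x hx => ?_
  rw [hf x fun h => hx.2 ⟨h.1, h.2.le⟩, zero_mul]

/-- For `K ≥ 1`, convexity and `R 0 = 0` give `R (t / K) ≤ R t / K`. -/
lemma conv_div {R : ℝ → ℝ} (hR : ConvexOn ℝ (Ici 0) R) (h0 : R 0 = 0) {K t : ℝ} (hK : 1 ≤ K)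
    (ht : 0 ≤ t) : R (t / K) ≤ R t / K := by
  have hK0 : 0 < K := by linarith
  have hK1 : 1 / K ≤ 1 := by rw [div_le_one hK0]; exact hK
  have h := hR.2 (mem_Ici.mpr le_rfl) (mem_Ici.mpr ht) (sub_nonneg.mpr hK1)
    (by positivity : 0 ≤ 1 / K) (by ring)
  simp only [smul_eq_mul, mul_zero, zero_add, h0] at h
  calc R (t / K) = R (1 / K * t) := by congr 1; ring
    _ ≤ 1 / K * R t := h
    _ = R t / K := by ring

/-- Enlarging the scaling by a factor `D ≥ 1` that bounds the modular brings the modular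
below `1`. -/
lemma modular_le_one {α β a b : ℝ} (ha : 0 < a) (hab : a < b) {R : ℝ → ℝ}
    (hRc : ContinuousOn R (Ici 0)) (hR : ConvexOn ℝ (Ici 0) R) (h0 : R 0 = 0)
    {f : ℝ → ℝ} (hfc : Continuous f) (hf : ∀ x, x ∉ Ioo a b → f x = 0) {k D : ℝ} (hk : 0 < k)
    (hD : 1 ≤ D) (hI : ∫ x, R (|f x| / k) ∂(measPE α β) ≤ D) :
    ∫ x, R (|f x| / (k * D)) ∂(measPE α β) ≤ 1 := by
  have hD0 : 0 < D := by linarith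
  rw [integral_measPE ha hab fun x hx => by simp [hf x hx, h0]] at hI ⊢
  have hwc : ContinuousOn (fun x : ℝ => x ^ α * Real.exp (-(x ^ β))) (Icc a b) := by
    have hrc : ∀ r : ℝ, ContinuousOn (fun x : ℝ => x ^ r) (Icc a b) := fun r =>
      continuousOn_id.rpow_const fun x hx => Or.inl (ne_of_gt (ha.trans_le hx.1))
    exact (hrc α).mul ((hrc β).neg.rexp)
  have hi : ∀ c > (0:ℝ), IntervalIntegrable
      (fun x => R (|f x| / c) * (x ^ α * Real.exp (-(x ^ β)))) volume a b := fun c hc =>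
    ii_of_contOn hab (((hRc.comp_continuous (hfc.abs.div_const c)
      fun x => mem_Ici.mpr (div_nonneg (abs_nonneg _) hc.le)).continuousOn).mul hwc)
  calc _ ≤ ∫ x in a..b, D⁻¹ * (R (|f x| / k) * (x ^ α * Real.exp (-(x ^ β)))) := by
        refine intervalIntegral.integral_mono_on hab.le (hi _ (by positivity))
          ((hi k hk).const_mul _) fun x hx => ?_
        have hx0 : 0 < x := ha.trans_le hx.1
        have h := conv_div hR h0 hD (t := |f x| / k) (div_nonneg (abs_nonneg _) hk.le)
        have hwx : 0 ≤ x ^ α * Real.exp (-(x ^ β)) := by positivity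
        refine (mul_le_mul_of_nonneg_right ?_ hwx).trans_eq (mul_assoc _ _ _)
        rw [← div_div]
        exact h.trans_eq (by ring)
    _ = D⁻¹ * ∫ x in a..b, R (|f x| / k) * (x ^ α * Real.exp (-(x ^ β))) :=
        intervalIntegral.integral_const_mul _ _
    _ ≤ D⁻¹ * D := by gcongr
    _ = 1 := inv_mul_cancel₀ hD0.ne'

lemma lux_nonempty_s12 {α β a b : ℝ} (ha : 0 < a) (hab : a < b) {R : ℝ → ℝ}
    (hRc : ContinuousOn R (Ici 0)) (hR : ConvexOn ℝ (Ici 0) R) (h0 : R 0 = 0)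
    {f : ℝ → ℝ} (hfc : Continuous f) (hf : ∀ x, x ∉ Ioo a b → f x = 0) :
    {K : ℝ | 0 < K ∧ ∫ x, R (|f x| / K) ∂(measPE α β) ≤ 1}.Nonempty :=
  ⟨1 * max 1 (∫ x, R (|f x| / 1) ∂(measPE α β)), by positivity,
    modular_le_one ha hab hRc hR h0 hfc hf one_pos (le_max_left _ _) (le_max_right _ _)⟩

/-- A bound `L ≤ D a b` for all members of two sets of positive reals passes to the infima. -/
lemma le_mul_sInf {S T : Set ℝ} (hS : S.Nonempty) (hT : T.Nonempty) (hS0 : ∀ a ∈ S, 0 < a)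
    (hT0 : ∀ b ∈ T, 0 < b) {L D : ℝ} (hD : 0 < D) (h : ∀ a ∈ S, ∀ b ∈ T, L ≤ D * a * b) :
    L ≤ D * sInf S * sInf T := by
  have h1 : ∀ b ∈ T, L ≤ D * sInf S * b := fun b hb => by
    have hb0 := hT0 b hb
    have : L / (D * b) ≤ sInf S := le_csInf hS fun a ha => by
      rw [div_le_iff₀ (by positivity)]
      linarith [h a ha b hb]
    rw [div_le_iff₀ (by positivity)] at this
    linarith
  have hs : 0 ≤ sInf S := Real.sInf_nonneg fun a ha => (hS0 a ha).le
  rcases hs.eq_or_lt with hs | hs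
  · obtain ⟨b, hb⟩ := hT
    have := h1 b hb
    rw [← hs] at this ⊢
    simpa using this
  · have : L / (D * sInf S) ≤ sInf T := le_csInf hT fun b hb => by
      rw [div_le_iff₀ (by positivity)]
      linarith [h1 b hb]
    rw [div_le_iff₀ (by positivity)] at this
    linarith

/-- Theorem 4.4: Gagliardo–Nirenberg inequalities for power-exponential weights
`x^α e^{-x^β}` on `(0,∞)`. -/
theorem statement12 (p α β : ℝ) (hp : 1 < p)
    (hcase : (β = 0 ∧ α ≠ p - 1) ∨ (0 < β ∧ 0 ≤ α ∧ α < p - 1))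
    (M Q : ℝ → ℝ) (hM : CondM M) (hQ : IsNFunction Q)
    (hY : ∃ c > (0:ℝ), ∀ t > (0:ℝ), ∀ r > (0:ℝ), ∀ s > (0:ℝ),
      M t / t ^ 2 * r * s ≤ M t + c * r ^ p + Q s) :
    ∃ K₁ > (0:ℝ), ∃ K₂ > (0:ℝ), ∃ K > (0:ℝ), ∀ u : ℝ → ℝ, TestFun1 u →
      (∫ x, M |deriv u x| ∂(measPE α β) ≤
        K₁ * ∫ x, |deriv (deriv u) x| ^ p ∂(measPE α β)
          + K₂ * ∫ x, Q |u x| ∂(measPE α β)) ∧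
      luxNorm M (measPE α β) (fun x => deriv u x) ^ 2 ≤
        K * luxNorm (fun l => l ^ p) (measPE α β) (fun x => deriv (deriv u) x) *
          luxNorm Q (measPE α β) u := by
  obtain ⟨ψ, w', h', s, c, C, H⟩ := exists_hardyWeight hp hcase
  obtain ⟨K₁, hK₁, hcore⟩ := core_s12 hp hM hQ hY H
  have hp0 : 0 < p := by linarith
  refine ⟨K₁, hK₁, 1, one_pos, (K₁ + 1) ^ 2, by positivity, fun u hu => ?_⟩
  obtain ⟨a, b, ha, hab, hsupp⟩ := hu.exists_support
  have hu1 : ContDiff ℝ (⊤ : ℕ∞) (deriv u) := (contDiff_infty_iff_deriv.mp hu.1).2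
  have hu2 : ContDiff ℝ (⊤ : ℕ∞) (deriv (deriv u)) := (contDiff_infty_iff_deriv.mp hu1).2
  have d0 : ∀ x, HasDerivAt u (deriv u x) x := fun x =>
    ((hu.1.differentiable (by simp)) x).hasDerivAt
  have d1 : ∀ x, HasDerivAt (deriv u) (deriv (deriv u) x) x := fun x =>
    ((hu1.differentiable (by simp)) x).hasDerivAt
  have z0 : ∀ x, x ∉ Ioo a b → u x = 0 := fun x hx =>
    image_eq_zero_of_notMem_tsupport fun h => hx (hsupp h)
  have z1 : ∀ x, x ∉ Ioo a b → deriv u x = 0 := fun x hx =>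
    image_eq_zero_of_notMem_tsupport fun h => hx (hsupp (tsupport_deriv_subset h))
  have z2 : ∀ x, x ∉ Ioo a b → deriv (deriv u) x = 0 := fun x hx =>
    image_eq_zero_of_notMem_tsupport fun h =>
      hx (hsupp (tsupport_deriv_subset (tsupport_deriv_subset h)))
  have hM0 := hM.1.2.2.1
  have hQ0 := hQ.2.2.1
  -- the two-parameter inequality in terms of `measPE`
  have key : ∀ A > 0, ∀ B > 0, ∫ x, M (|deriv u x| / √(A * B)) ∂(measPE α β) ≤
      K₁ * ∫ x, (|deriv (deriv u) x| / A) ^ p ∂(measPE α β)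
        + ∫ x, Q (|u x| / B) ∂(measPE α β) := by
    intro A hA B hB
    have h := hcore a b ha hab u (deriv u) (deriv (deriv u)) d0 d1 hu2.continuous
      (z0 a (by simp)) (z0 b (by simp)) (z1 a (by simp)) (z1 b (by simp)) A hA B hB
    have hk : 0 < √(A * B) := Real.sqrt_pos.mpr (by positivity)
    rw [integral_measPE ha hab fun x hx => by simp [z1 x hx, hM0],
      integral_measPE ha hab fun x hx => by simp [z2 x hx, Real.zero_rpow hp0.ne'],
      integral_measPE ha hab fun x hx => by simp [z0 x hx, hQ0]]
    simpa only [abs_div, abs_of_pos hA, abs_of_pos hB, abs_of_pos hk] using h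
  refine ⟨by simpa using key 1 one_pos 1 one_pos, ?_⟩
  have hrc : ContinuousOn (fun l : ℝ => l ^ p) (Ici 0) :=
    (Real.continuous_rpow_const hp0.le).continuousOn
  refine le_mul_sInf
    (lux_nonempty_s12 ha hab hrc (convexOn_rpow hp.le) (Real.zero_rpow hp0.ne') hu2.continuous z2)
    (lux_nonempty_s12 ha hab hQ.1 hQ.2.1 hQ0 hu.1.continuous z0)
    (fun a ha => ha.1) (fun a ha => ha.1) (by positivity) ?_
  rintro A ⟨hA, hIA⟩ B ⟨hB, hIB⟩
  have hk : 0 < √(A * B) := Real.sqrt_pos.mpr (by positivity)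
  have hI : ∫ x, M (|deriv u x| / √(A * B)) ∂(measPE α β) ≤ K₁ + 1 :=
    (key A hA B hB).trans (add_le_add (mul_le_of_le_one_right hK₁.le hIA) hIB)
  have hmem := modular_le_one ha hab hM.1.1 hM.1.2.1 hM0 hu1.continuous z1 hk
    (by linarith : 1 ≤ K₁ + 1) hI
  have hle : luxNorm M (measPE α β) (fun x => deriv u x) ≤ √(A * B) * (K₁ + 1) :=
    csInf_le ⟨0, fun K hK => hK.1.le⟩ ⟨by positivity, hmem⟩
  have hnn : 0 ≤ luxNorm M (measPE α β) (fun x => deriv u x) :=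
    Real.sInf_nonneg fun K hK => hK.1.le
  calc luxNorm M (measPE α β) (fun x => deriv u x) ^ 2 ≤ (√(A * B) * (K₁ + 1)) ^ 2 := by gcongr
    _ = (K₁ + 1) ^ 2 * A * B := by
      rw [mul_pow, Real.sq_sqrt (by positivity)]; ring
end
end
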